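/- arXiv:2102.02778 — 6 statements merged into one kernel-verified Lean document; each statement's English description precedes it below -/
import Mathlib

section
/- Let X be an infinite-dimensional Banach space that contains uniformly complemented (ℓ₂ⁿ)_{n=1}^∞, i.e. there are a constant C ≥ 1 and a sequence (F_n)_{n=1}^∞ of subspaces of X such that, for each n, F_n is C-isomorphic to ℓ₂ⁿ and C-complemented in X. Then for every k ≥ 2 the space P₀ᵏ(X) of polynomials of degree at most k on X vanishing at 0 is not complemented in Lip₀(B_X). -/
open Metric Set Real

noncomputable section

/-- The closed unit ball of a normed space, as a pointed metric space. -/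
def UBall (X : Type*) [NormedAddCommGroup X] : Set X := Metric.closedBall (0 : X) 1

/-- The base point of the unit ball. -/
def zeroB (X : Type*) [NormedAddCommGroup X] : ↥(UBall X) :=
  ⟨0, Metric.mem_closedBall_self zero_le_one⟩

/-- `Lip₀(B_X)`: real-valued Lipschitz functions on the closed unit ball vanishing at `0`. -/
def Lip0B (X : Type*) [NormedAddCommGroup X] : Set (↥(UBall X) → ℝ) :=
  {f | (∃ K : NNReal, LipschitzWith K f) ∧ f (zeroB X) = 0}

/-- The image of the space `P(ᵏX)` of `k`-homogeneous polynomials on `X` inside the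
functions on the unit ball, via the restriction embedding `P ↦ P↾_{B_X}`. -/
def PhomB (k : ℕ) (X : Type*) [NormedAddCommGroup X] [NormedSpace ℝ X] :
    Set (↥(UBall X) → ℝ) :=
  {f | ∃ M : ContinuousMultilinearMap ℝ (fun _ : Fin k => X) ℝ,
    ∀ x : ↥(UBall X), f x = M (fun _ => (x : X))}

/-- `C₀¹(B_E)`: functions on the closed unit ball that are continuous on the closed ball,
continuously differentiable on the open ball with uniformly continuous derivative,
and vanish at `0`. -/
def C01B (E : Type*) [NormedAddCommGroup E] [NormedSpace ℝ E] :
    Set (↥(UBall E) → ℝ) :=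
  {f | ∃ g : E → ℝ,
    (∀ x : ↥(UBall E), f x = g x) ∧
    ContinuousOn g (UBall E) ∧ g 0 = 0 ∧
    ∃ g' : E → (E →L[ℝ] ℝ),
      (∀ x ∈ Metric.ball (0 : E) 1, HasFDerivAt g (g' x) x) ∧
      UniformContinuousOn g' (Metric.ball (0 : E) 1)}

/-- The image of the space `P₀ᵏ(X)` of polynomials of degree at most `k` vanishing at `0`
inside the functions on the unit ball, via the restriction embedding. -/
def PdegB (k : ℕ) (X : Type*) [NormedAddCommGroup X] [NormedSpace ℝ X] :
    Set (↥(UBall X) → ℝ) :=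
  {f | ∃ P : (j : ℕ) → ContinuousMultilinearMap ℝ (fun _ : Fin j => X) ℝ,
    ∀ x : ↥(UBall X), f x = ∑ j ∈ Finset.Icc 1 k, P j (fun _ => (x : X))}

/-- Truncation at level `d`. -/
def truncF (d t : ℝ) : ℝ := max (-d) (min d t)

theorem truncF_abs (d t : ℝ) (hd : 0 < d) : |truncF d t| ≤ d := by
  unfold truncF
  rw [abs_le]
  constructor
  · exact le_max_left _ _
  · exact max_le (by linarith) (min_le_left _ _)

theorem truncF_lip (d a b : ℝ) : |truncF d a - truncF d b| ≤ |a - b| := by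
  unfold truncF
  calc |max (-d) (min d a) - max (-d) (min d b)| ≤ |min d a - min d b| := by
        rw [max_comm (-d), max_comm (-d)]
        exact abs_max_sub_max_le_abs _ _ _
    _ ≤ |a - b| := by
        rw [min_comm d, min_comm d]
        have := abs_min_sub_min_le_max a d b d
        simpa using this

theorem truncF_zero (d : ℝ) (hd : 0 < d) : truncF d 0 = 0 := by
  unfold truncF
  rw [min_eq_right hd.le, max_eq_right (by linarith)]

theorem truncF_of_le (d t : ℝ) (h : |t| ≤ d) : truncF d t = t := by
  rw [abs_le] at h
  unfold truncF
  rw [min_eq_right h.2, max_eq_right h.1]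

theorem truncF_resid (d a b : ℝ) (hd : 0 < d) :
    |(a - truncF d a) - (b - truncF d b)| ≤ |a - b| * (|a| + |b|) / d := by
  by_cases h : |a| ≤ d ∧ |b| ≤ d
  · rw [truncF_of_le d a h.1, truncF_of_le d b h.2]
    simp only [sub_self, abs_zero]
    positivity
  · have h1 : d ≤ |a| + |b| := by
      by_contra hc
      push Not at hc
      exact h ⟨by linarith [abs_nonneg b], by linarith [abs_nonneg a]⟩
    have h2 : |(a - truncF d a) - (b - truncF d b)| ≤ |a - b| := by
      have mono : ∀ x y : ℝ, x ≤ y → truncF d x ≤ truncF d y ∧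
          truncF d y - truncF d x ≤ y - x := by
        intro x y hxy
        constructor
        · unfold truncF
          exact max_le_max le_rfl (min_le_min le_rfl hxy)
        · have := truncF_lip d y x
          rw [abs_of_nonneg (by linarith : (0:ℝ) ≤ y - x)] at this
          exact (abs_le.mp this).2
      rcases le_total a b with hab | hab
      · have := mono a b hab
        rw [abs_of_nonpos (by linarith : a - b ≤ 0), abs_le]
        constructor <;> linarith
      · have := mono b a hab
        rw [abs_of_nonneg (by linarith : 0 ≤ a - b), abs_le]
        constructor <;> linarith
    rw [le_div_iff₀ hd]
    have := abs_nonneg (a - b)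
    nlinarith [abs_nonneg ((a - truncF d a) - (b - truncF d b))]

/-- Weights extracting the degree two coefficient. -/
theorem exists_weights (k : ℕ) (hk : 2 ≤ k) :
    ∃ w t : Fin (k + 1) → ℝ, (∀ l, |t l| ≤ 1) ∧
      ∀ j : ℕ, j ≤ k → ∑ l, w l * t l ^ j = if j = 2 then 1 else 0 := by
  let t : Fin (k + 1) → ℝ := fun l => (l : ℝ) / (k + 1)
  have hk0 : (0 : ℝ) < k + 1 := by positivity
  have ht : Function.Injective t := by
    intro a b hab
    simp only [t] at hab
    rw [div_left_inj' hk0.ne'] at hab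
    exact Fin.ext (by exact_mod_cast hab)
  have hdet : (Matrix.vandermonde t).det ≠ 0 := Matrix.det_vandermonde_ne_zero_iff.mpr ht
  let e : Fin (k + 1) → ℝ := fun j => if (j : ℕ) = 2 then 1 else 0
  have hu : IsUnit (Matrix.vandermonde t).transpose.det := by
    rw [Matrix.det_transpose]; exact hdet.isUnit
  refine ⟨(Matrix.vandermonde t).transpose⁻¹.mulVec e, t, ?_, ?_⟩
  · intro l
    have hl : (l : ℝ) ≤ k := by exact_mod_cast Nat.lt_succ_iff.mp l.2
    simp only [t]
    rw [abs_of_nonneg (by positivity), div_le_one hk0]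
    linarith
  · intro j hj
    have h : (Matrix.vandermonde t).transpose.mulVec
        ((Matrix.vandermonde t).transpose⁻¹.mulVec e) = e := by
      rw [Matrix.mulVec_mulVec, Matrix.mul_nonsing_inv _ hu, Matrix.one_mulVec]
    have h2 := congrFun h ⟨j, Nat.lt_succ_of_le hj⟩
    simp only [Matrix.mulVec, dotProduct, Matrix.transpose_apply, Matrix.vandermonde_apply, e] at h2
    rw [← h2]
    refine Finset.sum_congr rfl fun l _ => ?_
    rw [mul_comm]
    rfl

/-- Biorthogonal coordinates. -/
theorem exists_coords (X : Type*) [NormedAddCommGroup X] [NormedSpace ℝ X]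
    (C : ℝ) (n : ℕ)
    (h : ∃ F : Submodule ℝ X,
      (∃ T : EuclideanSpace ℝ (Fin n) ≃ₗ[ℝ] F,
        ∀ v : EuclideanSpace ℝ (Fin n), ‖v‖ ≤ ‖(T v : X)‖ ∧ ‖(T v : X)‖ ≤ C * ‖v‖) ∧
      (∃ P : X →L[ℝ] X, (∀ x : X, P x ∈ F) ∧ (∀ y ∈ F, P y = y) ∧ ‖P‖ ≤ C)) :
    ∃ (e : Fin n → (X →L[ℝ] ℝ)) (v : Fin n → X),
      (∀ i j, e i (v j) = if i = j then 1 else 0) ∧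
      (∀ x, ∑ i, (e i x) ^ 2 ≤ (C * ‖x‖) ^ 2) ∧
      (∀ a : Fin n → ℝ, ‖∑ i, a i • v i‖ ^ 2 ≤ C ^ 2 * ∑ i, a i ^ 2) := by
  obtain ⟨F, ⟨T, hT⟩, P, hPF, hPid, hPn⟩ := h
  let ξ : X →ₗ[ℝ] EuclideanSpace ℝ (Fin n) :=
    T.symm.toLinearMap ∘ₗ (P.toLinearMap.codRestrict F hPF)
  have hξ : ∀ x, ‖ξ x‖ ≤ C * ‖x‖ := by
    intro x
    have h1 := (hT (ξ x)).1
    have h2 : ((T (ξ x) : F) : X) = P x := by simp [ξ]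
    rw [h2] at h1
    calc ‖ξ x‖ ≤ ‖P x‖ := h1
      _ ≤ ‖P‖ * ‖x‖ := P.le_opNorm x
      _ ≤ C * ‖x‖ := by gcongr
  have hsq : ∀ x, ∑ i, (ξ x i) ^ 2 ≤ (C * ‖x‖) ^ 2 := by
    intro x
    have : ∑ i, (ξ x i) ^ 2 = ‖ξ x‖ ^ 2 := by
      rw [EuclideanSpace.norm_sq_eq]; simp
    rw [this]
    exact pow_le_pow_left₀ (norm_nonneg _) (hξ x) 2
  let e : Fin n → (X →L[ℝ] ℝ) := fun i =>
    LinearMap.mkContinuous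
      { toFun := fun x => ξ x i
        map_add' := by intro x y; simp
        map_smul' := by intro c x; simp } C (by
        intro x
        have h1 : ‖ξ x i‖ ≤ ‖ξ x‖ := PiLp.norm_apply_le (ξ x) i
        exact h1.trans (hξ x))
  have he : ∀ i x, e i x = ξ x i := fun i x => rfl
  have hξT : ∀ v, ξ (T v : X) = v := by
    intro v
    have : P.toLinearMap.codRestrict F hPF (T v : X) = T v := by
      ext
      exact hPid _ (T v).2
    simp only [ξ, LinearMap.comp_apply, this]
    simp
  refine ⟨e, fun i => (T (EuclideanSpace.single i 1) : X), ?_, ?_, ?_⟩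
  · intro i j
    rw [he, hξT]
    simp
  · intro x
    simpa only [he] using hsq x
  · intro a
    have h1 : ∑ i, a i • ((T (EuclideanSpace.single i 1) : F) : X)
        = (T (∑ i, a i • EuclideanSpace.single i (1:ℝ)) : X) := by
      simp
    have h2 : ‖∑ i, a i • EuclideanSpace.single i (1:ℝ)‖ ^ 2 = ∑ i, a i ^ 2 := by
      rw [EuclideanSpace.norm_sq_eq]
      simp [Finset.sum_apply, Pi.single_apply]
    rw [h1, ← h2, ← mul_pow]
    exact pow_le_pow_left₀ (norm_nonneg _) (hT _).2 2

/-- Averaging over signs for a bilinear form. -/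
theorem sign_avg {X : Type*} [AddCommGroup X] [Module ℝ X] {n : ℕ}
    (M : X →ₗ[ℝ] X →ₗ[ℝ] ℝ) (v : Fin n → X) (i j : Fin n) (hij : i ≠ j) :
    ∑ s : Fin n → ℤˣ, (((s i : ℤ) : ℝ) * ((s j : ℤ) : ℝ)) *
      M (∑ k, ((s k : ℤ) : ℝ) • v k) (∑ k, ((s k : ℤ) : ℝ) • v k)
    = (Fintype.card (Fin n → ℤˣ)) * (M (v i) (v j) + M (v j) (v i)) := by
  set Z : (Fin n → ℤˣ) → X := fun s => ∑ k, ((s k : ℤ) : ℝ) • v k with hZ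
  set F : (Fin n → ℤˣ) → ℝ := fun s =>
    (((s i : ℤ) : ℝ) * ((s j : ℤ) : ℝ)) * M (Z s) (Z s) with hF
  let g : Fin n → (Fin n → ℤˣ) := fun i => Pi.mulSingle i (-1)
  have hgZ : ∀ i s, Z (g i * s) = Z s - (2 * ((s i : ℤ) : ℝ)) • v i := by
    intro i s
    have : Z s - Z (g i * s) = (2 * ((s i : ℤ) : ℝ)) • v i := by
      simp only [hZ]
      rw [← Finset.sum_sub_distrib, Finset.sum_eq_single i]
      · simp [g, two_mul, add_smul]
      · intro b _ hb
        simp [g, Pi.mulSingle_eq_of_ne hb]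
      · simp
    rw [← this]; abel
  have hinv : ∀ (u : Fin n → ℤˣ), ∑ s, F (u * s) = ∑ s, F s := fun u =>
    Fintype.sum_equiv (Equiv.mulLeft u) _ _ (fun s => rfl)
  have hsq : ∀ (s : Fin n → ℤˣ) k, ((s k : ℤ) : ℝ) * ((s k : ℤ) : ℝ) = 1 := by
    intro s k
    exact_mod_cast Int.units_coe_mul_self (s k)
  have h4 : ∀ s, F s + F (g i * s) + F (g j * s) + F (g i * (g j * s))
      = 4 * (M (v i) (v j) + M (v j) (v i)) := by
    intro s
    have e1 : (g i * s) i = - s i := by simp [g]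
    have e2 : (g i * s) j = s j := by simp [g, Pi.mulSingle_eq_of_ne hij.symm]
    have e3 : (g j * s) i = s i := by simp [g, Pi.mulSingle_eq_of_ne hij]
    have e4 : (g j * s) j = - s j := by simp [g]
    have e5 : (g i * (g j * s)) i = - s i := by simp [g, Pi.mulSingle_eq_of_ne hij]
    have e6 : (g i * (g j * s)) j = - s j := by simp [g, Pi.mulSingle_eq_of_ne hij.symm]
    simp only [hF, e1, e2, e3, e4, e5, e6, hgZ]
    have a1 := hsq s i
    have a2 := hsq s j
    simp only [map_sub, map_smul, LinearMap.sub_apply, LinearMap.smul_apply, smul_eq_mul,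
      Units.val_neg, Int.cast_neg]
    generalize ((s i : ℤ) : ℝ) = x at *
    generalize ((s j : ℤ) : ℝ) = y at *
    generalize (M (v i)) (v j) = p
    generalize (M (v j)) (v i) = q
    have : x * y * x * y = 1 := by
      calc x * y * x * y = (x * x) * (y * y) := by ring
        _ = 1 := by rw [a1, a2]; ring
    linear_combination 4 * (p + q) * this
  have hs : ∑ s, (F s + F (g i * s) + F (g j * s) + F (g i * (g j * s))) = 4 * ∑ s, F s := by
    rw [Finset.sum_add_distrib, Finset.sum_add_distrib, Finset.sum_add_distrib, hinv, hinv]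
    have := hinv (g i * g j)
    simp only [mul_assoc] at this
    rw [this]
    ring
  rw [Finset.sum_congr rfl (fun s _ => h4 s), Finset.sum_const, Finset.card_univ, nsmul_eq_mul] at hs
  linarith

theorem sum_abs_le_sqrt {n m : ℕ} (hnm : n = m ^ 2) (b : Fin n → ℝ) (B : ℝ) (hB : 0 ≤ B)
    (h : ∑ i, b i ^ 2 ≤ B ^ 2) : ∑ i, |b i| ≤ m * B := by
  have h1 : (∑ i, |b i|) ^ 2 ≤ n * ∑ i, |b i| ^ 2 := by
    have := sq_sum_le_card_mul_sum_sq (s := (Finset.univ : Finset (Fin n))) (f := fun i => |b i|)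
    simpa using this
  simp only [sq_abs] at h1
  have h2 : (∑ i, |b i|) ^ 2 ≤ (m * B) ^ 2 := by
    have : (n : ℝ) = (m : ℝ) ^ 2 := by rw [hnm]; push_cast; ring
    rw [mul_pow, ← this]
    exact h1.trans (by gcongr)
  exact (pow_le_pow_iff_left₀ (by positivity) (by positivity) two_ne_zero).mp h2

theorem sum_mul_abs_le {n : ℕ} (a b : Fin n → ℝ) (A B : ℝ) (hA : 0 ≤ A) (hB : 0 ≤ B)
    (ha : ∑ i, a i ^ 2 ≤ A ^ 2) (hb : ∑ i, b i ^ 2 ≤ B ^ 2) :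
    ∑ i, |a i| * |b i| ≤ A * B := by
  have h1 := Finset.sum_mul_sq_le_sq_mul_sq Finset.univ (fun i => |a i|) (fun i => |b i|)
  simp only [sq_abs] at h1
  have h2 : (∑ i, |a i| * |b i|) ^ 2 ≤ (A * B) ^ 2 := by
    rw [mul_pow]
    refine h1.trans (mul_le_mul ha hb ?_ (by positivity))
    positivity
  exact (pow_le_pow_iff_left₀ (by positivity) (by positivity) two_ne_zero).mp h2

theorem lip_main {X : Type*} [NormedAddCommGroup X] [NormedSpace ℝ X]
    (C : ℝ) (hC : 1 ≤ C) {n m : ℕ} (hnm : n = m ^ 2)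
    (e : Fin n → (X →L[ℝ] ℝ))
    (he : ∀ x, ∑ i, (e i x) ^ 2 ≤ (C * ‖x‖) ^ 2) (d : ℝ) (hd : 0 < d)
    (σ : Fin n → ℝ) (hσ : ∀ i, |σ i| = 1) (x y : X) (hx : ‖x‖ ≤ 1) (hy : ‖y‖ ≤ 1) :
    |((∑ i, σ i * e i x) ^ 2 - (∑ i, σ i * truncF d (e i x)) ^ 2)
      - ((∑ i, σ i * e i y) ^ 2 - (∑ i, σ i * truncF d (e i y)) ^ 2)|
      ≤ (6 * C ^ 3 * m / d) * ‖x - y‖ := by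
  have hC0 : 0 < C := by linarith
  -- bounds on l1 norms
  have hl1 : ∀ z : X, ∑ i, |e i z| ≤ m * (C * ‖z‖) := fun z =>
    sum_abs_le_sqrt hnm _ _ (by positivity) (he z)
  have hl2 : ∀ z w : X, ∑ i, |e i z| * |e i w| ≤ (C * ‖z‖) * (C * ‖w‖) := fun z w =>
    sum_mul_abs_le _ _ _ _ (by positivity) (by positivity) (he z) (he w)
  set S : X → ℝ := fun z => ∑ i, σ i * e i z + ∑ i, σ i * truncF d (e i z) with hS
  set D : X → ℝ := fun z => ∑ i, σ i * e i z - ∑ i, σ i * truncF d (e i z) with hD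
  have hSl : ∀ z w : X, |S z - S w| ≤ 2 * m * C * ‖z - w‖ := by
    intro z w
    have : S z - S w = ∑ i, σ i * ((e i z - e i w) + (truncF d (e i z) - truncF d (e i w))) := by
      simp only [hS, mul_add, mul_sub, Finset.sum_add_distrib, Finset.sum_sub_distrib]
      ring
    rw [this]
    calc _ ≤ ∑ i, |σ i * ((e i z - e i w) + (truncF d (e i z) - truncF d (e i w)))| :=
          Finset.abs_sum_le_sum_abs _ _
      _ ≤ ∑ i, 2 * |e i (z - w)| := by
          refine Finset.sum_le_sum fun i _ => ?_
          rw [abs_mul, hσ, one_mul, map_sub]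
          refine (abs_add_le _ _).trans ?_
          have := truncF_lip d (e i z) (e i w)
          linarith
      _ ≤ _ := by
          rw [← Finset.mul_sum]
          have := hl1 (z - w)
          nlinarith
  have hDl : ∀ z w : X, ‖z‖ ≤ 1 → ‖w‖ ≤ 1 → |D z - D w| ≤ C ^ 2 * ‖z - w‖ * (‖z‖ + ‖w‖) / d := by
    intro z w hz hw
    have : D z - D w = ∑ i, σ i * ((e i z - truncF d (e i z)) - (e i w - truncF d (e i w))) := by
      simp only [hD, mul_sub, Finset.sum_sub_distrib]
    rw [this]
    calc _ ≤ ∑ i, |σ i * ((e i z - truncF d (e i z)) - (e i w - truncF d (e i w)))| :=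
          Finset.abs_sum_le_sum_abs _ _
      _ ≤ ∑ i, (|e i (z - w)| * |e i z| + |e i (z - w)| * |e i w|) / d := by
          refine Finset.sum_le_sum fun i _ => ?_
          rw [abs_mul, hσ, one_mul, map_sub]
          refine (truncF_resid d _ _ hd).trans ?_
          rw [mul_add]
      _ ≤ _ := by
          rw [← Finset.sum_div, Finset.sum_add_distrib]
          have h1 := hl2 (z - w) z
          have h2 := hl2 (z - w) w
          gcongr
          nlinarith
  have hS0 : S 0 = 0 := by simp [hS, truncF_zero d hd]
  have hD0 : D 0 = 0 := by simp [hD, truncF_zero d hd]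
  have hSb : |S x| ≤ 2 * m * C := by
    have := hSl x 0
    rw [hS0, sub_zero, sub_zero] at this
    refine this.trans ?_
    have : 0 ≤ 2 * (m:ℝ) * C := by positivity
    nlinarith
  have hDb : |D y| ≤ C ^ 2 / d := by
    have := hDl y 0 hy (by simp)
    rw [hD0, sub_zero, sub_zero] at this
    refine this.trans ?_
    rw [norm_zero, add_zero]
    gcongr
    have : ‖y‖ * ‖y‖ ≤ 1 := by nlinarith [norm_nonneg y]
    nlinarith [sq_nonneg C]
  have hDxy : |D x - D y| ≤ 2 * C ^ 2 / d * ‖x - y‖ := by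
    refine (hDl x y hx hy).trans ?_
    rw [div_mul_eq_mul_div]
    refine div_le_div_of_nonneg_right ?_ hd.le
    have : 0 ≤ C ^ 2 * ‖x - y‖ := by positivity
    nlinarith
  have key : ((∑ i, σ i * e i x) ^ 2 - (∑ i, σ i * truncF d (e i x)) ^ 2)
      - ((∑ i, σ i * e i y) ^ 2 - (∑ i, σ i * truncF d (e i y)) ^ 2)
      = S x * (D x - D y) + D y * (S x - S y) := by
    simp only [hS, hD]; ring
  rw [key]
  refine (abs_add_le _ _).trans ?_
  rw [abs_mul, abs_mul]
  calc _ ≤ (2 * m * C) * (2 * C ^ 2 / d * ‖x - y‖) + (C ^ 2 / d) * (2 * m * C * ‖x - y‖) := by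
        have := hSl x y
        gcongr
    _ = _ := by ring

theorem core (X : Type*) [NormedAddCommGroup X] [NormedSpace ℝ X]
    (C : ℝ) (hC : 1 ≤ C)
    (hunif : ∀ n : ℕ, ∃ F : Submodule ℝ X,
      (∃ T : EuclideanSpace ℝ (Fin n) ≃ₗ[ℝ] F,
        ∀ v : EuclideanSpace ℝ (Fin n), ‖v‖ ≤ ‖(T v : X)‖ ∧ ‖(T v : X)‖ ≤ C * ‖v‖) ∧
      (∃ P : X →L[ℝ] X, (∀ x : X, P x ∈ F) ∧ (∀ y ∈ F, P y = y) ∧ ‖P‖ ≤ C))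
    (R : (↥(UBall X) → ℝ) →ₗ[ℝ] (↥(UBall X) → ℝ)) (A : ℝ) (hA : 0 ≤ A)
    (h2 : ∀ f : ↥(UBall X) → ℝ, f (zeroB X) = 0 → ∀ L : ℝ, 0 ≤ L →
      (∀ x y : ↥(UBall X), |f x - f y| ≤ L * ‖(x : X) - y‖) →
      ∃ M : X →ₗ[ℝ] X →ₗ[ℝ] ℝ, ∀ x : ↥(UBall X), R f x = M x x)
    (h3 : ∀ f : ↥(UBall X) → ℝ, f (zeroB X) = 0 → ∀ L : ℝ, 0 ≤ L →
      (∀ x y : ↥(UBall X), |f x - f y| ≤ L * ‖(x : X) - y‖) →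
      ∀ x : ↥(UBall X), |R f x| ≤ A * L)
    (h4 : ∀ l : X →L[ℝ] ℝ, ∀ x : ↥(UBall X),
      R (fun x => (l x) ^ 2) x = (l x) ^ 2) : False := by
  have hC0 : 0 < C := by linarith
  -- choose the parameters
  obtain ⟨d, hd, hdA⟩ : ∃ d : ℝ, 0 < d ∧ 10 * A * C * d ≤ 1 / (4 * C ^ 2) := by
    refine ⟨1 / (4 * C ^ 2) / (10 * A * C + 1), by positivity, ?_⟩
    rw [mul_div_assoc', div_le_iff₀ (by positivity)]
    have : 0 < 1 / (4 * C ^ 2) := by positivity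
    nlinarith
  obtain ⟨m, hm⟩ := exists_nat_gt (4 * C ^ 2 * (6 * A * C ^ 3 / d))
  have hm0 : (0 : ℝ) < m := lt_of_le_of_lt (by positivity) hm
  obtain ⟨n, hnm⟩ : ∃ n, n = m ^ 2 := ⟨_, rfl⟩
  have hnmR : (n : ℝ) = (m : ℝ) ^ 2 := by rw [hnm]; push_cast; ring
  have hn0 : (0 : ℝ) < n := by rw [hnmR]; positivity
  obtain ⟨e, v, hev, hee, hvv⟩ := exists_coords X C n (hunif n)
  have hball : ∀ x : ↥(UBall X), ‖(x : X)‖ ≤ 1 := fun x => by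
    have := x.2
    simpa [UBall] using this
  have hei : ∀ i x, |e i x| ≤ C * ‖x‖ := by
    intro i x
    refine abs_le_of_sq_le_sq ?_ (by positivity)
    exact (Finset.single_le_sum (f := fun i => (e i x) ^ 2) (fun _ _ => sq_nonneg _)
      (Finset.mem_univ i)).trans (hee x)
  -- the functions phi_i phi_j
  let ff : Fin n → Fin n → ↥(UBall X) → ℝ := fun i j x => truncF d (e i x) * truncF d (e j x)
  have ff0 : ∀ i j, ff i j (zeroB X) = 0 := by
    intro i j
    simp [ff, zeroB, truncF_zero d hd]
  have ffl : ∀ i j, ∀ x y : ↥(UBall X), |ff i j x - ff i j y| ≤ (2 * d * C) * ‖(x : X) - y‖ := by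
    intro i j x y
    have : ff i j x - ff i j y = truncF d (e i x) * (truncF d (e j x) - truncF d (e j y))
        + truncF d (e j y) * (truncF d (e i x) - truncF d (e i y)) := by
      simp only [ff]; ring
    rw [this]
    refine (abs_add_le _ _).trans ?_
    rw [abs_mul, abs_mul]
    have a1 := truncF_abs d (e i x) hd
    have a2 := truncF_abs d (e j y) hd
    have b : ∀ i, |truncF d (e i x) - truncF d (e i y)| ≤ C * ‖(x : X) - y‖ := by
      intro i
      refine (truncF_lip d _ _).trans ?_
      rw [← map_sub]
      exact hei i _
    calc _ ≤ d * (C * ‖(x : X) - y‖) + d * (C * ‖(x : X) - y‖) := by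
          gcongr
          · exact b j
          · exact b i
      _ = _ := by ring
  have qb : ∀ i j x, |R (ff i j) x| ≤ A * (2 * d * C) := fun i j x =>
    h3 _ (ff0 i j) _ (by positivity) (ffl i j) x
  -- signs
  let σ : (Fin n → ℤˣ) → Fin n → ℝ := fun s i => ((s i : ℤ) : ℝ)
  have hσsq : ∀ s i, σ s i * σ s i = 1 := by
    intro s k
    simp only [σ]
    exact_mod_cast Int.units_coe_mul_self (s k)
  have hσ : ∀ s i, |σ s i| = 1 := by
    intro s i
    have := hσsq s i
    rw [← abs_mul_abs_self] at this
    nlinarith [abs_nonneg (σ s i)]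
  have zmem : ∀ s, (1 / (C * m)) • ∑ k, σ s k • v k ∈ UBall X := by
    intro s
    have h := hvv (σ s)
    have h' : ∑ i, σ s i ^ 2 = (m : ℝ) ^ 2 := by
      simp only [pow_two (σ s _), hσsq]
      simp [hnmR]
    rw [h', ← mul_pow] at h
    have h'' : ‖∑ k, σ s k • v k‖ ≤ C * m :=
      (pow_le_pow_iff_left₀ (by positivity) (by positivity) two_ne_zero).mp h
    simp only [UBall, mem_closedBall, dist_zero_right]
    rw [norm_smul, Real.norm_of_nonneg (by positivity), one_div, inv_mul_le_iff₀ (by positivity)]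
    linarith
  let z : (Fin n → ℤˣ) → ↥(UBall X) := fun s => ⟨_, zmem s⟩
  have hez : ∀ s i, e i (z s) = σ s i / (C * m) := by
    intro s i
    simp only [z, map_smul, map_sum, hev, smul_eq_mul]
    simp
    ring
  -- upper estimate
  have hU : ∀ s, n / C ^ 2 - ∑ i, ∑ j, σ s i * σ s j * R (ff i j) (z s)
      ≤ A * (6 * C ^ 3 * m / d) := by
    intro s
    let l : X →L[ℝ] ℝ := ∑ i, σ s i • e i
    have hl : ∀ x, l x = ∑ i, σ s i * e i x := by
      intro x; simp [l]
    let f : ↥(UBall X) → ℝ := (fun x : ↥(UBall X) => (l x) ^ 2)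
      - ∑ i, ∑ j, (σ s i * σ s j) • ff i j
    have hf : ∀ x : ↥(UBall X), f x = (∑ i, σ s i * e i x) ^ 2
        - (∑ i, σ s i * truncF d (e i x)) ^ 2 := by
      intro x
      simp only [f, Pi.sub_apply, hl, Finset.sum_apply, Pi.smul_apply, smul_eq_mul, ff]
      congr 1
      rw [pow_two, Finset.sum_mul_sum]
      refine Finset.sum_congr rfl fun i _ => Finset.sum_congr rfl fun j _ => ?_
      ring
    have hf0 : f (zeroB X) = 0 := by
      rw [hf]
      simp [zeroB, truncF_zero d hd]
    have hfl : ∀ x y : ↥(UBall X), |f x - f y| ≤ (6 * C ^ 3 * m / d) * ‖(x : X) - y‖ := by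
      intro x y
      rw [hf, hf]
      exact lip_main C hC hnm e hee d hd (σ s) (hσ s) x y (hball x) (hball y)
    have h := h3 f hf0 _ (by positivity) hfl (z s)
    have hRf : R f (z s) = n / C ^ 2 - ∑ i, ∑ j, σ s i * σ s j * R (ff i j) (z s) := by
      have e1 : R f = R (fun x : ↥(UBall X) => (l x) ^ 2)
          - ∑ i, ∑ j, (σ s i * σ s j) • R (ff i j) := by
        simp only [f, map_sub, map_sum, map_smul]
      rw [e1, Pi.sub_apply, h4]
      simp only [Finset.sum_apply, Pi.smul_apply, smul_eq_mul]
      congr 1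
      rw [hl]
      have : ∑ i, σ s i * e i (z s) = n * (1 / (C * m)) := by
        rw [Finset.sum_congr rfl (g := fun _ => 1 / (C * m))]
        · simp
        · intro i _
          rw [hez, mul_div_assoc', hσsq]
      rw [this, hnmR]
      field_simp
    rw [hRf] at h
    exact (abs_le.mp h).2
  -- average estimate
  set N : ℝ := (Fintype.card (Fin n → ℤˣ) : ℝ) with hN
  have hNpos : 0 < N := by
    rw [hN]; exact_mod_cast Fintype.card_pos
  have hO : ∀ i j, ∑ s, σ s i * σ s j * R (ff i j) (z s)
      ≤ N * (8 * A * C * d / n + if i = j then 2 * A * C * d else 0) := by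
    intro i j
    by_cases hij : i = j
    · subst hij
      calc _ ≤ ∑ s : Fin n → ℤˣ, 2 * A * C * d := by
            refine Finset.sum_le_sum fun s _ => ?_
            rw [hσsq, one_mul]
            have := (abs_le.mp (qb i i (z s))).2
            linarith
        _ = N * (2 * A * C * d) := by
            rw [Finset.sum_const, Finset.card_univ, nsmul_eq_mul]
        _ ≤ _ := by
            gcongr
            rw [if_pos rfl]
            have : 0 ≤ 8 * A * C * d / n := by positivity
            linarith
    · rw [if_neg hij, add_zero]
      obtain ⟨M, hM⟩ := h2 _ (ff0 i j) _ (by positivity) (ffl i j)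
      have havg := sign_avg M v i j hij
      have e1 : ∑ s, σ s i * σ s j * R (ff i j) (z s)
          = (1 / (C * m)) ^ 2 * (N * (M (v i) (v j) + M (v j) (v i))) := by
        rw [hN, ← havg, Finset.mul_sum]
        refine Finset.sum_congr rfl fun s _ => ?_
        rw [hM]
        simp only [z, map_smul, LinearMap.smul_apply, smul_eq_mul, σ]
        ring
      have hvn : ∀ k, ‖v k‖ ≤ C := by
        intro k
        have := hvv (Pi.single k 1)
        simp only [Pi.single_apply, ite_smul, one_smul, zero_smul, Finset.sum_ite_eq', Finset.sum_ite_eq,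
          Finset.mem_univ, if_true, ite_pow, one_pow, ne_eq, OfNat.ofNat_ne_zero, not_false_eq_true,
          zero_pow, mul_one] at this
        exact (pow_le_pow_iff_left₀ (by positivity) (by positivity) two_ne_zero).mp this
      have hscale : ∀ w : X, ‖w‖ ≤ 2 * C → |M w w| ≤ (2 * C) ^ 2 * (A * (2 * d * C)) := by
        intro w hw
        have hmem : (1 / (2 * C)) • w ∈ UBall X := by
          simp only [UBall, mem_closedBall, dist_zero_right]
          rw [norm_smul, Real.norm_of_nonneg (by positivity), one_div,
            inv_mul_le_iff₀ (by positivity)]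
          linarith
        have h := qb i j ⟨_, hmem⟩
        rw [hM] at h
        simp only [map_smul, LinearMap.smul_apply, smul_eq_mul] at h
        have h' : M w w = (2 * C) ^ 2 * (1 / (2 * C) * (1 / (2 * C) * M w w)) := by
          field_simp
        rw [h', abs_mul, abs_of_nonneg (by positivity : (0:ℝ) ≤ (2 * C) ^ 2)]
        gcongr
      have b1 := hscale (v i + v j) ((norm_add_le _ _).trans (by linarith [hvn i, hvn j]))
      have b2 := hscale (v i - v j) ((norm_sub_le _ _).trans (by linarith [hvn i, hvn j]))
      have b3 : M (v i) (v j) + M (v j) (v i) ≤ 8 * A * C ^ 3 * d := by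
        have : M (v i) (v j) + M (v j) (v i)
            = (M (v i + v j) (v i + v j) - M (v i - v j) (v i - v j)) / 2 := by
          simp only [map_add, map_sub, LinearMap.add_apply, LinearMap.sub_apply]
          ring
        rw [this]
        have := (abs_le.mp b1).2
        have := (abs_le.mp b2).1
        nlinarith
      rw [e1]
      calc _ ≤ (1 / (C * m)) ^ 2 * (N * (8 * A * C ^ 3 * d)) := by gcongr
        _ = _ := by
          rw [hnmR]; field_simp
  -- combine
  have hsum : N * (n / C ^ 2) ≤ N * (A * (6 * C ^ 3 * m / d)) + N * (10 * A * C * d * n) := by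
    have t1 : ∑ s : Fin n → ℤˣ, (n / C ^ 2 - ∑ i, ∑ j, σ s i * σ s j * R (ff i j) (z s))
        ≤ ∑ s : Fin n → ℤˣ, A * (6 * C ^ 3 * m / d) := Finset.sum_le_sum fun s _ => hU s
    rw [Finset.sum_sub_distrib, Finset.sum_const, Finset.sum_const, Finset.card_univ,
      nsmul_eq_mul, nsmul_eq_mul, ← hN] at t1
    have t2 : ∑ s : Fin n → ℤˣ, ∑ i, ∑ j, σ s i * σ s j * R (ff i j) (z s)
        ≤ N * (10 * A * C * d * n) := by
      rw [Finset.sum_comm]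
      calc _ = ∑ i, ∑ j, ∑ s, σ s i * σ s j * R (ff i j) (z s) := by
            refine Finset.sum_congr rfl fun i _ => ?_
            rw [Finset.sum_comm]
        _ ≤ ∑ i : Fin n, ∑ j : Fin n,
            N * (8 * A * C * d / n + if i = j then 2 * A * C * d else 0) :=
            Finset.sum_le_sum fun i _ => Finset.sum_le_sum fun j _ => hO i j
        _ = N * (10 * A * C * d * n) := by
            simp only [← Finset.mul_sum, Finset.sum_add_distrib, Finset.sum_ite_eq,
              Finset.mem_univ, if_true, Finset.sum_const, Finset.card_univ, Fintype.card_fin,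
              nsmul_eq_mul]
            field_simp
            ring
    linarith
  rw [← mul_add] at hsum
  have hfin := le_of_mul_le_mul_left hsum hNpos
  have q1 : 10 * A * C * d * n ≤ 1 / (4 * C ^ 2) * n := by gcongr
  have q2 : A * (6 * C ^ 3 * m / d) ≤ 1 / (4 * C ^ 2) * n := by
    have : A * (6 * C ^ 3 * m / d) = 1 / (4 * C ^ 2) * ((4 * C ^ 2 * (6 * A * C ^ 3 / d)) * m) := by
      field_simp
    rw [this, hnmR, pow_two (m : ℝ)]
    gcongr
  have q3 : (n : ℝ) / C ^ 2 = 4 * (1 / (4 * C ^ 2) * n) := by field_simp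
  have q4 : 0 < 1 / (4 * C ^ 2) * (n : ℝ) := by positivity
  linarith

/-- The bilinear map of a 2-multilinear map. -/
theorem exists_bilin {X : Type*} [NormedAddCommGroup X] [NormedSpace ℝ X]
    (M : ContinuousMultilinearMap ℝ (fun _ : Fin 2 => X) ℝ) :
    ∃ B : X →ₗ[ℝ] X →ₗ[ℝ] ℝ, ∀ x, B x x = M (fun _ => x) := by
  have key : ∀ x y : X, (![x, y] : Fin 2 → X) = Function.update ![x, 0] 1 y := by
    intro x y; ext i; fin_cases i <;> simp
  have key0 : ∀ x y : X, (![x, y] : Fin 2 → X) = Function.update ![0, y] 0 x := by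
    intro x y; ext i; fin_cases i <;> simp
  refine ⟨LinearMap.mk₂ ℝ (fun x y => M ![x, y]) ?_ ?_ ?_ ?_, ?_⟩
  · intro x x' y
    rw [key0, M.map_update_add, ← key0, ← key0]
  · intro c x y
    rw [key0, M.map_update_smul, ← key0]
  · intro x y y'
    rw [key, M.map_update_add, ← key, ← key]
  · intro c x y
    rw [key, M.map_update_smul, ← key]
  · intro x
    rw [LinearMap.mk₂_apply]
    congr 1
    ext i; fin_cases i <;> rfl

/-- **Theorem 4.3 (non-homogeneous case).** If an infinite-dimensional Banach space `X`
contains uniformly complemented `ℓ₂ⁿ`'s, then for every `k ≥ 2` the space `P₀ᵏ(X)` of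
polynomials of degree at most `k` vanishing at `0` is not complemented in `Lip₀(B_X)`. -/
theorem statement6 (X : Type*) [NormedAddCommGroup X] [NormedSpace ℝ X] [CompleteSpace X]
    (hinf : ¬ FiniteDimensional ℝ X)
    (C : ℝ) (hC : 1 ≤ C)
    (hunif : ∀ n : ℕ, ∃ F : Submodule ℝ X,
      (∃ T : EuclideanSpace ℝ (Fin n) ≃ₗ[ℝ] F,
        ∀ v : EuclideanSpace ℝ (Fin n), ‖v‖ ≤ ‖(T v : X)‖ ∧ ‖(T v : X)‖ ≤ C * ‖v‖) ∧
      (∃ P : X →L[ℝ] X, (∀ x : X, P x ∈ F) ∧ (∀ y ∈ F, P y = y) ∧ ‖P‖ ≤ C))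
    (k : ℕ) (hk : 2 ≤ k) :
    ¬ ∃ (Q : (↥(UBall X) → ℝ) →ₗ[ℝ] (↥(UBall X) → ℝ)) (K : NNReal),
      (∀ f ∈ Lip0B X, Q f ∈ PdegB k X) ∧ (∀ f ∈ PdegB k X, Q f = f) ∧
      (∀ f ∈ Lip0B X, ∀ L : NNReal, LipschitzWith L f → LipschitzWith (K * L) (Q f)) := by
  rintro ⟨Q, K, hQ1, hQ2, hQ3⟩
  obtain ⟨w, t, ht, hwt⟩ := exists_weights k hk
  have hball : ∀ x : ↥(UBall X), ‖(x : X)‖ ≤ 1 := fun x => by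
    have := x.2
    simpa [UBall] using this
  have hmem : ∀ l (x : ↥(UBall X)), t l • (x : X) ∈ UBall X := by
    intro l x
    simp only [UBall, mem_closedBall, dist_zero_right, norm_smul, Real.norm_eq_abs]
    exact mul_le_one₀ (ht l) (norm_nonneg _) (hball x)
  have hLip : ∀ f : ↥(UBall X) → ℝ, ∀ L : ℝ, ∀ hL : 0 ≤ L,
      (∀ x y : ↥(UBall X), |f x - f y| ≤ L * ‖(x : X) - y‖) → LipschitzWith ⟨L, hL⟩ f := by
    intro f L hL h
    refine LipschitzWith.of_dist_le_mul fun x y => ?_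
    rw [Real.dist_eq, Subtype.dist_eq, dist_eq_norm]
    exact h x y
  let R : (↥(UBall X) → ℝ) →ₗ[ℝ] (↥(UBall X) → ℝ) :=
    { toFun := fun f x => ∑ l, w l * Q f ⟨t l • (x : X), hmem l x⟩
      map_add' := by
        intro f g
        ext x
        simp [mul_add, Finset.sum_add_distrib]
      map_smul' := by
        intro c f
        ext x
        simp only [map_smul, Pi.smul_apply, smul_eq_mul, RingHom.id_apply, Finset.mul_sum]
        refine Finset.sum_congr rfl fun l _ => ?_
        ring }
  have hR : ∀ f x, R f x = ∑ l, w l * Q f ⟨t l • (x : X), hmem l x⟩ := fun f x => rfl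
  refine core X C hC hunif R ((∑ l, |w l|) * K) (by positivity) ?_ ?_ ?_
  · intro f hf0 L hL hf
    obtain ⟨P, hP⟩ := hQ1 f ⟨⟨_, hLip f L hL hf⟩, hf0⟩
    obtain ⟨B, hB⟩ := exists_bilin (P 2)
    refine ⟨B, fun x => ?_⟩
    rw [hR, hB]
    simp only [hP]
    have : ∀ j l, P j (fun _ => t l • (x : X)) = t l ^ j * P j (fun _ => (x : X)) := by
      intro j l
      have := (P j).map_smul_univ (fun _ => t l) (fun _ => (x : X))
      simpa using this
    simp only [this, Finset.mul_sum]
    rw [Finset.sum_comm]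
    have h1 : ∀ j ∈ Finset.Icc 1 k, ∑ l, w l * (t l ^ j * P j (fun _ => (x : X)))
        = (if j = 2 then 1 else 0) * P j (fun _ => (x : X)) := by
      intro j hj
      rw [← hwt j (Finset.mem_Icc.mp hj).2, Finset.sum_mul]
      refine Finset.sum_congr rfl fun l _ => ?_
      ring
    rw [Finset.sum_congr rfl h1, Finset.sum_eq_single 2]
    · simp
    · intro j _ hj
      simp [hj]
    · intro h
      exact absurd (Finset.mem_Icc.mpr ⟨by norm_num, hk⟩) h
  · intro f hf0 L hL hf x
    have hfm : f ∈ Lip0B X := ⟨⟨_, hLip f L hL hf⟩, hf0⟩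
    have hl := hQ3 f hfm _ (hLip f L hL hf)
    have hQ0 : Q f (zeroB X) = 0 := by
      obtain ⟨P, hP⟩ := hQ1 f hfm
      rw [hP]
      refine Finset.sum_eq_zero fun j hj => ?_
      have hj1 := (Finset.mem_Icc.mp hj).1
      exact (P j).map_coord_zero (⟨0, hj1⟩ : Fin j) rfl
    have hb : ∀ y : ↥(UBall X), |Q f y| ≤ K * L := by
      intro y
      have := hl.dist_le_mul y (zeroB X)
      rw [hQ0, Real.dist_eq, sub_zero, Subtype.dist_eq, dist_eq_norm] at this
      refine this.trans ?_
      have h1 : ‖(y : X) - (zeroB X : X)‖ ≤ 1 := by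
        have : ((zeroB X : ↥(UBall X)) : X) = 0 := rfl
        rw [this, sub_zero]
        exact hball y
      have h2 : (0:ℝ) ≤ K * L := by positivity
      calc _ ≤ (K * L : ℝ) * 1 := by
            push_cast
            exact mul_le_mul_of_nonneg_left h1 h2
        _ = _ := mul_one _
    rw [hR, mul_assoc, Finset.sum_mul]
    refine (Finset.abs_sum_le_sum_abs _ _).trans (Finset.sum_le_sum fun l _ => ?_)
    rw [abs_mul]
    exact mul_le_mul_of_nonneg_left (hb _) (abs_nonneg _)
  · intro l x
    have hm : (fun x : ↥(UBall X) => (l x) ^ 2) ∈ PdegB k X := by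
      refine ⟨fun j => (if j = 2 then (1:ℝ) else 0) •
        (ContinuousMultilinearMap.mkPiAlgebraFin ℝ j ℝ).compContinuousLinearMap (fun _ => l), ?_⟩
      intro x
      rw [Finset.sum_eq_single 2]
      · simp [pow_two]
      · intro j _ hj
        simp [hj]
      · intro h
        exact absurd (Finset.mem_Icc.mpr ⟨by norm_num, hk⟩) h
    rw [hR, hQ2 _ hm]
    simp only [map_smul, smul_eq_mul, mul_pow, ← mul_assoc]
    rw [← Finset.sum_mul, hwt 2 hk]
    simp
end
end

section
/- Let X be an infinite-dimensional separable 𝓛₁-space, i.e. there exists λ ≥ 1 such that every finite-dimensional subspace of X is contained in a finite-dimensional subspace F of X whose Banach–Mazur distance to ℓ₁^{dim F} is at most λ. Then for every k ≥ 1 the space P(ᵏX) of k-homogeneous polynomials on X is isomorphic, as a Banach space, to ℓ∞; in particular, P(ᵏX) is complemented in Lip₀(B_X). -/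
open Metric Set Real

noncomputable section

/-- The space `P(ᵏX)` of `k`-homogeneous polynomials on `X`, as a submodule of the
real-valued functions on `X`. -/
def PhomSub (k : ℕ) (X : Type*) [NormedAddCommGroup X] [NormedSpace ℝ X] :
    Submodule ℝ (X → ℝ) where
  carrier := {f | ∃ M : ContinuousMultilinearMap ℝ (fun _ : Fin k => X) ℝ,
    ∀ x : X, f x = M (fun _ => x)}
  add_mem' := by
    rintro f g ⟨M, hM⟩ ⟨N, hN⟩
    exact ⟨M + N, fun x => by simp [hM x, hN x]⟩
  zero_mem' := ⟨0, fun x => by simp⟩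
  smul_mem' := by
    rintro c f ⟨M, hM⟩
    exact ⟨c • M, fun x => by simp [hM x]⟩

/-- The polynomial norm `‖f‖_P = sup_{x ∈ B_X} |f x|`. -/
def supNormBall (X : Type*) [NormedAddCommGroup X] (f : X → ℝ) : ℝ :=
  sSup ((fun x => |f x|) '' UBall X)

section PieceU
universe u

/-- The space `ℓ∞`. -/
abbrev Linf := lp (fun _ : ℕ => ℝ) ⊤

theorem Linf.ext' {v w : Linf} (h : ∀ n, v n = w n) : v = w := lp.ext (funext h)

theorem Linf.abs_le (v : Linf) (n : ℕ) : |v n| ≤ ‖v‖ :=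
  lp.norm_apply_le_norm ENNReal.top_ne_zero v n

theorem Linf.norm_le {v : Linf} {C : ℝ} (h : ∀ n, |v n| ≤ C) : ‖v‖ ≤ C :=
  lp.norm_le_of_forall_le' C h

/-- Build an `ℓ∞`-valued linear map. -/
def toLinf {V : Type*} [AddCommGroup V] [Module ℝ V] (φ : V →ₗ[ℝ] (ℕ → ℝ))
    (h : ∀ v, ∃ K, ∀ n, |φ v n| ≤ K) : V →ₗ[ℝ] Linf where
  toFun v := ⟨φ v, memℓp_infty (by
    obtain ⟨K, hK⟩ := h v
    exact ⟨K, by rintro _ ⟨n, rfl⟩; exact hK n⟩)⟩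
  map_add' v w := by apply Linf.ext'; intro n; simp; rfl
  map_smul' c v := by apply Linf.ext'; intro n; simp

theorem toLinf_apply {V : Type*} [AddCommGroup V] [Module ℝ V] (φ : V →ₗ[ℝ] (ℕ → ℝ))
    (h : ∀ v, ∃ K, ∀ n, |φ v n| ≤ K) (v : V) (n : ℕ) : toLinf φ h v n = φ v n := rfl

/-- The `n`-th slice of an element of `ℓ∞ ≃ ℓ∞(ℓ∞)`. -/
def slice (n : ℕ) : Linf →L[ℝ] Linf :=
  LinearMap.mkContinuous (toLinf
    { toFun := fun v m => v (Nat.pair n m)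
      map_add' := by intro v w; ext m; simp
      map_smul' := by intro v w; ext m; simp }
    (fun v => ⟨‖v‖, fun m => Linf.abs_le v _⟩)) 1 (by
      intro v; rw [one_mul]; exact Linf.norm_le (fun m => Linf.abs_le v _))

theorem slice_apply (n m : ℕ) (v : Linf) : slice n v m = v (Nat.pair n m) := rfl

theorem slice_norm (n : ℕ) (v : Linf) : ‖slice n v‖ ≤ ‖v‖ :=
  Linf.norm_le (fun _ => Linf.abs_le v _)

theorem slice_ext {v w : Linf} (h : ∀ n, slice n v = slice n w) : v = w := by
  apply Linf.ext'
  intro j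
  have := congrArg (fun u : Linf => u (Nat.unpair j).2) (h (Nat.unpair j).1)
  simpa [slice_apply] using this

theorem slice_lift {V : Type*} [NormedAddCommGroup V] [NormedSpace ℝ V]
    (L : ℕ → V →L[ℝ] Linf) (C : ℝ) (hL : ∀ n v, ‖L n v‖ ≤ C * ‖v‖) :
    ∃ L' : V →L[ℝ] Linf, ∀ n v, slice n (L' v) = L n v := by
  have hb : ∀ v j, |L (Nat.unpair j).1 v (Nat.unpair j).2| ≤ C * ‖v‖ := fun v j =>
    (Linf.abs_le _ _).trans (hL _ _)
  refine ⟨LinearMap.mkContinuous (toLinf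
    { toFun := fun v j => L (Nat.unpair j).1 v (Nat.unpair j).2
      map_add' := by intro v w; ext m; simp
      map_smul' := by intro v w; ext m; simp }
    (fun v => ⟨C * ‖v‖, hb v⟩)) C (fun v => Linf.norm_le (hb v)), ?_⟩
  intro n v
  apply Linf.ext'
  intro m
  change L (Nat.unpair (Nat.pair n m)).1 v (Nat.unpair (Nat.pair n m)).2 = _
  simp

set_option maxHeartbeats 1000000 in
/-- Pełczyński's decomposition method inside `ℓ∞`. -/
theorem pelczynski (p A B : Linf →L[ℝ] Linf) (hp : ∀ v, p (p v) = p v)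
    (hA : ∀ v, p (A v) = A v) (hBA : ∀ v, B (A v) = v) :
    Nonempty (LinearMap.range p.toLinearMap ≃L[ℝ] Linf) := by
  set Y := LinearMap.range p.toLinearMap with hY
  have hpY : ∀ y : Y, p y = y := by
    rintro ⟨_, v, rfl⟩; exact hp v
  let pY : Linf →L[ℝ] Y := p.codRestrict Y (fun v => ⟨v, rfl⟩)
  have hpYv : ∀ v, (pY v : Linf) = p v := fun v => rfl
  let AY : Linf →L[ℝ] Y := A.codRestrict Y (fun v => ⟨A v, hA v⟩)
  have hAYv : ∀ v, (AY v : Linf) = A v := fun v => rfl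
  -- `ℓ∞ ≃ Y × ℓ∞`
  have nb : ∀ (T S : Linf →L[ℝ] Linf) (v w : Linf) (r : ℝ), ‖v‖ ≤ r → ‖w‖ ≤ r →
      ‖T v + S w‖ ≤ (‖T‖ + ‖S‖) * r := by
    intro T S v w r hv hw
    calc ‖T v + S w‖ ≤ ‖T v‖ + ‖S w‖ := norm_add_le _ _
      _ ≤ ‖T‖ * r + ‖S‖ * r := add_le_add (T.le_opNorm_of_le hv) (S.le_opNorm_of_le hw)
      _ = _ := by ring
  let q : Linf →L[ℝ] Linf := ContinuousLinearMap.id ℝ _ - p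
  have hq : ∀ v, q v = v - p v := fun v => rfl
  obtain ⟨F, hF⟩ := slice_lift (fun n => p.comp (slice (n+1)) + q.comp (slice n))
    (‖p‖ + ‖q‖) (fun n v => nb p q _ _ _ (slice_norm _ _) (slice_norm _ _))
  obtain ⟨G, hG⟩ := slice_lift (V := Y × Linf)
    (fun n => Nat.casesOn n (Y.subtypeL.comp (ContinuousLinearMap.fst ℝ Y Linf)
        + (q.comp (slice 0)).comp (ContinuousLinearMap.snd ℝ Y Linf))
      (fun n => (p.comp (slice n) + q.comp (slice (n+1))).comp
        (ContinuousLinearMap.snd ℝ Y Linf)))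
    (‖p‖ + ‖q‖ + 1 + ‖q‖) (by
      rintro n ⟨y, v⟩
      have h1 : ‖(y : Linf)‖ ≤ ‖(y, v)‖ := le_max_left _ _
      have h2 : ‖v‖ ≤ ‖(y, v)‖ := le_max_right _ _
      have h0 := norm_nonneg (y, v)
      have hp0 := norm_nonneg p
      have hq0 := norm_nonneg q
      cases n with
      | zero =>
        have := nb (ContinuousLinearMap.id ℝ _) q y (slice 0 v) _ h1 ((slice_norm _ _).trans h2)
        refine this.trans ?_
        gcongr
        have := ContinuousLinearMap.norm_id_le (𝕜 := ℝ) (E := Linf)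
        linarith
      | succ n =>
        have := nb p q (slice n v) (slice (n+1) v) _ ((slice_norm _ _).trans h2)
          ((slice_norm _ _).trans h2)
        refine this.trans ?_
        gcongr
        linarith)
  have hG0 : ∀ y v, slice 0 (G (y, v)) = y + q (slice 0 v) := fun y v => hG 0 (y, v)
  have hGs : ∀ n y v, slice (n+1) (G (y, v)) = p (slice n v) + q (slice (n+1) v) :=
    fun n y v => hG (n+1) (y, v)
  have hF' : ∀ n v, slice n (F v) = p (slice (n+1) v) + q (slice n v) := fun n v => hF n v
  let e1 : Linf ≃L[ℝ] Y × Linf := ContinuousLinearEquiv.equivOfInverse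
    ((pY.comp (slice 0)).prod F) G (by
      intro v
      apply slice_ext
      intro n
      change slice n (G (pY (slice 0 v), F v)) = _
      cases n with
      | zero => rw [hG0, hF', hpYv]; simp [hq, hp]
      | succ n => rw [hGs, hF', hF']; simp [hq, hp]) (by
      rintro ⟨y, v⟩
      refine Prod.ext ?_ ?_
      · apply Subtype.ext
        change p (slice 0 (G (y, v))) = _
        rw [hG0]; simp [hq, hp, hpY]
      · apply slice_ext
        intro n
        change slice n (F (G (y, v))) = _
        rw [hF', hGs]
        cases n with
        | zero => rw [hG0]; simp [hq, hp, hpY]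
        | succ n => rw [hGs]; simp [hq, hp])
  -- `ℓ∞ ≃ ℓ∞ × ℓ∞`
  obtain ⟨S, hS⟩ := slice_lift (fun n => slice (n+1)) 1
    (fun n v => by rw [one_mul]; exact slice_norm _ _)
  obtain ⟨J, hJ⟩ := slice_lift (V := Linf × Linf)
    (fun n => Nat.casesOn n (ContinuousLinearMap.fst ℝ Linf Linf)
      (fun n => (slice n).comp (ContinuousLinearMap.snd ℝ Linf Linf))) 1 (by
      rintro n ⟨y, v⟩
      rw [one_mul]
      cases n with
      | zero => exact le_max_left _ _
      | succ n => exact (slice_norm n v).trans (le_max_right _ _))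
  have hJ0 : ∀ y v, slice 0 (J (y, v)) = y := fun y v => hJ 0 (y, v)
  have hJs : ∀ n y v, slice (n+1) (J (y, v)) = slice n v := fun n y v => hJ (n+1) (y, v)
  have hSJ : ∀ y v, S (J (y, v)) = v := by
    intro y v; apply slice_ext; intro n; rw [hS, hJs]
  have hJS : ∀ v, J (slice 0 v, S v) = v := by
    intro v; apply slice_ext; intro n
    cases n with
    | zero => rw [hJ0]
    | succ n => rw [hJs, hS]
  -- `Y ≃ Y × ℓ∞`
  let f2 : Y →L[ℝ] Y × Linf :=
    (ContinuousLinearMap.id ℝ Y + AY.comp ((S.comp B).comp Y.subtypeL)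
      - AY.comp (B.comp Y.subtypeL)).prod ((slice 0).comp (B.comp Y.subtypeL))
  have hf2 : ∀ y, f2 y = (y + AY (S (B y)) - AY (B y), slice 0 (B y)) := fun y => rfl
  let g2 : Y × Linf →L[ℝ] Y :=
    AY.comp (J.comp ((ContinuousLinearMap.snd ℝ Y Linf).prod
      (B.comp (Y.subtypeL.comp (ContinuousLinearMap.fst ℝ Y Linf)))))
    + (ContinuousLinearMap.id ℝ Y - AY.comp (B.comp Y.subtypeL)).comp
      (ContinuousLinearMap.fst ℝ Y Linf)
  have hg2 : ∀ y v, g2 (y, v) = AY (J (v, B y)) + (y - AY (B y)) := fun y v => rfl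
  let e2 : Y ≃L[ℝ] Y × Linf := ContinuousLinearEquiv.equivOfInverse f2 g2 (by
      intro y
      apply Subtype.ext
      rw [hf2, hg2]
      have h1 : B ((y + AY (S (B y)) - AY (B y) : Y) : Linf) = S (B y) := by
        change B ((y : Linf) + A (S (B y)) - A (B y)) = _
        rw [map_sub, map_add, hBA, hBA]; abel
      rw [h1, hJS]
      change A (B y) + ((y : Linf) + A (S (B y)) - A (B y) - A (S (B y))) = y
      abel) (by
      rintro ⟨y, v⟩
      have h1 : B ((AY (J (v, B y)) + (y - AY (B y)) : Y) : Linf) = J (v, B y) := by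
        change B (A (J (v, B y)) + ((y : Linf) - A (B y))) = _
        rw [map_add, map_sub, hBA, hBA]; abel
      rw [hg2, hf2, h1, hSJ, hJ0]
      refine Prod.ext (Subtype.ext ?_) rfl
      change A (J (v, B y)) + ((y : Linf) - A (B y)) + A (B y) - A (J (v, B y)) = y
      abel)
  exact ⟨e2.trans e1.symm⟩

end PieceU

section PieceU
universe u
open Filter Topology

/-- Rosenthal's lemma on matrices with bounded rows. -/
theorem rosenthal_aux (ε : ℝ) (hε : 0 < ε) (K : ℕ) : ∀ (a : ℕ → ℕ → ℝ), (∀ n m, 0 ≤ a n m) →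
    (∀ n (t : Finset ℕ), ∑ m ∈ t, a n m ≤ K * ε) →
    ∃ φ : ℕ → ℕ, Function.Injective φ ∧
      ∀ n (t : Finset ℕ), n ∉ t → ∑ m ∈ t, a (φ n) (φ m) ≤ ε := by
  induction K with
  | zero =>
    intro a ha h
    have h0 : ∀ n m, a n m = 0 := fun n m => by
      have := h n {m}
      simp at this
      exact le_antisymm this (ha n m)
    exact ⟨id, Function.injective_id, fun n t _ => by simp [h0, hε.le]⟩
  | succ K ih =>
    intro a ha h
    by_cases hp : ∃ p, ∀ q (t : Finset ℕ), q ∉ t →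
        ∑ r ∈ t, a (Nat.pair p q) (Nat.pair p r) ≤ ε
    · obtain ⟨p, hp⟩ := hp
      exact ⟨fun q => Nat.pair p q, fun x y hxy => (Nat.pair_eq_pair.1 hxy).2, hp⟩
    · push Not at hp
      choose q s hqs hs using hp
      obtain ⟨φ, hφ, hφ'⟩ := ih (fun p p' => a (Nat.pair p (q p)) (Nat.pair p' (q p')))
        (fun _ _ => ha _ _) (by
          intro p t
          have h1 := h (Nat.pair p (q p))
            (t.image (fun p' => Nat.pair p' (q p')) ∪ (s p).image (fun r => Nat.pair p r))
          rw [Finset.sum_union, Finset.sum_image, Finset.sum_image] at h1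
          · have := hs p
            push_cast at h1
            linarith
          · intro x _ y _ hxy
            exact (Nat.pair_eq_pair.1 hxy).2
          · intro x _ y _ hxy
            exact (Nat.pair_eq_pair.1 hxy).1
          · rw [Finset.disjoint_left]
            intro x hx hx'
            simp only [Finset.mem_image] at hx hx'
            obtain ⟨y, _, rfl⟩ := hx
            obtain ⟨z, hz, hzz⟩ := hx'
            obtain ⟨rfl, rfl⟩ := Nat.pair_eq_pair.1 hzz
            exact hqs _ hz)
      refine ⟨fun n => Nat.pair (φ n) (q (φ n)), ?_, hφ'⟩
      intro x y hxy
      exact hφ (Nat.pair_eq_pair.1 hxy).1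

theorem rosenthal (ε C : ℝ) (hε : 0 < ε) (a : ℕ → ℕ → ℝ) (ha : ∀ n m, 0 ≤ a n m)
    (h : ∀ n (t : Finset ℕ), ∑ m ∈ t, a n m ≤ C) :
    ∃ φ : ℕ → ℕ, Function.Injective φ ∧
      ∀ n (t : Finset ℕ), n ∉ t → ∑ m ∈ t, a (φ n) (φ m) ≤ ε := by
  obtain ⟨K, hK⟩ := exists_nat_ge (C / ε)
  refine rosenthal_aux ε hε K a ha (fun n t => (h n t).trans ?_)
  rwa [div_le_iff₀ hε] at hK

/-- Toggle membership of `j`. -/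
def tog {k : ℕ} (j : Fin k) (S : Finset (Fin k)) : Finset (Fin k) :=
  if j ∈ S then S.erase j else insert j S

theorem mem_tog_self {k : ℕ} (j : Fin k) (S : Finset (Fin k)) : j ∈ tog j S ↔ j ∉ S := by
  unfold tog; split_ifs with h <;> simp [h]

theorem mem_tog_ne {k : ℕ} {j l : Fin k} (h : l ≠ j) (S : Finset (Fin k)) :
    l ∈ tog j S ↔ l ∈ S := by
  unfold tog; split_ifs <;> simp [h]

theorem tog_tog {k : ℕ} (j : Fin k) (S : Finset (Fin k)) : tog j (tog j S) = S := by
  ext l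
  by_cases h : l = j
  · subst h; simp [mem_tog_self]
  · simp [mem_tog_ne h]

theorem tog_ne {k : ℕ} (j : Fin k) (S : Finset (Fin k)) : tog j S ≠ S := by
  intro h
  have := mem_tog_self j S
  rw [h] at this
  tauto

/-- signs -/
def sg {k : ℕ} (S : Finset (Fin k)) (j : Fin k) : ℝ := if j ∈ S then 1 else -1

theorem sg_tog_self {k : ℕ} (j : Fin k) (S : Finset (Fin k)) : sg (tog j S) j = - sg S j := by
  unfold sg; by_cases h : j ∈ S <;> simp [mem_tog_self, h]

theorem sg_tog_ne {k : ℕ} {j l : Fin k} (h : l ≠ j) (S : Finset (Fin k)) :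
    sg (tog j S) l = sg S l := by
  unfold sg; simp [mem_tog_ne h]

theorem sg_mul_self {k : ℕ} (S : Finset (Fin k)) (j : Fin k) : sg S j * sg S j = 1 := by
  unfold sg; split_ifs <;> simp

theorem abs_sg {k : ℕ} (S : Finset (Fin k)) (j : Fin k) : |sg S j| = 1 := by
  unfold sg; split_ifs <;> simp

theorem sum_tog {k : ℕ} (j : Fin k) (f : Finset (Fin k) → ℝ)
    (h : ∀ S, f S + f (tog j S) = 0) : ∑ S, f S = 0 :=
  Finset.sum_involution (fun S _ => tog j S) (fun S _ => h S) (fun S _ _ => tog_ne j S)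
    (fun _ _ => Finset.mem_univ _) (fun S _ => tog_tog j S)

theorem sum_sg_sq {N : ℕ} (a : Fin N → ℝ) :
    ∑ S : Finset (Fin N), (∑ j, sg S j * a j) ^ 2 = 2 ^ N * ∑ j, a j ^ 2 := by
  have h1 : ∀ S : Finset (Fin N), (∑ j, sg S j * a j) ^ 2
      = ∑ j, ∑ l, (sg S j * sg S l) * (a j * a l) := by
    intro S
    rw [sq, Finset.sum_mul_sum]
    refine Finset.sum_congr rfl fun j _ => Finset.sum_congr rfl fun l _ => by ring
  simp_rw [h1]
  rw [Finset.sum_comm, Finset.mul_sum]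
  refine Finset.sum_congr rfl fun j _ => ?_
  rw [Finset.sum_comm]
  rw [Finset.sum_eq_single j]
  · simp [sg_mul_self]; ring
  · intro l _ hl
    rw [← Finset.sum_mul, sum_tog j, zero_mul]
    intro S
    rw [sg_tog_self, sg_tog_ne hl]; ring
  · simp

theorem sum_abs_sg {N : ℕ} (a : Fin N → ℝ) (m : ℝ) (hm : 0 ≤ m) (ha : ∀ j, |a j| ≤ m) :
    ∑ S : Finset (Fin N), |∑ j, sg S j * a j| ≤ 2 ^ N * (√N * m) := by
  have h1 : (∑ S : Finset (Fin N), |∑ j, sg S j * a j|) ^ 2 ≤ (2 ^ N * (√N * m)) ^ 2 := by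
    refine (sq_sum_le_card_mul_sum_sq (s := Finset.univ)).trans ?_
    simp only [sq_abs]
    rw [sum_sg_sq]
    have : ∑ j, a j ^ 2 ≤ N * m ^ 2 := by
      calc ∑ j, a j ^ 2 ≤ ∑ j : Fin N, m ^ 2 := Finset.sum_le_sum fun j _ => by
            rw [← sq_abs]; gcongr; exact ha j
        _ = _ := by simp
    rw [mul_pow, mul_pow, Real.sq_sqrt (Nat.cast_nonneg _)]
    simp
    rw [sq, mul_assoc]
    gcongr
  exact le_of_sq_le_sq h1 (by positivity)

/-- Polarization formula. -/
theorem polarization {k : ℕ} {V : Type*} [AddCommGroup V] [Module ℝ V]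
    (M : MultilinearMap ℝ (fun _ : Fin k => V) ℝ) (v : Fin k → V) :
    ∑ S : Finset (Fin k), (∏ j, sg S j) * M (fun _ => ∑ j ∈ S, v j)
      = ∑ σ : Equiv.Perm (Fin k), M (fun l => v (σ l)) := by
  classical
  have h1 : ∀ S : Finset (Fin k), M (fun _ => ∑ j ∈ S, v j)
      = ∑ r : Fin k → Fin k, if (∀ l, r l ∈ S) then M (fun l => v (r l)) else 0 := by
    intro S
    rw [M.map_sum_finset (fun _ j => v j) (fun _ => S), ← Finset.sum_filter]
    refine Finset.sum_congr ?_ fun _ _ => rfl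
    ext r; simp [Fintype.mem_piFinset]
  simp_rw [h1, Finset.mul_sum]
  rw [Finset.sum_comm]
  have h2 : ∀ r : Fin k → Fin k, ∑ S : Finset (Fin k),
      (∏ j, sg S j) * (if (∀ l, r l ∈ S) then M (fun l => v (r l)) else 0)
      = if Function.Bijective r then M (fun l => v (r l)) else 0 := by
    intro r
    simp only [← Finite.surjective_iff_bijective]
    split_ifs with hr
    · rw [Finset.sum_eq_single Finset.univ]
      · simp [sg]
      · intro S _ hS
        rw [if_neg, mul_zero]
        intro h
        apply hS
        ext l
        obtain ⟨m, rfl⟩ := hr l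
        simp [h m]
      · simp
    · unfold Function.Surjective at hr
      push Not at hr
      obtain ⟨j, hj⟩ := hr
      apply sum_tog j
      intro S
      have h3 : (∀ l, r l ∈ tog j S) ↔ ∀ l, r l ∈ S :=
        forall_congr' fun l => mem_tog_ne (hj l) S
      have h4 : ∏ l, sg (tog j S) l = - ∏ l, sg S l := by
        rw [← Finset.mul_prod_erase _ _ (Finset.mem_univ j),
          ← Finset.mul_prod_erase _ (sg S) (Finset.mem_univ j), sg_tog_self, neg_mul]
        congr 2
        exact Finset.prod_congr rfl fun l hl => sg_tog_ne (Finset.ne_of_mem_erase hl) S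
      simp only [h3, h4]
      ring
  simp_rw [h2]
  rw [← Finset.sum_filter]
  refine Finset.sum_bij (fun r h => Equiv.ofBijective r (Finset.mem_filter.1 h).2)
    (fun _ _ => Finset.mem_univ _) ?_ ?_ ?_
  · intro r hr r' hr' h
    ext l
    have := congrArg (fun e : Equiv.Perm (Fin k) => e l) h
    simpa using congrArg Fin.val this
  · intro σ _
    exact ⟨σ, Finset.mem_filter.2 ⟨Finset.mem_univ _, σ.bijective⟩, by ext; simp⟩
  · intro r hr; simp

theorem exists_ulim {ι : Type*} (U : Ultrafilter ι) (h : ι → ℝ) (K : ℝ)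
    (hK : ∀ s, |h s| ≤ K) : ∃ l, Tendsto h U (𝓝 l) ∧ |l| ≤ K := by
  obtain ⟨l, hl, hl'⟩ := (isCompact_Icc (a := -K) (b := K)).ultrafilter_le_nhds (U.map h) (by
    rw [le_principal_iff]
    exact Filter.Eventually.of_forall (f := (U : Filter ι)) fun s => (abs_le.1 (hK s)))
  exact ⟨l, hl', abs_le.2 hl⟩

end PieceU

section PieceU
universe u
open Filter Topology


/-- Ultraproduct-type coordinates on an `𝓛₁` space. -/
structure L1Data (X : Type u) [NormedAddCommGroup X] [NormedSpace ℝ X] (lam : ℝ) where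
  ι : Type u
  U : Ultrafilter ι
  d : ι → ℕ
  τ : ∀ s, X → Fin (d s) → ℝ
  e : ∀ s, Fin (d s) → X
  bound : ∀ s x, ∑ i, |τ s x i| ≤ lam * ‖x‖
  lin : ∀ (N : ℕ) (y : Fin N → X), ∀ᶠ s in U, ∀ a : Fin N → ℝ,
    τ s (∑ j, a j • y j) = ∑ j, a j • τ s (y j)
  lower : ∀ x, ∀ᶠ s in U, ‖x‖ ≤ ∑ i, |τ s x i|
  e_le : ∀ s i, ‖e s i‖ ≤ 1
  repr : ∀ x, ∀ᶠ s in U, x = ∑ i, τ s x i • e s i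
  big : ∀ N : ℕ, ∃ y : Fin N → X, (∀ i, ‖y i‖ ≤ 1) ∧
    ∀ a : Fin N → ℝ, ∑ i, |a i| ≤ lam * ‖∑ i, a i • y i‖

theorem exists_L1Data (X : Type u) [NormedAddCommGroup X] [NormedSpace ℝ X]
    (hinf : ¬ FiniteDimensional ℝ X)
    (lam : ℝ) (hlam : 1 ≤ lam)
    (hL1 : ∀ G : Submodule ℝ X, FiniteDimensional ℝ G →
      ∃ F : Submodule ℝ X, G ≤ F ∧ FiniteDimensional ℝ F ∧
        ∃ T : F ≃ₗ[ℝ] PiLp 1 (fun _ : Fin (Module.finrank ℝ F) => ℝ),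
          ∀ v : F, ‖v‖ ≤ ‖T v‖ ∧ ‖T v‖ ≤ lam * ‖v‖) : Nonempty (L1Data X lam) := by
  classical
  have h1 : ∀ s : Finset X, FiniteDimensional ℝ (Submodule.span ℝ (s : Set X)) := fun s =>
    FiniteDimensional.span_finset ℝ s
  choose F hGF hF T hT using fun s : Finset X => hL1 _ (h1 s)
  have hmem : ∀ (s : Finset X) x, x ∈ s → x ∈ F s := fun s x hx =>
    hGF s (Submodule.subset_span hx)
  let U : Ultrafilter (Finset X) := Ultrafilter.of atTop
  have hU : ∀ t : Finset X, ∀ᶠ s in (U : Filter (Finset X)), ∀ x ∈ t, x ∈ F s := by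
    intro t
    have : ∀ᶠ s in (atTop : Filter (Finset X)), ∀ x ∈ t, x ∈ F s := by
      filter_upwards [eventually_ge_atTop t] with s hs x hx
      exact hmem s x (hs hx)
    exact (Ultrafilter.of_le atTop) this
  have hU1 : ∀ x, ∀ᶠ s in (U : Filter (Finset X)), x ∈ F s := by
    intro x
    filter_upwards [hU {x}] with s hs
    exact hs x (by simp)
  let τ : ∀ s : Finset X, X → Fin (Module.finrank ℝ (F s)) → ℝ := fun s x =>
    if h : x ∈ F s then (fun i => T s ⟨x, h⟩ i) else 0
  have hτ : ∀ s x (h : x ∈ F s), τ s x = fun i => T s ⟨x, h⟩ i := fun s x h => by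
    simp only [τ, dif_pos h]
  let ev : ∀ s : Finset X, Fin (Module.finrank ℝ (F s)) → F s := fun s i =>
    (T s).symm (WithLp.toLp 1 (Pi.single i 1))
  have hev : ∀ s i, ‖ev s i‖ ≤ 1 := by
    intro s i
    refine (hT s _).1.trans ?_
    simp only [ev, LinearEquiv.apply_symm_apply, PiLp.norm_eq_of_L1]
    rw [Finset.sum_eq_single i] <;> simp +contextual
  have hrepr : ∀ s (x : F s), x = ∑ i, T s x i • ev s i := by
    intro s x
    apply (T s).injective
    rw [map_sum]
    ext j
    simp only [ev, map_smul, LinearEquiv.apply_symm_apply, WithLp.ofLp_sum, Finset.sum_apply]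
    simp [Pi.single_apply]
  refine ⟨⟨Finset X, U, fun s => Module.finrank ℝ (F s), τ, fun s i => ev s i, ?_, ?_, ?_, ?_,
    ?_, ?_⟩⟩
  · intro s x
    by_cases h : x ∈ F s
    · rw [hτ s x h]
      have := (hT s ⟨x, h⟩).2
      rw [PiLp.norm_eq_of_L1] at this
      exact this
    · simp only [τ, dif_neg h]
      simp
      positivity
  · intro N y
    filter_upwards [hU (Finset.univ.image y)] with s hs a
    have hy : ∀ j, y j ∈ F s := fun j => hs _ (by simp)
    have hsum : ∑ j, a j • y j ∈ F s := Submodule.sum_mem _ fun j _ =>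
      Submodule.smul_mem _ _ (hy j)
    rw [hτ s _ hsum]
    have : (⟨∑ j, a j • y j, hsum⟩ : F s) = ∑ j, a j • ⟨y j, hy j⟩ := by
      apply Subtype.ext; simp
    rw [this, map_sum]
    simp only [_root_.map_smul]
    ext i
    simp [fun j => hτ s _ (hy j)]
  · intro x
    filter_upwards [hU1 x] with s hs
    rw [hτ s x hs]
    have := (hT s ⟨x, hs⟩).1
    rw [PiLp.norm_eq_of_L1] at this
    exact this
  · intro s i; exact hev s i
  · intro x
    filter_upwards [hU1 x] with s hs
    rw [hτ s x hs]
    have := congrArg (Subtype.val) (hrepr s ⟨x, hs⟩)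
    simpa using this
  · intro N
    have hN : (N : Cardinal) ≤ Module.rank ℝ X := by
      have : Cardinal.aleph0 ≤ Module.rank ℝ X := by
        rw [← not_lt]; exact fun h => hinf (Module.rank_lt_aleph0_iff.1 h)
      exact (Cardinal.natCast_le_aleph0).trans this
    obtain ⟨t, ht, hli⟩ := exists_finset_linearIndependent_of_le_rank hN
    have hfr : N ≤ Module.finrank ℝ (F t) := by
      have h2 := finrank_span_set_eq_card (R := ℝ) (s := (t : Set X)) hli
      simp at h2
      rw [← ht, ← h2]
      exact Submodule.finrank_mono (hGF t)
    refine ⟨fun j => ev t (Fin.castLE hfr j), fun j => hev t _, fun a => ?_⟩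
    have h3 := (hT t (∑ j, a j • ev t (Fin.castLE hfr j))).2
    have h4 : ‖∑ j, a j • (ev t (Fin.castLE hfr j) : X)‖ = ‖∑ j, a j • ev t (Fin.castLE hfr j)‖ := by
      rw [Submodule.coe_norm]; simp
    rw [h4]
    refine le_trans ?_ h3
    rw [PiLp.norm_eq_of_L1]
    have h5 : ∀ j : Fin N, T t (∑ j, a j • ev t (Fin.castLE hfr j)) (Fin.castLE hfr j) = a j := by
      intro j
      simp only [ev, map_sum, map_smul, LinearEquiv.apply_symm_apply, WithLp.ofLp_sum,
        Finset.sum_apply]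
      simp [Pi.single_apply, Fin.castLE_inj]
    calc ∑ j, |a j| = ∑ i ∈ Finset.univ.map (Fin.castLEEmb hfr),
          ‖T t (∑ j, a j • ev t (Fin.castLE hfr j)) i‖ := by
          rw [Finset.sum_map]
          refine Finset.sum_congr rfl fun j _ => ?_
          change _ = ‖T t (∑ j, a j • ev t (Fin.castLE hfr j)) (Fin.castLE hfr j)‖
          rw [h5, Real.norm_eq_abs]
      _ ≤ _ := Finset.sum_le_sum_of_subset_of_nonneg (Finset.subset_univ _)
          (fun _ _ _ => norm_nonneg _)

namespace L1Data

variable {X : Type u} [NormedAddCommGroup X] [NormedSpace ℝ X] {lam : ℝ} (D : L1Data X lam)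

theorem map_add (x y : X) : ∀ᶠ s in D.U, D.τ s (x + y) = D.τ s x + D.τ s y := by
  filter_upwards [D.lin 2 ![x, y]] with s hs
  simpa [Fin.sum_univ_two] using hs ![1, 1]

theorem map_smul (c : ℝ) (x : X) : ∀ᶠ s in D.U, D.τ s (c • x) = c • D.τ s x := by
  filter_upwards [D.lin 1 ![x]] with s hs
  simpa using hs ![c]

end L1Data
end PieceU

section PieceU
universe u
open Filter Topology


/-- Bounded functions. -/
def BdSub (I : Type*) : Submodule ℝ (I → ℝ) where
  carrier := {f | ∃ K, ∀ x, |f x| ≤ K}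
  add_mem' := by
    rintro f g ⟨K, hK⟩ ⟨L, hL⟩
    exact ⟨K + L, fun x => (abs_add_le _ _).trans (add_le_add (hK x) (hL x))⟩
  zero_mem' := ⟨0, fun x => by simp⟩
  smul_mem' := by
    rintro c f ⟨K, hK⟩
    exact ⟨|c| * K, fun x => by
      simp only [Pi.smul_apply, smul_eq_mul, abs_mul]
      exact mul_le_mul_of_nonneg_left (hK x) (abs_nonneg _)⟩

section
variable {X : Type u} [NormedAddCommGroup X] [NormedSpace ℝ X]

/-- Scaled polarization of an arbitrary function. -/
def pol (k : ℕ) (g : X → ℝ) (v : Fin k → X) : ℝ :=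
  ((k : ℝ) ^ k / (k.factorial : ℝ)) *
    ∑ S : Finset (Fin k), (∏ j, sg S j) * g ((k : ℝ)⁻¹ • ∑ j ∈ S, v j)

theorem pol_add (k : ℕ) (f g : X → ℝ) (v : Fin k → X) :
    pol k (f + g) v = pol k f v + pol k g v := by
  simp only [pol, Pi.add_apply, mul_add, Finset.sum_add_distrib]

theorem pol_smul (k : ℕ) (c : ℝ) (g : X → ℝ) (v : Fin k → X) :
    pol k (c • g) v = c * pol k g v := by
  simp only [pol, Pi.smul_apply, smul_eq_mul, Finset.mul_sum]
  refine Finset.sum_congr rfl fun S _ => by ring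

theorem abs_pol_le (k : ℕ) (g : X → ℝ) (v : Fin k → X) (K : ℝ) (hK : ∀ x, |g x| ≤ K) :
    |pol k g v| ≤ ((k : ℝ) ^ k / (k.factorial : ℝ)) * 2 ^ k * K := by
  unfold pol
  rw [abs_mul, abs_of_nonneg (by positivity), mul_assoc]
  gcongr
  calc |∑ S : Finset (Fin k), (∏ j, sg S j) * g ((k : ℝ)⁻¹ • ∑ j ∈ S, v j)|
      ≤ ∑ S : Finset (Fin k), |(∏ j, sg S j) * g ((k : ℝ)⁻¹ • ∑ j ∈ S, v j)| :=
        Finset.abs_sum_le_sum_abs _ _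
    _ ≤ ∑ S : Finset (Fin k), K := Finset.sum_le_sum fun S _ => by
        rw [abs_mul, Finset.abs_prod]
        simp [abs_sg, hK]
    _ = 2 ^ k * K := by simp

theorem pol_eq (k : ℕ) (hk : 1 ≤ k) (g : X → ℝ) (v : Fin k → X) (hv : ∀ j, ‖v j‖ ≤ 1)
    (M : ContinuousMultilinearMap ℝ (fun _ : Fin k => X) ℝ)
    (hM : ∀ x : X, ‖x‖ ≤ 1 → g x = M (fun _ => x)) :
    pol k g v = (k.factorial : ℝ)⁻¹ * ∑ σ : Equiv.Perm (Fin k), M (fun l => v (σ l)) := by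
  have hk0 : (k : ℝ) ≠ 0 := by positivity
  have h1 : ∀ S : Finset (Fin k), g ((k : ℝ)⁻¹ • ∑ j ∈ S, v j)
      = ((k : ℝ) ^ k)⁻¹ * M.toMultilinearMap (fun _ => ∑ j ∈ S, v j) := by
    intro S
    rw [hM]
    · have := M.toMultilinearMap.map_smul_univ (fun _ => (k : ℝ)⁻¹) (fun _ => ∑ j ∈ S, v j)
      simpa using this
    · rw [norm_smul, norm_inv, Real.norm_natCast]
      have : ‖∑ j ∈ S, v j‖ ≤ k := by
        calc ‖∑ j ∈ S, v j‖ ≤ ∑ j ∈ S, ‖v j‖ := norm_sum_le _ _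
          _ ≤ ∑ j ∈ S, (1 : ℝ) := Finset.sum_le_sum fun j _ => hv j
          _ = S.card := by simp
          _ ≤ k := by
            have := S.card_le_univ
            simp at this
            exact_mod_cast this
      rw [inv_mul_le_iff₀ (by positivity)]
      simpa using this
  have h2 := polarization M.toMultilinearMap v
  unfold pol
  simp_rw [h1]
  have h3 : ∑ S : Finset (Fin k), (∏ j, sg S j) *
        (((k : ℝ) ^ k)⁻¹ * M.toMultilinearMap (fun _ => ∑ j ∈ S, v j))
      = ((k : ℝ) ^ k)⁻¹ * ∑ σ : Equiv.Perm (Fin k), M (fun l => v (σ l)) := by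
    have h2' : ∑ σ : Equiv.Perm (Fin k), M (fun l => v (σ l)) = ∑ σ : Equiv.Perm (Fin k),
      M.toMultilinearMap (fun l => v (σ l)) := rfl
    rw [h2', ← h2, Finset.mul_sum]
    refine Finset.sum_congr rfl fun S _ => by ring
  rw [h3]
  field_simp

namespace L1Data
variable {lam : ℝ} (D : L1Data X lam)

/-- Approximating form. -/
def form (k : ℕ) (s : D.ι) (g : X → ℝ) (v : Fin k → X) : ℝ :=
  ∑ r : Fin k → Fin (D.d s), (∏ j, D.τ s (v j) (r j)) * pol k g (fun j => D.e s (r j))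

theorem form_le (k : ℕ) (s : D.ι) (g : X → ℝ) (v : Fin k → X) (K : ℝ) (hK : ∀ x, |g x| ≤ K) :
    |D.form k s g v| ≤ (((k : ℝ) ^ k / (k.factorial : ℝ)) * 2 ^ k * lam ^ k) * K
      * ∏ j, ‖v j‖ := by
  have hK0 : 0 ≤ K := (abs_nonneg _).trans (hK 0)
  calc |D.form k s g v| ≤ ∑ r : Fin k → Fin (D.d s), |(∏ j, D.τ s (v j) (r j)) *
          pol k g (fun j => D.e s (r j))| := Finset.abs_sum_le_sum_abs _ _
    _ ≤ ∑ r : Fin k → Fin (D.d s), (∏ j, |D.τ s (v j) (r j)|) *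
          (((k : ℝ) ^ k / (k.factorial : ℝ)) * 2 ^ k * K) := by
        refine Finset.sum_le_sum fun r _ => ?_
        rw [abs_mul, Finset.abs_prod]
        exact mul_le_mul_of_nonneg_left (abs_pol_le k g _ K hK)
          (Finset.prod_nonneg fun _ _ => abs_nonneg _)
    _ = (∏ j, ∑ i, |D.τ s (v j) i|) * (((k : ℝ) ^ k / (k.factorial : ℝ)) * 2 ^ k * K) := by
        rw [← Finset.sum_mul, Finset.prod_univ_sum]
        simp
    _ ≤ (∏ j, (lam * ‖v j‖)) * (((k : ℝ) ^ k / (k.factorial : ℝ)) * 2 ^ k * K) := by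
        refine mul_le_mul_of_nonneg_right ?_ (by positivity)
        exact Finset.prod_le_prod (fun _ _ => Finset.sum_nonneg fun _ _ => abs_nonneg _)
          (fun j _ => D.bound s (v j))
    _ = _ := by
        rw [Finset.prod_mul_distrib]
        simp
        ring

theorem form_update_add (k : ℕ) (s : D.ι) (g : X → ℝ) [DecidableEq (Fin k)] (v : Fin k → X)
    (i : Fin k) (x y : X) (h : D.τ s (x + y) = D.τ s x + D.τ s y) :
    D.form k s g (Function.update v i (x + y)) =
      D.form k s g (Function.update v i x) + D.form k s g (Function.update v i y) := by
  unfold form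
  rw [← Finset.sum_add_distrib]
  refine Finset.sum_congr rfl fun r _ => ?_
  have key : ∀ z, ∏ j, D.τ s (Function.update v i z j) (r j)
      = D.τ s z (r i) * ∏ j ∈ Finset.univ.erase i, D.τ s (v j) (r j) := by
    intro z
    rw [← Finset.mul_prod_erase _ _ (Finset.mem_univ i), Function.update_self]
    congr 1
    exact Finset.prod_congr rfl fun j hj => by
      rw [Function.update_of_ne (Finset.ne_of_mem_erase hj)]
  rw [key, key, key, h, Pi.add_apply]
  ring

theorem form_update_smul (k : ℕ) (s : D.ι) (g : X → ℝ) [DecidableEq (Fin k)] (v : Fin k → X)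
    (i : Fin k) (c : ℝ) (x : X) (h : D.τ s (c • x) = c • D.τ s x) :
    D.form k s g (Function.update v i (c • x)) =
      c * D.form k s g (Function.update v i x) := by
  unfold form
  rw [Finset.mul_sum]
  refine Finset.sum_congr rfl fun r _ => ?_
  have key : ∀ z, ∏ j, D.τ s (Function.update v i z j) (r j)
      = D.τ s z (r i) * ∏ j ∈ Finset.univ.erase i, D.τ s (v j) (r j) := by
    intro z
    rw [← Finset.mul_prod_erase _ _ (Finset.mem_univ i), Function.update_self]
    congr 1
    exact Finset.prod_congr rfl fun j hj => by
      rw [Function.update_of_ne (Finset.ne_of_mem_erase hj)]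
  rw [key, key, h, Pi.smul_apply, smul_eq_mul]
  ring

theorem form_recover (k : ℕ) (hk : 1 ≤ k) (s : D.ι) (g : X → ℝ)
    (M : ContinuousMultilinearMap ℝ (fun _ : Fin k => X) ℝ)
    (hM : ∀ x : X, ‖x‖ ≤ 1 → g x = M (fun _ => x)) (x : X)
    (h : x = ∑ i, D.τ s x i • D.e s i) :
    D.form k s g (fun _ => x) = M (fun _ => x) := by
  unfold form
  have h1 : ∀ r : Fin k → Fin (D.d s), (∏ j, D.τ s x (r j)) * pol k g (fun j => D.e s (r j))
     = (k.factorial : ℝ)⁻¹ * ∑ σ : Equiv.Perm (Fin k),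
        M (fun l => D.τ s x (r (σ l)) • D.e s (r (σ l))) := by
    intro r
    rw [pol_eq k hk g _ (fun j => D.e_le s _) M hM, mul_left_comm, Finset.mul_sum]
    congr 1
    refine Finset.sum_congr rfl fun σ _ => ?_
    rw [M.map_smul_univ, smul_eq_mul]
    congr 1
    exact (Equiv.prod_comp σ (fun j => D.τ s x (r j))).symm
  simp_rw [h1]
  rw [← Finset.mul_sum, Finset.sum_comm]
  have h2 : ∀ σ : Equiv.Perm (Fin k), ∑ r : Fin k → Fin (D.d s),
      M (fun l => D.τ s x (r (σ l)) • D.e s (r (σ l))) = M (fun _ => x) := by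
    intro σ
    have h3 : M (fun _ => x) = ∑ r : Fin k → Fin (D.d s),
      M (fun l => D.τ s x (r l) • D.e s (r l)) := by
      conv_lhs => rw [h]
      exact M.toMultilinearMap.map_sum (fun _ i => D.τ s x i • D.e s i)
    rw [h3]
    exact Equiv.sum_comp (Equiv.arrowCongr σ.symm (Equiv.refl (Fin (D.d s))))
      (fun r => M (fun l => D.τ s x (r l) • D.e s (r l)))
  simp_rw [h2]
  simp [Fintype.card_perm]
  field_simp

theorem exists_Phi (D : L1Data X lam) (k : ℕ) (hk : 1 ≤ k) (hlam : 0 ≤ lam) :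
    ∃ C : ℝ, 0 ≤ C ∧ ∃ Φ : BdSub X →ₗ[ℝ] ContinuousMultilinearMap ℝ (fun _ : Fin k => X) ℝ,
      (∀ (g : BdSub X) (K : ℝ), (∀ x, |(g : X → ℝ) x| ≤ K) → ‖Φ g‖ ≤ C * K) ∧
      (∀ (g : BdSub X) (M : ContinuousMultilinearMap ℝ (fun _ : Fin k => X) ℝ),
        (∀ x : X, ‖x‖ ≤ 1 → (g : X → ℝ) x = M (fun _ => x)) →
        ∀ x, Φ g (fun _ => x) = M (fun _ => x)) := by
  set C : ℝ := ((k : ℝ) ^ k / (k.factorial : ℝ)) * 2 ^ k * lam ^ k with hC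
  have hC0 : 0 ≤ C := by positivity
  have hex : ∀ (g : BdSub X) (v : Fin k → X), ∃ l, Tendsto (fun s => D.form k s g v) D.U (𝓝 l) := by
    intro g v
    obtain ⟨K, hK⟩ := g.2
    obtain ⟨l, hl, _⟩ := exists_ulim D.U (fun s => D.form k s g v) _
      (fun s => D.form_le k s g v K hK)
    exact ⟨l, hl⟩
  choose φ hφ using hex
  have hb : ∀ (g : BdSub X) (v : Fin k → X) (K : ℝ), (∀ x, |(g : X → ℝ) x| ≤ K) →
      |φ g v| ≤ C * K * ∏ j, ‖v j‖ := fun g v K hK =>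
    le_of_tendsto (hφ g v).abs (Eventually.of_forall fun s => D.form_le k s g v K hK)
  let K0 : BdSub X → ℝ := fun g => g.2.choose
  have hK0 : ∀ g : BdSub X, ∀ x, |(g : X → ℝ) x| ≤ K0 g := fun g => g.2.choose_spec
  let Ψ : BdSub X → ContinuousMultilinearMap ℝ (fun _ : Fin k => X) ℝ := fun g =>
    MultilinearMap.mkContinuous
      { toFun := φ g
        map_update_add' := by
          intro _ v i x y
          refine tendsto_nhds_unique (hφ g _) (((hφ g _).add (hφ g _)).congr' ?_)
          filter_upwards [D.map_add x y] with s hs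
          exact (D.form_update_add k s g v i x y hs).symm
        map_update_smul' := by
          intro _ v i c x
          refine tendsto_nhds_unique (hφ g _) (((hφ g _).const_mul c).congr' ?_)
          filter_upwards [D.map_smul c x] with s hs
          exact (D.form_update_smul k s g v i c x hs).symm }
      (C * K0 g) (fun v => hb g v _ (hK0 g))
  have hΨ : ∀ g v, Ψ g v = φ g v := fun g v => rfl
  refine ⟨C, hC0, ⟨⟨Ψ, ?_⟩, ?_⟩, ?_, ?_⟩
  · intro f g
    ext v
    rw [ContinuousMultilinearMap.add_apply, hΨ, hΨ, hΨ]
    refine tendsto_nhds_unique (hφ _ v) (((hφ f v).add (hφ g v)).congr fun s => ?_)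
    simp only [form, Submodule.coe_add, pol_add, mul_add, Finset.sum_add_distrib]
  · intro c g
    ext v
    simp only [RingHom.id_apply]
    rw [ContinuousMultilinearMap.smul_apply, hΨ, hΨ, smul_eq_mul]
    refine tendsto_nhds_unique (hφ _ v) (((hφ g v).const_mul c).congr fun s => ?_)
    simp only [form, Submodule.coe_smul, pol_smul, Finset.mul_sum]
    exact Finset.sum_congr rfl fun r _ => by ring
  · intro g K hK
    have : 0 ≤ K := (abs_nonneg _).trans (hK 0)
    exact ContinuousMultilinearMap.opNorm_le_bound (by positivity) (fun v => hb g v K hK)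
  · intro g M hM x
    change φ g (fun _ => x) = _
    refine tendsto_nhds_unique (hφ g _) (tendsto_const_nhds.congr' ?_)
    filter_upwards [D.repr x] with s hs
    exact (D.form_recover k hk s g M hM x hs).symm

end L1Data
end
end PieceU

section PieceU
universe u
open Filter Topology


namespace L1Data
variable {X : Type u} [NormedAddCommGroup X] [NormedSpace ℝ X] {lam : ℝ} (D : L1Data X lam)

/-- Sum of absolute values over a list. -/
def gl (l : List X) (s : D.ι) (i : Fin (D.d s)) : ℝ := (l.map (fun y => |D.τ s y i|)).sum

theorem gl_nonneg (l : List X) (s : D.ι) (i : Fin (D.d s)) : 0 ≤ D.gl l s i := by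
  apply List.sum_nonneg
  intro z hz
  simp only [List.mem_map] at hz
  obtain ⟨y, _, rfl⟩ := hz
  exact abs_nonneg _

theorem le_gl (l : List X) (s : D.ι) (i : Fin (D.d s)) (y : X) (hy : y ∈ l) :
    |D.τ s y i| ≤ D.gl l s i := by
  apply List.single_le_sum
  · intro z hz
    simp only [List.mem_map] at hz
    obtain ⟨y, _, rfl⟩ := hz
    exact abs_nonneg _
  · exact List.mem_map.2 ⟨y, hy, rfl⟩

theorem sum_gl (hlam : 0 ≤ lam) (l : List X) (s : D.ι) (hl : ∀ x ∈ l, ‖x‖ ≤ 1) :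
    ∑ i, D.gl l s i ≤ l.length * lam := by
  induction l with
  | nil => simp [gl]
  | cons a l ih =>
    have h1 : ∀ i, D.gl (a :: l) s i = |D.τ s a i| + D.gl l s i := fun i => by simp [gl]
    simp_rw [h1]
    rw [Finset.sum_add_distrib]
    have h2 := ih (fun x hx => hl x (List.mem_cons_of_mem _ hx))
    have h3 := D.bound s a
    have h4 : lam * ‖a‖ ≤ lam := by
      have := hl a List.mem_cons_self
      nlinarith
    simp only [List.length_cons]
    push_cast
    linarith

theorem spread (hlam : 1 ≤ lam) (l : List X) (M : ℝ) (hM : 0 ≤ M) (hl : ∀ x ∈ l, ‖x‖ ≤ 1) :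
    ∃ x, ‖x‖ ≤ 1 ∧ ∀ᶠ s in D.U, 1 / (2 * lam) ≤
      ∑ i, if M * D.gl l s i < |D.τ s x i| then |D.τ s x i| else 0 := by
  by_contra hcon
  push Not at hcon
  obtain ⟨m, hm⟩ := exists_nat_gt (2 * (lam * (M * (l.length * lam))))
  have hm0 : (0 : ℝ) < m := lt_of_le_of_lt (by positivity) hm
  set N := m ^ 2 with hN
  have hsq : √(N : ℝ) = m := by rw [hN]; push_cast; exact Real.sqrt_sq hm0.le
  obtain ⟨y, hy1, hy⟩ := D.big N
  have e1 : ∀ᶠ s in D.U, ∀ j, (∑ i, if M * D.gl l s i < |D.τ s (y j) i| then |D.τ s (y j) i|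
      else 0) < 1 / (2 * lam) := eventually_all.2 fun j => hcon _ (hy1 j)
  have e2 : ∀ᶠ s in D.U, ∀ S : Finset (Fin N), ‖∑ j, sg S j • y j‖ ≤
      ∑ i, |D.τ s (∑ j, sg S j • y j) i| := eventually_all.2 fun S => D.lower _
  obtain ⟨s, h1, h2, h3⟩ := (e1.and (e2.and (D.lin N y))).exists
  have key : ∀ S : Finset (Fin N), (N : ℝ) ≤ lam * (∑ i, |∑ j, sg S j *
      (if M * D.gl l s i < |D.τ s (y j) i| then 0 else D.τ s (y j) i)|) + N / 2 := by
    intro S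
    have a1 : (N : ℝ) ≤ lam * ‖∑ j, sg S j • y j‖ := by
      simpa [abs_sg] using hy (sg S)
    have a2 := h2 S
    have a3 : ∀ i, |D.τ s (∑ j, sg S j • y j) i| ≤ |∑ j, sg S j *
        (if M * D.gl l s i < |D.τ s (y j) i| then 0 else D.τ s (y j) i)| +
        ∑ j, (if M * D.gl l s i < |D.τ s (y j) i| then |D.τ s (y j) i| else 0) := by
      intro i
      rw [h3]
      have : (∑ j, sg S j • D.τ s (y j)) i = ∑ j, sg S j *
        (if M * D.gl l s i < |D.τ s (y j) i| then 0 else D.τ s (y j) i) +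
        ∑ j, sg S j * (if M * D.gl l s i < |D.τ s (y j) i| then D.τ s (y j) i else 0) := by
        rw [Finset.sum_apply, ← Finset.sum_add_distrib]
        refine Finset.sum_congr rfl fun j _ => ?_
        split_ifs <;> simp
      rw [this]
      refine (abs_add_le _ _).trans ?_
      gcongr
      refine (Finset.abs_sum_le_sum_abs _ _).trans ?_
      refine Finset.sum_le_sum fun j _ => ?_
      rw [abs_mul, abs_sg, one_mul]
      split_ifs <;> simp
    have a4 := Finset.sum_le_sum (s := Finset.univ) (fun i _ => a3 i)
    rw [Finset.sum_add_distrib, Finset.sum_comm (f := fun i j =>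
      (if M * D.gl l s i < |D.τ s (y j) i| then |D.τ s (y j) i| else 0))] at a4
    have a5 := Finset.sum_le_sum (s := Finset.univ) (fun j _ => (h1 j).le)
    simp only [Finset.sum_const, Finset.card_univ, Fintype.card_fin, nsmul_eq_mul] at a5
    have a6 : lam * (N * (1 / (2 * lam))) = (N : ℝ) / 2 := by field_simp
    have a7 := a2.trans (a4.trans (add_le_add_right a5 _))
    have a8 := mul_le_mul_of_nonneg_left a7 (by linarith : 0 ≤ lam)
    rw [mul_add, a6] at a8
    exact a1.trans a8
  have k1 := Finset.sum_le_sum (s := Finset.univ) (fun S _ => key S)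
  rw [Finset.sum_add_distrib, ← Finset.mul_sum, Finset.sum_comm] at k1
  have k2 : ∑ i, ∑ S : Finset (Fin N), |∑ j, sg S j *
      (if M * D.gl l s i < |D.τ s (y j) i| then 0 else D.τ s (y j) i)| ≤
      ∑ i, 2 ^ N * (√N * (M * D.gl l s i)) := by
    refine Finset.sum_le_sum fun i _ => ?_
    have h0 : 0 ≤ M * D.gl l s i := mul_nonneg hM (D.gl_nonneg l s i)
    apply sum_abs_sg _ _ h0
    intro j
    split_ifs with h
    · simpa using h0
    · exact not_lt.1 h
  have k3 : ∑ i, 2 ^ N * (√N * (M * D.gl l s i)) ≤ 2 ^ N * (m * (M * (l.length * lam))) := by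
    simp_rw [← Finset.mul_sum]
    rw [hsq]
    gcongr
    exact D.sum_gl (by linarith) l s hl
  simp only [Finset.sum_const, Finset.card_univ, Fintype.card_finset, Fintype.card_fin,
    nsmul_eq_mul] at k1
  have k4 := k1.trans (add_le_add_left (mul_le_mul_of_nonneg_left (k2.trans k3)
    (by linarith : 0 ≤ lam)) _)
  push_cast at k4
  have k5 : (2 : ℝ) ^ N * (N : ℝ) / 2 ≤ 2 ^ N * (lam * (m * (M * (l.length * lam)))) := by
    linarith
  have k6 : (N : ℝ) / 2 ≤ lam * (m * (M * (l.length * lam))) := by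
    rw [mul_div_assoc] at k5
    exact le_of_mul_le_mul_left k5 (by positivity)
  have hNm : (N : ℝ) = m * m := by rw [hN]; push_cast; ring
  rw [hNm] at k6
  nlinarith

end L1Data
end PieceU

section PieceU
universe u
open Filter Topology


namespace L1Data
variable {X : Type u} [NormedAddCommGroup X] [NormedSpace ℝ X] {lam : ℝ} (D : L1Data X lam)

theorem functional (u : ∀ s, Fin (D.d s) → ℝ) (hu : ∀ s i, |u s i| ≤ 1) :
    ∃ f : X →L[ℝ] ℝ, ∀ z, Tendsto (fun s => ∑ i, u s i * D.τ s z i) D.U (𝓝 (f z)) := by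
  have hb : ∀ s z, |∑ i, u s i * D.τ s z i| ≤ lam * ‖z‖ := by
    intro s z
    refine (Finset.abs_sum_le_sum_abs _ _).trans (le_trans ?_ (D.bound s z))
    refine Finset.sum_le_sum fun i _ => ?_
    rw [abs_mul]
    exact mul_le_of_le_one_left (abs_nonneg _) (hu s i)
  choose φ hφ hφb using fun z => exists_ulim D.U _ _ (fun s => hb s z)
  refine ⟨LinearMap.mkContinuous ⟨⟨φ, ?_⟩, ?_⟩ lam (fun z => hφb z), fun z => hφ z⟩
  · intro x y
    refine tendsto_nhds_unique (hφ _) (((hφ x).add (hφ y)).congr' ?_)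
    filter_upwards [D.map_add x y] with s hs
    simp only [hs, Pi.add_apply, mul_add, Finset.sum_add_distrib]
  · intro c x
    refine tendsto_nhds_unique (hφ _) (((hφ x).const_mul c).congr' ?_)
    filter_upwards [D.map_smul c x] with s hs
    simp only [hs, Pi.smul_apply, smul_eq_mul, Finset.mul_sum]
    exact Finset.sum_congr rfl fun i _ => by ring

theorem sequence (D : L1Data X lam) (hlam : 1 ≤ lam) : ∃ (f : ℕ → X →L[ℝ] ℝ) (x : ℕ → X) (δ : ℝ), 0 < δ ∧
    (∀ n, ‖x n‖ ≤ 1) ∧ (∀ n, δ ≤ f n (x n)) ∧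
    ∀ z (t : Finset ℕ), ∑ n ∈ t, |f n z| ≤ lam * ‖z‖ := by
  classical
  set ε : ℝ := 1 / (2 * lam) with hε
  have hε0 : 0 < ε := by positivity
  let Mf : ℕ → ℝ := fun n => lam * 2 * 2 ^ (n + 1) / ε
  have hMf : ∀ n, 0 < Mf n := fun n => by positivity
  have hMf' : ∀ n, lam / Mf n = ε / 4 * (1 / 2) ^ n := fun n => by
    simp only [Mf]; rw [one_div, inv_pow]; field_simp; ring
  choose! nx hnx1 hnx2 using fun l : List X => D.spread hlam l (Mf l.length) (hMf _).le
  let L : ℕ → List X := fun n => Nat.rec [] (fun _ l => nx l :: l) n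
  have hL : ∀ n, L (n + 1) = nx (L n) :: L n := fun n => rfl
  have hlen : ∀ n, (L n).length = n := by
    intro n; induction n with
    | zero => rfl
    | succ n ih => rw [hL, List.length_cons, ih]
  have hball : ∀ n, ∀ y ∈ L n, ‖y‖ ≤ 1 := by
    intro n; induction n with
    | zero => intro y hy; simp [L] at hy
    | succ n ih =>
      intro y hy
      rw [hL, List.mem_cons] at hy
      rcases hy with rfl | hy
      · exact hnx1 _ ih
      · exact ih y hy
  let x : ℕ → X := fun n => nx (L n)
  have hx1 : ∀ n, ‖x n‖ ≤ 1 := fun n => hnx1 _ (hball n)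
  have hmem : ∀ n m, n < m → x n ∈ L m := by
    intro n m h
    induction m with
    | zero => omega
    | succ m ih =>
      rw [hL, List.mem_cons]
      rcases Nat.lt_succ_iff_lt_or_eq.1 h with h | rfl
      · exact Or.inr (ih h)
      · exact Or.inl rfl
  let A : ∀ s : D.ι, ℕ → Fin (D.d s) → Prop := fun s n i =>
    Mf n * D.gl (L n) s i < |D.τ s (x n) i|
  have hx2 : ∀ n, ∀ᶠ s in D.U, ε ≤ ∑ i, if A s n i then |D.τ s (x n) i| else 0 := by
    intro n
    have := hnx2 (L n) (hball n)
    rw [hlen] at this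
    exact this
  have hA : ∀ s n m i, n < m → A s m i → |D.τ s (x n) i| ≤ |D.τ s (x m) i| / Mf m := by
    intro s n m i hnm hAm
    rw [le_div_iff₀ (hMf m)]
    have := D.le_gl (L m) s i (x n) (hmem n m hnm)
    have h2 := mul_le_mul_of_nonneg_left this (hMf m).le
    have h3 : Mf m * D.gl (L m) s i < |D.τ s (x m) i| := hAm
    linarith
  let B : ∀ s : D.ι, ℕ → Fin (D.d s) → Prop := fun s n i => A s n i ∧ ∀ m, n < m → ¬ A s m i
  have hBdisj : ∀ s n m i, B s n i → B s m i → n = m := by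
    intro s n m i h1 h2
    rcases lt_trichotomy n m with h | h | h
    · exact absurd h2.1 (h1.2 m h)
    · exact h
    · exact absurd h1.1 (h2.2 n h)
  -- the tails are small
  have htail : ∀ s n, ∑ i, (if ∃ m, n < m ∧ A s m i then |D.τ s (x n) i| else 0) ≤ ε / 2 := by
    intro s n
    have h1 : ∀ i : Fin (D.d s), ∃ r, (∃ m, n < m ∧ A s m i) → n < r ∧ A s r i := by
      intro i
      by_cases h : ∃ m, n < m ∧ A s m i
      · obtain ⟨m, hm⟩ := h; exact ⟨m, fun _ => hm⟩
      · exact ⟨0, fun h' => absurd h' h⟩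
    choose r hr using h1
    set R := Finset.univ.sup r + 1 with hR
    have hrR : ∀ i, r i ∈ Finset.range R := fun i => by
      rw [Finset.mem_range, hR, Nat.lt_succ_iff]; exact Finset.le_sup (Finset.mem_univ i)
    calc ∑ i, (if ∃ m, n < m ∧ A s m i then |D.τ s (x n) i| else 0)
        ≤ ∑ i, ∑ m ∈ Finset.range R, |D.τ s (x m) i| / Mf m := by
          refine Finset.sum_le_sum fun i _ => ?_
          have hnn : ∀ m ∈ Finset.range R, 0 ≤ |D.τ s (x m) i| / Mf m := fun m _ =>
            div_nonneg (abs_nonneg _) (hMf m).le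
          split_ifs with h
          · obtain ⟨h2, h3⟩ := hr i h
            exact (hA s n (r i) i h2 h3).trans
              (Finset.single_le_sum (f := fun m => |D.τ s (x m) i| / Mf m) hnn (hrR i))
          · exact Finset.sum_nonneg hnn
      _ = ∑ m ∈ Finset.range R, (∑ i, |D.τ s (x m) i|) / Mf m := by
          rw [Finset.sum_comm]
          exact Finset.sum_congr rfl fun m _ => by rw [Finset.sum_div]
      _ ≤ ∑ m ∈ Finset.range R, ε / 4 * (1 / 2) ^ m := by
          refine Finset.sum_le_sum fun m _ => ?_
          rw [← hMf']
          have := D.bound s (x m)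
          have h2 := hx1 m
          have h3 := hMf m
          gcongr
          nlinarith
      _ ≤ ε / 4 * 2 := by
          rw [← Finset.mul_sum]
          exact mul_le_mul_of_nonneg_left (sum_geometric_two_le R) (by positivity)
      _ = ε / 2 := by ring
  let u : ∀ n s, Fin (D.d s) → ℝ := fun n s i =>
    if B s n i then (if 0 ≤ D.τ s (x n) i then 1 else -1) else 0
  have hu : ∀ n s i, |u n s i| ≤ 1 := by
    intro n s i
    simp only [u]
    split_ifs <;> simp
  have huB : ∀ n s i, ¬ B s n i → u n s i = 0 := fun n s i h => by simp only [u, if_neg h]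
  choose f hf using fun n => D.functional (u n) (hu n)
  refine ⟨f, x, ε / 2, by positivity, hx1, ?_, ?_⟩
  · intro n
    refine ge_of_tendsto (hf n (x n)) ?_
    filter_upwards [hx2 n] with s hs
    have h1 := htail s n
    have h2 : ∀ i, (if A s n i then |D.τ s (x n) i| else 0) ≤ u n s i * D.τ s (x n) i +
        (if ∃ m, n < m ∧ A s m i then |D.τ s (x n) i| else 0) := by
      intro i
      by_cases hAi : A s n i
      · by_cases hex : ∃ m, n < m ∧ A s m i
        · rw [huB n s i (fun hB => by obtain ⟨m, hm, hm'⟩ := hex; exact hB.2 m hm hm')]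
          simp [hex]
          split_ifs <;> simp
        · have hB : B s n i := ⟨hAi, fun m hm hm' => hex ⟨m, hm, hm'⟩⟩
          simp only [u, if_pos hB, if_pos hAi, if_neg hex, add_zero]
          split_ifs with h0
          · rw [abs_of_nonneg h0, one_mul]
          · rw [abs_of_neg (not_le.1 h0)]; linarith
      · rw [huB n s i (fun hB => hAi hB.1), if_neg hAi]
        split_ifs <;> simp
    have h3 := Finset.sum_le_sum (s := Finset.univ) (fun i _ => h2 i)
    rw [Finset.sum_add_distrib] at h3
    linarith
  · intro z t
    refine le_of_tendsto (tendsto_finset_sum t fun n _ => (hf n z).abs) ?_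
    refine Eventually.of_forall fun s => ?_
    calc ∑ n ∈ t, |∑ i, u n s i * D.τ s z i| ≤ ∑ n ∈ t, ∑ i, |u n s i| * |D.τ s z i| := by
          refine Finset.sum_le_sum fun n _ => ?_
          refine (Finset.abs_sum_le_sum_abs _ _).trans (le_of_eq ?_)
          exact Finset.sum_congr rfl fun i _ => abs_mul _ _
      _ = ∑ i, (∑ n ∈ t, |u n s i|) * |D.τ s z i| := by
          rw [Finset.sum_comm]
          exact Finset.sum_congr rfl fun i _ => by rw [Finset.sum_mul]
      _ ≤ ∑ i, |D.τ s z i| := by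
          refine Finset.sum_le_sum fun i _ => mul_le_of_le_one_left (abs_nonneg _) ?_
          by_cases h : ∃ n, B s n i
          · obtain ⟨n, hn⟩ := h
            calc ∑ m ∈ t, |u m s i| ≤ ∑ m ∈ t, if m = n then 1 else 0 := by
                  refine Finset.sum_le_sum fun m _ => ?_
                  split_ifs with hmn
                  · exact hu m s i
                  · rw [huB m s i (fun hB => hmn (hBdisj s m n i hB hn))]; simp
              _ ≤ 1 := by
                  rw [Finset.sum_ite_eq']; split_ifs <;> simp
          · push Not at h
            rw [Finset.sum_eq_zero]
            · simp
            · intro n _; rw [huB n s i (h n)]; simp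
      _ ≤ _ := D.bound s z

end L1Data
end PieceU

section PieceU
universe u
open Filter Topology


section
variable {X : Type u} [NormedAddCommGroup X] [NormedSpace ℝ X] {lam : ℝ}

theorem mem_UBall {x : X} : x ∈ UBall X ↔ ‖x‖ ≤ 1 := by
  simp [UBall]

theorem exists_S (D : L1Data X lam) (k : ℕ) (hk : 1 ≤ k) (hlam : 0 ≤ lam) :
    ∃ C : ℝ, 0 ≤ C ∧
    ∃ S : BdSub (UBall X) →ₗ[ℝ] ContinuousMultilinearMap ℝ (fun _ : Fin k => X) ℝ,
      (∀ (g : BdSub (UBall X)) (K : ℝ), (∀ x, |(g : UBall X → ℝ) x| ≤ K) → ‖S g‖ ≤ C * K) ∧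
      (∀ (g : BdSub (UBall X)) (M : ContinuousMultilinearMap ℝ (fun _ : Fin k => X) ℝ),
        (∀ x : UBall X, (g : UBall X → ℝ) x = M (fun _ => (x : X))) →
        ∀ x, S g (fun _ => x) = M (fun _ => x)) := by
  classical
  obtain ⟨C, hC, Φ, h1, h2⟩ := D.exists_Phi k hk hlam
  let ex : (UBall X → ℝ) → X → ℝ := fun f x => if h : x ∈ UBall X then f ⟨x, h⟩ else 0
  have exb : ∀ f K, (∀ x, |f x| ≤ K) → ∀ x, |ex f x| ≤ K := by
    intro f K hK x
    simp only [ex]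
    split_ifs with h
    · exact hK _
    · simpa using (abs_nonneg _).trans (hK (zeroB X))
  let E : BdSub (UBall X) →ₗ[ℝ] BdSub X :=
    { toFun := fun g => ⟨ex g, by obtain ⟨K, hK⟩ := g.2; exact ⟨K, exb _ _ hK⟩⟩
      map_add' := by
        intro f g; ext x
        simp only [ex, Submodule.coe_add, Pi.add_apply]
        split_ifs <;> simp
      map_smul' := by
        intro c f; ext x
        simp only [ex, Submodule.coe_smul, Pi.smul_apply, RingHom.id_apply]
        split_ifs <;> simp }
  refine ⟨C, hC, Φ ∘ₗ E, fun g K hK => h1 (E g) K (exb _ _ hK), fun g M hM => h2 (E g) M ?_⟩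
  intro x hx
  change ex g x = _
  simp only [ex]
  rw [dif_pos (mem_UBall.2 hx)]
  exact hM _

theorem abs_diag_le {k : ℕ} (M : ContinuousMultilinearMap ℝ (fun _ : Fin k => X) ℝ) (x : X)
    (hx : ‖x‖ ≤ 1) : |M (fun _ => x)| ≤ ‖M‖ := by
  have := M.le_opNorm (fun _ => x)
  refine this.trans (mul_le_of_le_one_right (norm_nonneg _) ?_)
  simpa using pow_le_one₀ (norm_nonneg x) hx

theorem lip_diag {k : ℕ} (M : ContinuousMultilinearMap ℝ (fun _ : Fin k => X) ℝ) (x y : X)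
    (hx : ‖x‖ ≤ 1) (hy : ‖y‖ ≤ 1) :
    |M (fun _ => x) - M (fun _ => y)| ≤ ‖M‖ * k * ‖x - y‖ := by
  have h := M.norm_image_sub_le (fun _ => x) (fun _ => y)
  have a : ∀ z : X, ‖(fun _ : Fin k => z)‖ ≤ ‖z‖ := fun z => pi_norm_const_le z
  refine h.trans ?_
  have h1 : max ‖(fun _ : Fin k => x)‖ ‖(fun _ : Fin k => y)‖ ^ (Fintype.card (Fin k) - 1) ≤ 1 :=
    pow_le_one₀ (le_max_of_le_left (norm_nonneg _))
      (max_le ((a x).trans hx) ((a y).trans hy))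
  have h2 : ‖(fun _ : Fin k => x) - (fun _ : Fin k => y)‖ ≤ ‖x - y‖ := a (x - y)
  rw [Fintype.card_fin] at *
  calc ‖M‖ * k * max ‖(fun _ : Fin k => x)‖ ‖(fun _ : Fin k => y)‖ ^ (k - 1) *
        ‖(fun _ : Fin k => x) - (fun _ : Fin k => y)‖ ≤ ‖M‖ * k * 1 * ‖x - y‖ := by gcongr
    _ = _ := by ring

theorem partQ (D : L1Data X lam) (k : ℕ) (hk : 1 ≤ k) (hlam : 0 ≤ lam) :
    (∃ (Q : (↥(UBall X) → ℝ) →ₗ[ℝ] (↥(UBall X) → ℝ)) (K : NNReal),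
      (∀ f ∈ Lip0B X, Q f ∈ PhomB k X) ∧ (∀ f ∈ PhomB k X, Q f = f) ∧
      (∀ f ∈ Lip0B X, ∀ L : NNReal, LipschitzWith L f → LipschitzWith (K * L) (Q f))) := by
  obtain ⟨C, hC, S, h1, h2⟩ := exists_S D k hk hlam
  let Q0 : BdSub (UBall X) →ₗ[ℝ] (UBall X → ℝ) :=
    { toFun := fun g x => S g (fun _ => (x : X))
      map_add' := fun f g => by ext x; simp
      map_smul' := fun c g => by ext x; simp }
  obtain ⟨Q, hQ⟩ := LinearMap.exists_extend Q0
  have hQ' : ∀ f (hf : f ∈ BdSub (UBall X)), Q f = Q0 ⟨f, hf⟩ := fun f hf => by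
    rw [← hQ]; rfl
  have hlip : ∀ f ∈ Lip0B X, ∀ L : NNReal, LipschitzWith L f → ∀ x, |f x| ≤ L := by
    intro f hf L hL x
    have := hL.dist_le_mul x (zeroB X)
    rw [hf.2, Real.dist_eq, sub_zero] at this
    refine this.trans (mul_le_of_le_one_right L.2 ?_)
    have := mem_UBall.1 x.2
    simpa [Subtype.dist_eq, zeroB] using this
  have hLB : ∀ f ∈ Lip0B X, f ∈ BdSub (UBall X) := fun f hf => by
    obtain ⟨L, hL⟩ := hf.1
    exact ⟨L, hlip f hf L hL⟩
  refine ⟨Q, ⟨C * k, by positivity⟩, ?_, ?_, ?_⟩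
  · intro f hf
    rw [hQ' f (hLB f hf)]
    exact ⟨S ⟨f, hLB f hf⟩, fun x => rfl⟩
  · rintro f ⟨M, hM⟩
    have hb : f ∈ BdSub (UBall X) := ⟨‖M‖, fun x => by
      rw [hM]; exact abs_diag_le M x (mem_UBall.1 x.2)⟩
    rw [hQ' f hb]
    ext x
    exact (h2 ⟨f, hb⟩ M hM x).trans (hM x).symm
  · intro f hf L hL
    rw [hQ' f (hLB f hf)]
    refine LipschitzWith.of_dist_le_mul fun x y => ?_
    have := lip_diag (S ⟨f, hLB f hf⟩) x y (mem_UBall.1 x.2) (mem_UBall.1 y.2)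
    rw [Real.dist_eq]
    refine this.trans ?_
    have h3 := h1 ⟨f, hLB f hf⟩ L (hlip f hf L hL)
    rw [Subtype.dist_eq, dist_eq_norm]
    push_cast
    change _ ≤ C * k * L * ‖(x : X) - y‖
    calc _ ≤ C * L * k * ‖(x : X) - y‖ := by gcongr
      _ = _ := by ring

/-! Facts on `supNormBall`. -/
theorem poly_bdd {k : ℕ} (f : PhomSub k X) : BddAbove ((fun x => |(f : X → ℝ) x|) '' UBall X) := by
  obtain ⟨M, hM⟩ := f.2
  refine ⟨‖M‖, ?_⟩
  rintro _ ⟨x, hx, rfl⟩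
  simp only [hM]
  exact abs_diag_le M x (mem_UBall.1 hx)

theorem le_supNB {k : ℕ} (f : PhomSub k X) (x : X) (hx : ‖x‖ ≤ 1) :
    |(f : X → ℝ) x| ≤ supNormBall X f :=
  le_csSup (poly_bdd f) ⟨x, mem_UBall.2 hx, rfl⟩

theorem supNB_le {f : X → ℝ} {K : ℝ} (h : ∀ x, ‖x‖ ≤ 1 → |f x| ≤ K) : supNormBall X f ≤ K := by
  refine csSup_le ⟨_, 0, mem_UBall.2 (by simp), rfl⟩ ?_
  rintro _ ⟨x, hx, rfl⟩
  exact h x (mem_UBall.1 hx)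

theorem supNB_nonneg (f : X → ℝ) : 0 ≤ supNormBall X f := by
  apply Real.sSup_nonneg
  rintro _ ⟨x, hx, rfl⟩
  exact abs_nonneg _

theorem poly_cont {k : ℕ} (f : PhomSub k X) : Continuous (f : X → ℝ) := by
  obtain ⟨M, hM⟩ := f.2
  have : (f : X → ℝ) = fun x => M (fun _ => x) := funext hM
  rw [this]
  fun_prop

/-- `P(ᵏX)` is a retract of `ℓ∞`. -/
theorem exists_ER [TopologicalSpace.SeparableSpace X] (D : L1Data X lam) (k : ℕ) (hk : 1 ≤ k)
    (hlam : 0 ≤ lam) :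
    ∃ (E : PhomSub k X →ₗ[ℝ] Linf) (R : Linf →ₗ[ℝ] PhomSub k X) (C : ℝ),
      (∀ f, ‖E f‖ ≤ supNormBall X f) ∧ (∀ h, supNormBall X (R h : X → ℝ) ≤ C * ‖h‖) ∧
      ∀ f, R (E f) = f := by
  obtain ⟨C, hC, S, h1, h2⟩ := exists_S D k hk hlam
  haveI : Nonempty (UBall X) := ⟨zeroB X⟩
  haveI : SecondCountableTopology X := UniformSpace.secondCountable_of_separable X
  let q : ℕ → UBall X := TopologicalSpace.denseSeq (UBall X)
  have hq : DenseRange q := TopologicalSpace.denseRange_denseSeq _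
  have hqn : ∀ n, ‖(q n : X)‖ ≤ 1 := fun n => mem_UBall.1 (q n).2
  let E : PhomSub k X →ₗ[ℝ] Linf := toLinf
    { toFun := fun f n => (f : X → ℝ) (q n)
      map_add' := fun f g => rfl
      map_smul' := fun c f => rfl } (fun f => ⟨supNormBall X f, fun n => le_supNB f _ (hqn n)⟩)
  have hE : ∀ f n, E f n = (f : X → ℝ) (q n) := fun f n => rfl
  have hU : ∀ x : UBall X, ∃ U : Ultrafilter ℕ, Tendsto q U (𝓝 x) := by
    intro x
    haveI : (comap q (𝓝 x)).NeBot := by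
      rw [comap_neBot_iff]
      intro t ht
      obtain ⟨_, h1, n, rfl⟩ := mem_closure_iff_nhds.1 (hq x) t ht
      exact ⟨n, h1⟩
    exact ⟨Ultrafilter.of (comap q (𝓝 x)), tendsto_iff_comap.2 (Ultrafilter.of_le _)⟩
  choose U hU using hU
  choose l hl hlb using fun (h : Linf) (x : UBall X) =>
    exists_ulim (U x) (fun n => h n) ‖h‖ (fun n => Linf.abs_le h n)
  let T : Linf →ₗ[ℝ] BdSub (UBall X) :=
    { toFun := fun h => ⟨l h, ‖h‖, hlb h⟩
      map_add' := by
        intro f g; ext x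
        exact tendsto_nhds_unique (hl _ x) ((hl f x).add (hl g x))
      map_smul' := by
        intro c g; ext x
        exact tendsto_nhds_unique (hl _ x) ((hl g x).const_mul c) }
  let P : ContinuousMultilinearMap ℝ (fun _ : Fin k => X) ℝ →ₗ[ℝ] PhomSub k X :=
    { toFun := fun M => ⟨fun x => M (fun _ => x), M, fun x => rfl⟩
      map_add' := fun M N => rfl
      map_smul' := fun c M => rfl }
  refine ⟨E, P ∘ₗ S ∘ₗ T, C, ?_, ?_, ?_⟩
  · intro f
    exact Linf.norm_le fun n => le_supNB f _ (hqn n)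
  · intro h
    refine supNB_le fun x hx => ?_
    exact (abs_diag_le (S (T h)) x hx).trans (h1 (T h) ‖h‖ (hlb h))
  · intro f
    obtain ⟨M, hM⟩ := f.2
    ext x
    refine (h2 (T (E f)) M ?_ x).trans (hM x).symm
    intro y
    rw [← hM]
    refine tendsto_nhds_unique (hl (E f) y) ?_
    exact ((poly_cont f).comp continuous_subtype_val).continuousAt.tendsto.comp (hU y)

end
end PieceU

section PieceU
universe u
open Filter Topology


section
variable {X : Type u} [NormedAddCommGroup X] [NormedSpace ℝ X] {lam : ℝ}

theorem exists_AB (D : L1Data X lam) (k : ℕ) (hk : 1 ≤ k) (hlam : 1 ≤ lam) :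
    ∃ (A : Linf →ₗ[ℝ] PhomSub k X) (B : PhomSub k X →ₗ[ℝ] Linf) (CA CB : ℝ),
      (∀ a, supNormBall X (A a : X → ℝ) ≤ CA * ‖a‖) ∧ (∀ f, ‖B f‖ ≤ CB * supNormBall X f) ∧
      ∀ a, B (A a) = a := by
  classical
  obtain ⟨f0, x0, δ, hδ, hx0, hf0, hsum0⟩ := D.sequence hlam
  have hl0 : 0 < lam := by linarith
  set ε : ℝ := δ ^ k / (2 * lam ^ (k - 1)) with hε
  have hε0 : 0 < ε := by positivity
  obtain ⟨φ, hφ, hoff0⟩ := rosenthal ε lam hε0 (fun n m => |f0 m (x0 n)|)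
    (fun n m => abs_nonneg _) (fun n t => (hsum0 (x0 n) t).trans
      (mul_le_of_le_one_right hl0.le (hx0 n)))
  let f : ℕ → X →L[ℝ] ℝ := fun n => f0 (φ n)
  let x : ℕ → X := fun n => x0 (φ n)
  have hx : ∀ n, ‖x n‖ ≤ 1 := fun n => hx0 _
  have hf : ∀ n, δ ≤ f n (x n) := fun n => hf0 _
  have hsum : ∀ z (t : Finset ℕ), ∑ n ∈ t, |f n z| ≤ lam * ‖z‖ := by
    intro z t
    have := hsum0 z (t.map ⟨φ, hφ⟩)
    rwa [Finset.sum_map] at this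
  have hoff : ∀ n (t : Finset ℕ), n ∉ t → ∑ m ∈ t, |f m (x n)| ≤ ε := hoff0
  clear_value f x
  have hone : ∀ n z, |f n z| ≤ lam * ‖z‖ := fun n z => by simpa using hsum z {n}
  let g : ℕ → ContinuousMultilinearMap ℝ (fun _ : Fin k => X) ℝ := fun n =>
    (ContinuousMultilinearMap.mkPiAlgebra ℝ (Fin k) ℝ).compContinuousLinearMap (fun _ => f n)
  have hg : ∀ n v, g n v = ∏ j, f n (v j) := fun n v => by simp [g]
  have hgd : ∀ n z, g n (fun _ => z) = f n z ^ k := fun n z => by simp [hg]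
  clear_value g
  let j0 : Fin k := ⟨0, hk⟩
  have hgs : ∀ v (t : Finset ℕ), ∑ n ∈ t, |g n v| ≤ lam ^ k * ∏ j, ‖v j‖ := by
    intro v t
    have e1 : lam ^ k * ∏ j, ‖v j‖ = lam * ‖v j0‖ * ∏ j ∈ Finset.univ.erase j0, lam * ‖v j‖ := by
      rw [Finset.mul_prod_erase Finset.univ (fun j => lam * ‖v j‖) (Finset.mem_univ j0),
        Finset.prod_mul_distrib]
      simp
    calc ∑ n ∈ t, |g n v| ≤ ∑ n ∈ t, |f n (v j0)| * ∏ j ∈ Finset.univ.erase j0, lam * ‖v j‖ := by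
          refine Finset.sum_le_sum fun n _ => ?_
          rw [hg, Finset.abs_prod,
            ← Finset.mul_prod_erase Finset.univ (fun j => |f n (v j)|) (Finset.mem_univ j0)]
          refine mul_le_mul_of_nonneg_left ?_ (abs_nonneg _)
          exact Finset.prod_le_prod (fun j _ => abs_nonneg _) (fun j _ => hone n (v j))
      _ = (∑ n ∈ t, |f n (v j0)|) * ∏ j ∈ Finset.univ.erase j0, lam * ‖v j‖ := by
          rw [Finset.sum_mul]
      _ ≤ _ := by
          rw [e1]
          exact mul_le_mul_of_nonneg_right (hsum _ _)
            (Finset.prod_nonneg fun j _ => mul_nonneg hl0.le (norm_nonneg _))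
  have hags : ∀ (a : Linf) v (t : Finset ℕ),
      ∑ n ∈ t, |a n * g n v| ≤ ‖a‖ * lam ^ k * ∏ j, ‖v j‖ := by
    intro a v t
    calc ∑ n ∈ t, |a n * g n v| ≤ ∑ n ∈ t, ‖a‖ * |g n v| := by
          refine Finset.sum_le_sum fun n _ => ?_
          rw [abs_mul]
          exact mul_le_mul_of_nonneg_right (Linf.abs_le a n) (abs_nonneg _)
      _ ≤ _ := by
          rw [← Finset.mul_sum, mul_assoc]
          exact mul_le_mul_of_nonneg_left (hgs v t) (norm_nonneg _)
  have hsm : ∀ (a : Linf) v, Summable (fun n => a n * g n v) := fun a v =>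
    Summable.of_abs (summable_of_sum_le (fun n => abs_nonneg _) (hags a v))
  have htb : ∀ (a : Linf) v, |∑' n, a n * g n v| ≤ ‖a‖ * lam ^ k * ∏ j, ‖v j‖ := fun a v =>
    le_of_tendsto (hsm a v).hasSum.abs (Eventually.of_forall fun t =>
      (Finset.abs_sum_le_sum_abs _ _).trans (hags a v t))
  let M : Linf → ContinuousMultilinearMap ℝ (fun _ : Fin k => X) ℝ := fun a =>
    MultilinearMap.mkContinuous
      { toFun := fun v => ∑' n, a n * g n v
        map_update_add' := by
          intro _ v i y z
          rw [← (hsm a _).tsum_add (hsm a _)]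
          refine tsum_congr fun n => ?_
          rw [← mul_add]
          congr 1
          convert (g n).map_update_add v i y z
        map_update_smul' := by
          intro _ v i c y
          rw [smul_eq_mul, ← tsum_mul_left]
          refine tsum_congr fun n => ?_
          have : g n (Function.update v i (c • y)) = c • g n (Function.update v i y) := by
            convert (g n).map_update_smul v i c y
          simp only [smul_eq_mul] at this
          have h2 : ∀ r s : ℝ, r = c * s → a n * r = c * (a n * s) := fun r s h => by
            rw [h]; ring
          apply h2
          convert this }
      (‖a‖ * lam ^ k) (htb a)
  let A : Linf →ₗ[ℝ] PhomSub k X :=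
    { toFun := fun a => ⟨fun z => ∑' n, a n * g n (fun _ => z), M a, fun z => rfl⟩
      map_add' := by
        intro a b
        ext z
        change ∑' n, (a n + b n) * g n (fun _ => z) = _ + _
        rw [← (hsm a _).tsum_add (hsm b _)]
        exact tsum_congr fun n => by ring
      map_smul' := by
        intro c a
        ext z
        change ∑' n, (c * a n) * g n (fun _ => z) = c * _
        rw [← tsum_mul_left]
        exact tsum_congr fun n => by ring }
  have hA : ∀ a z, (A a : X → ℝ) z = ∑' n, a n * g n (fun _ => z) := fun a z => rfl
  have hpos : ∀ n, δ ^ k ≤ f n (x n) ^ k := fun n => pow_le_pow_left₀ hδ.le (hf n) k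
  have hδk : 0 < δ ^ k := by positivity
  have hDb : ∀ (p : PhomSub k X) n,
      |(p : X → ℝ) (x n) / f n (x n) ^ k| ≤ (δ ^ k)⁻¹ * supNormBall X p := by
    intro p n
    rw [abs_div, abs_of_pos (hδk.trans_le (hpos n)), inv_mul_eq_div]
    exact div_le_div₀ (supNB_nonneg _) (le_supNB p _ (hx n)) hδk (hpos n)
  let Dv : PhomSub k X →ₗ[ℝ] Linf := toLinf
    { toFun := fun p n => (p : X → ℝ) (x n) / f n (x n) ^ k
      map_add' := fun p q => by ext n; exact add_div _ _ _
      map_smul' := fun c p => by ext n; exact mul_div_assoc _ _ _ } (fun p => ⟨_, hDb p⟩)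
  have hDv : ∀ p n, Dv p n = (p : X → ℝ) (x n) / f n (x n) ^ k := fun p n => rfl
  have hnear : ∀ a, ‖((LinearMap.id : Linf →ₗ[ℝ] Linf) - Dv ∘ₗ A) a‖ ≤ 1 / 2 * ‖a‖ := by
    intro a
    refine Linf.norm_le fun n => ?_
    change |a n - (A a : X → ℝ) (x n) / f n (x n) ^ k| ≤ _
    have hp := hδk.trans_le (hpos n)
    have key : |a n * f n (x n) ^ k - (A a : X → ℝ) (x n)| ≤ ‖a‖ * (δ ^ k / 2) := by
      rw [hA]
      refine le_of_tendsto ((tendsto_const_nhds.sub (hsm a (fun _ => x n)).hasSum).abs) ?_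
      filter_upwards [eventually_ge_atTop ({n} : Finset ℕ)] with t ht
      have hnt : n ∈ t := ht (Finset.mem_singleton_self n)
      rw [← Finset.add_sum_erase t _ hnt, hgd, sub_add_cancel_left, abs_neg]
      refine (Finset.abs_sum_le_sum_abs _ _).trans ?_
      calc ∑ m ∈ t.erase n, |a m * g m (fun _ => x n)|
          ≤ ∑ m ∈ t.erase n, ‖a‖ * (lam ^ (k - 1) * |f m (x n)|) := by
            refine Finset.sum_le_sum fun m _ => ?_
            rw [abs_mul, hgd, abs_pow]
            refine mul_le_mul (Linf.abs_le a m) ?_ (by positivity) (norm_nonneg _)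
            rw [← pow_sub_one_mul (by omega : k ≠ 0)]
            refine mul_le_mul_of_nonneg_right ?_ (abs_nonneg _)
            refine pow_le_pow_left₀ (abs_nonneg _) ?_ _
            exact (hone m _).trans (mul_le_of_le_one_right hl0.le (hx n))
        _ = ‖a‖ * (lam ^ (k - 1) * ∑ m ∈ t.erase n, |f m (x n)|) := by
            rw [Finset.mul_sum, Finset.mul_sum]
        _ ≤ ‖a‖ * (lam ^ (k - 1) * ε) := by
            have := hoff n (t.erase n) (by simp)
            gcongr
        _ = _ := by rw [hε]; field_simp
    have e : a n - (A a : X → ℝ) (x n) / f n (x n) ^ k =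
        (a n * f n (x n) ^ k - (A a : X → ℝ) (x n)) / f n (x n) ^ k := by
      field_simp
    rw [e, abs_div, abs_of_pos hp, div_le_iff₀ hp]
    refine key.trans ?_
    have := mul_le_mul_of_nonneg_left (hpos n) (norm_nonneg a)
    linarith
  let T : Linf →L[ℝ] Linf := LinearMap.mkContinuous _ (1 / 2) hnear
  have hT : ‖T‖ < 1 := (LinearMap.mkContinuous_norm_le _ (by norm_num) _).trans_lt (by norm_num)
  obtain ⟨W, hW⟩ := isUnit_one_sub_of_norm_lt_one hT
  have hWA : ∀ a, (W : Linf →L[ℝ] Linf) a = Dv (A a) := by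
    intro a
    rw [hW]
    change a - (a - Dv (A a)) = _
    abel
  let V : Linf →L[ℝ] Linf := ((W⁻¹ : (Linf →L[ℝ] Linf)ˣ) : Linf →L[ℝ] Linf)
  refine ⟨A, V.toLinearMap ∘ₗ Dv, lam ^ k, ‖V‖ * (δ ^ k)⁻¹, ?_, ?_, ?_⟩
  · intro a
    refine supNB_le fun z hz => ?_
    rw [hA]
    refine (htb a _).trans ?_
    rw [mul_comm (lam ^ k)]
    refine mul_le_of_le_one_right (by positivity) ?_
    simpa using pow_le_one₀ (norm_nonneg z) hz
  · intro p
    refine (V.le_opNorm (Dv p)).trans ?_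
    rw [mul_assoc]
    exact mul_le_mul_of_nonneg_left (Linf.norm_le (hDb p)) (norm_nonneg _)
  · intro a
    change V (Dv (A a)) = a
    rw [← hWA]
    change (V * (W : Linf →L[ℝ] Linf)) a = a
    rw [W.inv_mul]
    rfl

theorem partIso [TopologicalSpace.SeparableSpace X] (D : L1Data X lam) (k : ℕ) (hk : 1 ≤ k)
    (hlam : 1 ≤ lam) :
    ∃ e : PhomSub k X ≃ₗ[ℝ] lp (fun _ : ℕ => ℝ) ⊤,
      ∃ a b : ℝ, 0 < a ∧
        ∀ f : PhomSub k X,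
          a * supNormBall X (f : X → ℝ) ≤ ‖e f‖ ∧ ‖e f‖ ≤ b * supNormBall X (f : X → ℝ) := by
  obtain ⟨E, R, C, hE, hR, hRE⟩ := exists_ER D k hk (by linarith)
  obtain ⟨A, B, CA, CB, hA, hB, hBA⟩ := exists_AB D k hk hlam
  let p : Linf →L[ℝ] Linf := LinearMap.mkContinuous (E ∘ₗ R) C fun h => (hE _).trans (hR h)
  let A' : Linf →L[ℝ] Linf := LinearMap.mkContinuous (E ∘ₗ A) CA fun h => (hE _).trans (hA h)
  let B' : Linf →L[ℝ] Linf := LinearMap.mkContinuous (B ∘ₗ R) (|CB| * C) fun h => by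
    refine (hB _).trans ?_
    rw [mul_assoc]
    exact mul_le_mul (le_abs_self _) (hR h) (supNB_nonneg _) (abs_nonneg _)
  have hp : ∀ h, p h = E (R h) := fun h => rfl
  have hA' : ∀ h, A' h = E (A h) := fun h => rfl
  have hB' : ∀ h, B' h = B (R h) := fun h => rfl
  obtain ⟨G⟩ := pelczynski p A' B' (fun v => by rw [hp, hp, hRE]) (fun v => by rw [hp, hA', hRE])
    (fun v => by rw [hB', hA', hRE, hBA])
  let e0 : PhomSub k X ≃ₗ[ℝ] LinearMap.range p.toLinearMap :=
    { toFun := fun f => ⟨E f, E f, by change E (R (E f)) = _; rw [hRE]⟩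
      map_add' := fun f g => by ext1; exact map_add E f g
      map_smul' := fun c f => by ext1; exact map_smul E c f
      invFun := fun y => R y
      left_inv := fun f => hRE f
      right_inv := by
        rintro ⟨_, h, rfl⟩
        ext1
        change E (R (E (R h))) = E (R h)
        rw [hRE] }
  let G1 : LinearMap.range p.toLinearMap →L[ℝ] Linf := G.toContinuousLinearMap
  let G2 : Linf →L[ℝ] LinearMap.range p.toLinearMap := G.symm.toContinuousLinearMap
  refine ⟨e0.trans G.toLinearEquiv, 1 / (|C| * ‖G2‖ + 1),
    ‖G1‖, by positivity, fun f => ⟨?_, ?_⟩⟩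
  · have h1 : R (G.symm (G (e0 f)) : Linf) = f := by
      rw [G.symm_apply_apply]; exact hRE f
    have h2 := hR (G.symm (G (e0 f)) : Linf)
    rw [h1] at h2
    have h3 := G2.le_opNorm (G (e0 f))
    change 1 / _ * _ ≤ ‖G (e0 f)‖
    rw [one_div_mul_eq_div, div_le_iff₀ (by positivity)]
    refine h2.trans ?_
    have h4 : ‖(G.symm (G (e0 f)) : Linf)‖ ≤ ‖G2‖ * ‖G (e0 f)‖ := h3
    calc C * ‖(G.symm (G (e0 f)) : Linf)‖ ≤ |C| * (‖G2‖ * ‖G (e0 f)‖) :=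
          mul_le_mul (le_abs_self _) h4 (norm_nonneg _) (abs_nonneg _)
      _ ≤ _ := by nlinarith [norm_nonneg (G (e0 f))]
  · change ‖G (e0 f)‖ ≤ _
    refine (G1.le_opNorm (e0 f)).trans ?_
    exact mul_le_mul_of_nonneg_left (hE f) (ContinuousLinearMap.opNorm_nonneg G1)

end
end PieceU

/-- **Proposition 4.1 (Arias–Farmer / Aron–Schottenloher).** If `X` is an
infinite-dimensional separable `𝓛₁`-space, then for every `k ≥ 1` the space `P(ᵏX)` of
`k`-homogeneous polynomials on `X` is isomorphic, as a Banach space, to `ℓ∞`; in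
particular `P(ᵏX)` is complemented in `Lip₀(B_X)`. -/
theorem statement7 (X : Type*) [NormedAddCommGroup X] [NormedSpace ℝ X] [CompleteSpace X]
    [TopologicalSpace.SeparableSpace X]
    (hinf : ¬ FiniteDimensional ℝ X)
    (lam : ℝ) (hlam : 1 ≤ lam)
    (hL1 : ∀ G : Submodule ℝ X, FiniteDimensional ℝ G →
      ∃ F : Submodule ℝ X, G ≤ F ∧ FiniteDimensional ℝ F ∧
        ∃ T : F ≃ₗ[ℝ] PiLp 1 (fun _ : Fin (Module.finrank ℝ F) => ℝ),
          ∀ v : F, ‖v‖ ≤ ‖T v‖ ∧ ‖T v‖ ≤ lam * ‖v‖)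
    (k : ℕ) (hk : 1 ≤ k) :
    (∃ e : PhomSub k X ≃ₗ[ℝ] lp (fun _ : ℕ => ℝ) ⊤,
      ∃ a b : ℝ, 0 < a ∧
        ∀ f : PhomSub k X,
          a * supNormBall X (f : X → ℝ) ≤ ‖e f‖ ∧ ‖e f‖ ≤ b * supNormBall X (f : X → ℝ)) ∧
    (∃ (Q : (↥(UBall X) → ℝ) →ₗ[ℝ] (↥(UBall X) → ℝ)) (K : NNReal),
      (∀ f ∈ Lip0B X, Q f ∈ PhomB k X) ∧ (∀ f ∈ PhomB k X, Q f = f) ∧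
      (∀ f ∈ Lip0B X, ∀ L : NNReal, LipschitzWith L f → LipschitzWith (K * L) (Q f))) := by
  obtain ⟨D⟩ := exists_L1Data X hinf lam hlam hL1
  exact ⟨partIso D k hk hlam, partQ D k hk (by linarith)⟩
end
end

section
/- Let X be a Banach space, n ≥ 1, and P ∈ P(ⁿX) an n-homogeneous polynomial on X. Let P̌ be the unique symmetric bounded n-linear form on X with P(x) = P̌(x,…,x) for all x. Then n·‖P‖_P ≤ Lip(P↾_{B_X}) ≤ n·‖P̌‖_L, where Lip(P↾_{B_X}) denotes the best Lipschitz constant of the restriction of P to the closed unit ball B_X. -/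
open Metric Set Real

noncomputable section

/-- **Fact 2.1.** Let `P` be the `n`-homogeneous polynomial on a Banach space `X`
associated with its (unique) symmetric bounded `n`-linear form `M = P̌`, that is,
`P x = M(x,…,x)`. Then `n·‖P‖_P ≤ Lip(P↾_{B_X}) ≤ n·‖M‖_L`: every Lipschitz constant
`K` of `P` on the closed unit ball satisfies `n·|P x| ≤ K` for all `x` in the ball
(equivalently `n·‖P‖_P ≤ K`), and `P` is Lipschitz on the closed unit ball with
constant `n·‖M‖`. -/
theorem statement9 (X : Type*) [NormedAddCommGroup X] [NormedSpace ℝ X]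
    (n : ℕ) (hn : 1 ≤ n)
    (M : ContinuousMultilinearMap ℝ (fun _ : Fin n => X) ℝ)
    (hsymm : ∀ (σ : Equiv.Perm (Fin n)) (v : Fin n → X), M (v ∘ σ) = M v) :
    (∀ K : NNReal,
      LipschitzOnWith K (fun x : X => M (fun _ => x)) (Metric.closedBall (0 : X) 1) →
      ∀ x ∈ Metric.closedBall (0 : X) 1, (n : ℝ) * |M (fun _ => x)| ≤ (K : ℝ)) ∧
    LipschitzOnWith ((n : NNReal) * ‖M‖₊)
      (fun x : X => M (fun _ => x)) (Metric.closedBall (0 : X) 1) := by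
  constructor
  · intro K hK x hx
    have hx1 : ‖x‖ ≤ 1 := by simpa using hx
    have key : ∀ t ∈ Set.Ico (0 : ℝ) 1,
        (∑ i ∈ Finset.range n, t ^ i) * |M (fun _ => x)| ≤ (K : ℝ) := by
      intro t ht
      have htx : t • x ∈ Metric.closedBall (0 : X) 1 := by
        rw [mem_closedBall_zero_iff, norm_smul, Real.norm_eq_abs, abs_of_nonneg ht.1]
        nlinarith [norm_nonneg x, ht.1, ht.2]
      have h := hK.dist_le_mul x hx (t • x) htx
      have hM : M (fun _ => t • x) = t ^ n * M (fun _ => x) := by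
        have := M.map_smul_univ (fun _ => t) (fun _ => x)
        simpa using this
      have hpos : 0 < 1 - t := by linarith [ht.2]
      have hd : dist x (t • x) = (1 - t) * ‖x‖ := by
        have e : x - t • x = (1 - t) • x := by rw [sub_smul, one_smul]
        rw [dist_eq_norm, e, norm_smul, Real.norm_eq_abs, abs_of_pos hpos]
      have hg : (∑ i ∈ Finset.range n, t ^ i) * (1 - t) = 1 - t ^ n := geom_sum_mul_neg t n
      have hs : 0 ≤ ∑ i ∈ Finset.range n, t ^ i :=
        Finset.sum_nonneg fun i _ => pow_nonneg ht.1 i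
      simp only [hd, hM, Real.dist_eq] at h
      have e2 : M (fun _ => x) - t ^ n * M (fun _ => x)
          = ((∑ i ∈ Finset.range n, t ^ i) * (1 - t)) * M (fun _ => x) := by
        rw [hg]; ring
      rw [e2, abs_mul, abs_of_nonneg (mul_nonneg hs hpos.le)] at h
      have h3 : (K : ℝ) * ((1 - t) * ‖x‖) ≤ K * (1 - t) := by
        apply mul_le_mul_of_nonneg_left _ K.2
        nlinarith
      refine le_of_mul_le_mul_right ?_ hpos
      linarith
    have hc : Continuous fun t : ℝ => (∑ i ∈ Finset.range n, t ^ i) * |M (fun _ => x)| := by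
      fun_prop
    have hl : Filter.Tendsto (fun t : ℝ => (∑ i ∈ Finset.range n, t ^ i) * |M (fun _ => x)|)
        (nhdsWithin 1 (Set.Iio 1)) (nhds ((n : ℝ) * |M (fun _ => x)|)) := by
      have := (hc.tendsto 1).mono_left (nhdsWithin_le_nhds (s := Set.Iio 1))
      simpa using this
    refine le_of_tendsto hl ?_
    filter_upwards [Ico_mem_nhdsLT (show (0 : ℝ) < 1 by norm_num)] with t ht
    exact key t ht
  · apply LipschitzOnWith.of_dist_le_mul
    intro x hx y hy
    have hx1 : ‖x‖ ≤ 1 := by simpa using hx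
    have hy1 : ‖y‖ ≤ 1 := by simpa using hy
    have h := M.norm_image_sub_le (fun _ => x) (fun _ => y)
    have : Nonempty (Fin n) := ⟨⟨0, hn⟩⟩
    have e : ((fun _ => x) - (fun _ => y) : Fin n → X) = fun _ => x - y := rfl
    rw [e, pi_norm_const, pi_norm_const, pi_norm_const, Fintype.card_fin] at h
    have hp : (max ‖x‖ ‖y‖) ^ (n - 1) ≤ 1 :=
      pow_le_one₀ (le_max_of_le_left (norm_nonneg x)) (max_le hx1 hy1)
    rw [dist_eq_norm, dist_eq_norm]
    refine h.trans ?_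
    push_cast
    apply mul_le_mul_of_nonneg_right _ (norm_nonneg _)
    have h0 : 0 ≤ ‖M‖ * (n : ℝ) := by positivity
    nlinarith
end
end

section
/- Let H be a real Hilbert space, n ≥ 1, and P ∈ P(ⁿH) an n-homogeneous polynomial on H. Then Lip(P↾_{B_H}) = n·‖P‖_P, i.e. the best Lipschitz constant of the restriction of P to the closed unit ball of H equals n times the polynomial norm of P. Consequently, the map P ↦ P↾_{B_H} is a multiple of an isometric embedding of P(ⁿH) into Lip₀(B_H). -/
open Metric Set Real

noncomputable section

/-- The best Lipschitz constant of `f` on the set `s`. -/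
def lipConstOn {α : Type*} [MetricSpace α] (f : α → ℝ) (s : Set α) : ℝ :=
  sInf {K : ℝ | 0 ≤ K ∧ LipschitzOnWith (Real.toNNReal K) f s}


lemma orth (n : ℕ) (hn : 1 ≤ n) (z0 ω : ℂ) (hz : z0 * (starRingEnd ℂ) z0 = 1)
    (hω : IsPrimitiveRoot ω n) (hω1 : ω * (starRingEnd ℂ) ω = 1) (m l : ℕ) (hm : m < n) (hl : l < n) :
    ∑ j ∈ Finset.range n, (z0 * ω ^ j) ^ m * (starRingEnd ℂ) (z0 * ω ^ j) ^ l
      = if m = l then (n : ℂ) else 0 := by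
  split_ifs with h
  · subst h
    have : ∀ j ∈ Finset.range n, (z0 * ω ^ j) ^ m * (starRingEnd ℂ) (z0 * ω ^ j) ^ m = 1 := by
      intro j _
      rw [← mul_pow, map_mul, map_pow,
        show z0 * ω ^ j * ((starRingEnd ℂ) z0 * (starRingEnd ℂ) ω ^ j)
          = (z0 * (starRingEnd ℂ) z0) * (ω * (starRingEnd ℂ) ω) ^ j by rw [mul_pow]; ring, hz, hω1]
      simp
    rw [Finset.sum_congr rfl this]; simp
  · set r := ω ^ m * (starRingEnd ℂ) ω ^ l with hr
    have hr1 : r ≠ 1 := by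
      intro h1
      apply h
      apply hω.pow_inj hm hl
      calc ω ^ m = r * ω ^ l := by
            rw [hr, mul_assoc, ← mul_pow, mul_comm _ ω, hω1]; simp
        _ = ω ^ l := by rw [h1, one_mul]
    have hrn : r ^ n = 1 := by
      rw [hr, mul_pow, ← pow_mul, ← pow_mul, mul_comm m, mul_comm l, pow_mul, pow_mul, ← map_pow,
        hω.pow_eq_one]; simp
    have : ∀ j ∈ Finset.range n, (z0 * ω ^ j) ^ m * (starRingEnd ℂ) (z0 * ω ^ j) ^ l
        = (z0 ^ m * (starRingEnd ℂ) z0 ^ l) * r ^ j := by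
      intro j _
      rw [hr, map_mul, map_pow]; ring
    rw [Finset.sum_congr rfl this, ← Finset.mul_sum, geom_sum_eq hr1, hrn]; simp

lemma fejer (n : ℕ) (hn : 1 ≤ n) (z0 ω : ℂ) (hz : z0 * (starRingEnd ℂ) z0 = 1)
    (hω : IsPrimitiveRoot ω n) (hω1 : ω * (starRingEnd ℂ) ω = 1) (m : ℕ) (hm : m ≤ n) :
    ∑ j ∈ Finset.range n, (∑ l ∈ Finset.range n, (z0 * ω ^ j) ^ l) *
      (starRingEnd ℂ) (∑ l ∈ Finset.range n, (z0 * ω ^ j) ^ l) * (z0 * ω ^ j) ^ m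
      = n * (n + m * (z0 ^ n - 1)) := by
  induction m with
  | zero =>
    simp only [pow_zero, mul_one, map_sum, Finset.sum_mul_sum, map_pow]
    rw [Finset.sum_comm]
    simp_rw [Finset.sum_comm (s := Finset.range n) (t := Finset.range n)
      (f := fun j l' => (z0 * ω ^ j) ^ _ * (starRingEnd ℂ) (z0 * ω ^ j) ^ l')]
    have : ∀ l ∈ Finset.range n, ∑ l' ∈ Finset.range n, ∑ j ∈ Finset.range n,
        (z0 * ω ^ j) ^ l * (starRingEnd ℂ) (z0 * ω ^ j) ^ l' = n := by
      intro l hl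
      have h2 : ∀ l' ∈ Finset.range n, ∑ j ∈ Finset.range n,
        (z0 * ω ^ j) ^ l * (starRingEnd ℂ) (z0 * ω ^ j) ^ l' = if l = l' then (n : ℂ) else 0 :=
        fun l' hl' => orth n hn z0 ω hz hω hω1 l l' (Finset.mem_range.1 hl) (Finset.mem_range.1 hl')
      rw [Finset.sum_congr rfl h2]
      simp only [Finset.sum_ite_eq, hl, if_true]
    rw [Finset.sum_congr rfl this]; simp
  | succ m ih =>
    have ih := ih (by omega)
    have key : ∑ j ∈ Finset.range n, (∑ l ∈ Finset.range n, (z0 * ω ^ j) ^ l) *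
      (starRingEnd ℂ) (∑ l ∈ Finset.range n, (z0 * ω ^ j) ^ l) * ((z0 * ω ^ j) ^ (m + 1)
        - (z0 * ω ^ j) ^ m) = n * (z0 ^ n - 1) := by
      have h1 : ∀ j ∈ Finset.range n, (∑ l ∈ Finset.range n, (z0 * ω ^ j) ^ l) *
        (starRingEnd ℂ) (∑ l ∈ Finset.range n, (z0 * ω ^ j) ^ l) * ((z0 * ω ^ j) ^ (m + 1)
        - (z0 * ω ^ j) ^ m) = (z0 ^ n - 1) * ∑ l ∈ Finset.range n,
          (z0 * ω ^ j) ^ m * (starRingEnd ℂ) (z0 * ω ^ j) ^ l := by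
        intro j _
        have hg := geom_sum_mul (z0 * ω ^ j) n
        have hp : (z0 * ω ^ j) ^ n = z0 ^ n := by
          rw [mul_pow, ← pow_mul, mul_comm j, pow_mul, hω.pow_eq_one]; simp
        rw [hp] at hg
        rw [← hg, ← Finset.mul_sum, map_sum]
        simp only [map_pow]
        ring
      rw [Finset.sum_congr rfl h1, ← Finset.mul_sum, Finset.sum_comm]
      have h2 : ∀ l' ∈ Finset.range n, ∑ j ∈ Finset.range n,
        (z0 * ω ^ j) ^ m * (starRingEnd ℂ) (z0 * ω ^ j) ^ l' = if m = l' then (n : ℂ) else 0 :=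
        fun l' hl' => orth n hn z0 ω hz hω hω1 m l' (by omega) (Finset.mem_range.1 hl')
      rw [Finset.sum_congr rfl h2]
      have : m ∈ Finset.range n := Finset.mem_range.2 (by omega)
      simp only [Finset.sum_ite_eq, this, if_true]
      ring
    simp only [mul_sub, Finset.sum_sub_distrib] at key
    rw [sub_eq_iff_eq_add.1 key, ih]
    push_cast
    ring

lemma fejer_poly (n : ℕ) (hn : 1 ≤ n) (z0 ω : ℂ) (hz : z0 * (starRingEnd ℂ) z0 = 1)
    (hω : IsPrimitiveRoot ω n) (hω1 : ω * (starRingEnd ℂ) ω = 1) (Q : Polynomial ℂ)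
    (hQ : Q.natDegree ≤ n) :
    ∑ j ∈ Finset.range n, (∑ l ∈ Finset.range n, (z0 * ω ^ j) ^ l) *
      (starRingEnd ℂ) (∑ l ∈ Finset.range n, (z0 * ω ^ j) ^ l) * Q.eval (z0 * ω ^ j)
      = n * (n * Q.eval 1 + (z0 ^ n - 1) * Q.derivative.eval 1) := by
  have hQ' : Q.natDegree < n + 1 := by omega
  rw [Polynomial.derivative_eval, Polynomial.sum_over_range' _ (by simp) (n + 1) hQ']
  simp only [Polynomial.eval_eq_sum_range' hQ', Finset.mul_sum]
  rw [Finset.sum_comm, ← Finset.sum_add_distrib, Finset.mul_sum]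
  refine Finset.sum_congr rfl fun m hm => ?_
  have h := fejer n hn z0 ω hz hω hω1 m (by have := Finset.mem_range.1 hm; omega)
  calc _ = Q.coeff m * ∑ j ∈ Finset.range n, (∑ l ∈ Finset.range n, (z0 * ω ^ j) ^ l) *
      (starRingEnd ℂ) (∑ l ∈ Finset.range n, (z0 * ω ^ j) ^ l) * (z0 * ω ^ j) ^ m := by
        rw [Finset.mul_sum]
        exact Finset.sum_congr rfl fun j _ => by ring
    _ = _ := by rw [h]; simp only [one_pow]; ring

open Polynomial in
/-- The interpolation formula. -/
lemma interp (n : ℕ) (hn : 1 ≤ n) (α : ℝ) : ∃ w θ ε : ℕ → ℝ, (∀ j, 0 ≤ w j) ∧ (∀ j, |ε j| = 1) ∧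
    (∑ j ∈ Finset.range n, w j = n) ∧ ∀ m ≤ n,
      ∑ j ∈ Finset.range n, w j * (ε j * (cos (θ j) ^ (n - m) * sin (θ j) ^ m))
        = if m = 0 then n * cos α else if m = 1 then sin α else 0 := by
  have hn0 : (n : ℂ) ≠ 0 := by exact_mod_cast (by omega : n ≠ 0)
  set z0 : ℂ := Complex.exp (-(2 * (α / n) * Complex.I)) with hz0
  set ω : ℂ := (Complex.exp (2 * π * Complex.I / n))⁻¹ with hω0
  have hω : IsPrimitiveRoot ω n := (Complex.isPrimitiveRoot_exp n (by omega)).inv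
  have hz : z0 * (starRingEnd ℂ) z0 = 1 := by
    rw [hz0, ← Complex.exp_conj, ← Complex.exp_add]
    simp only [map_neg, map_mul, map_div₀, Complex.conj_I, Complex.conj_ofReal, map_natCast,
      map_ofNat]
    rw [← Complex.exp_zero]; congr 1; ring
  have hω1 : ω * (starRingEnd ℂ) ω = 1 := by
    rw [hω0, ← Complex.exp_neg, ← Complex.exp_conj, ← Complex.exp_add]
    simp only [map_neg, map_mul, map_div₀, Complex.conj_I, Complex.conj_ofReal, map_natCast,
      map_ofNat]
    rw [← Complex.exp_zero]; congr 1; ring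
  set W : ℕ → ℝ := fun j => Complex.normSq (∑ l ∈ Finset.range n, (z0 * ω ^ j) ^ l) with hW
  have hWc : ∀ j, (W j : ℂ) = (∑ l ∈ Finset.range n, (z0 * ω ^ j) ^ l) *
      (starRingEnd ℂ) (∑ l ∈ Finset.range n, (z0 * ω ^ j) ^ l) := fun j => (Complex.mul_conj _).symm
  set θ : ℕ → ℝ := fun j => (α + j * π) / n with hθ
  have hζ : ∀ j, z0 * ω ^ j = Complex.exp (-(2 * θ j * Complex.I)) := by
    intro j
    rw [hz0, hω0, ← Complex.exp_neg, ← Complex.exp_nat_mul, ← Complex.exp_add, hθ]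
    congr 1; push_cast; field_simp; ring
  have hq : z0 ^ n = Complex.exp (-(2 * α * Complex.I)) := by
    rw [hz0, ← Complex.exp_nat_mul]; congr 1; field_simp
  refine ⟨fun j => W j / n, θ, fun j => (-1) ^ j, fun j => div_nonneg (Complex.normSq_nonneg _) (Nat.cast_nonneg n), fun j => by simp, ?_, ?_⟩
  · have h := fejer n hn z0 ω hz hω hω1 0 (by omega)
    simp only [← hWc, pow_zero, mul_one] at h
    have h2 : (∑ j ∈ Finset.range n, W j / n : ℝ) = n := by
      rw [← Finset.sum_div]
      rw [← Complex.ofReal_inj]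
      push_cast
      rw [h]
      field_simp
      simp
    exact h2
  · intro m hm
    set Q : ℂ[X] := (C (1 / 2) * (1 + X)) ^ (n - m) * (C (Complex.I / 2) * (X - 1)) ^ m with hQ
    have hQd : Q.natDegree ≤ n := by
      have : n = (n - m) * 1 + m * 1 := by omega
      rw [hQ]; conv_rhs => rw [this]
      refine natDegree_mul_le_of_le (natDegree_pow_le_of_le _ ?_) (natDegree_pow_le_of_le _ ?_)
      · compute_degree
      · compute_degree
    have h := fejer_poly n hn z0 ω hz hω hω1 Q hQd
    simp only [← hWc] at h
    have hT : ∀ j, (((-1) ^ j * (cos (θ j) ^ (n - m) * sin (θ j) ^ m) : ℝ) : ℂ)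
        = Complex.exp (α * Complex.I) * Q.eval (z0 * ω ^ j) := by
      intro j
      have he : Complex.exp (α * Complex.I) = (-1) ^ j * Complex.exp (θ j * Complex.I) ^ n := by
        rw [← Complex.exp_nat_mul, ← Complex.exp_pi_mul_I, ← Complex.exp_nat_mul,
          ← Complex.exp_add, hθ]
        rw [Complex.exp_eq_exp_iff_exists_int]
        refine ⟨-j, ?_⟩
        push_cast; field_simp; ring
      have hc : Complex.cos (θ j) = Complex.exp (θ j * Complex.I) * (1 / 2 * (1 + z0 * ω ^ j)) := by
        rw [hζ, Complex.cos, mul_left_comm, mul_add, ← Complex.exp_add]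
        ring_nf
      have hs : Complex.sin (θ j) = Complex.exp (θ j * Complex.I)
          * (Complex.I / 2 * (z0 * ω ^ j - 1)) := by
        rw [hζ, Complex.sin, mul_left_comm, mul_sub, ← Complex.exp_add]
        ring_nf
      push_cast
      rw [hc, hs, he, hQ]
      simp only [eval_mul, eval_pow, eval_C, eval_add, eval_sub, eval_one, eval_X]
      have : Complex.exp (θ j * Complex.I) ^ n = Complex.exp (θ j * Complex.I) ^ (n - m)
        * Complex.exp (θ j * Complex.I) ^ m := by rw [← pow_add]; congr 1; omega
      rw [this, mul_pow (Complex.exp _), mul_pow (Complex.exp _)]; ring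
    have hE1 : Complex.exp (α * Complex.I) = Complex.cos α + Complex.sin α * Complex.I :=
      Complex.exp_mul_I _
    have hE2 : Complex.exp (α * Complex.I) * z0 ^ n = Complex.cos α - Complex.sin α * Complex.I := by
      rw [hq, ← Complex.exp_add, show (α * Complex.I + -(2 * α * Complex.I) : ℂ)
        = (-α : ℂ) * Complex.I by ring, Complex.exp_mul_I, Complex.cos_neg, Complex.sin_neg]; ring
    have hsum : ((∑ j ∈ Finset.range n, W j / n * ((-1) ^ j * (cos (θ j) ^ (n - m) * sin (θ j) ^ m)) : ℝ)
        : ℂ) = Complex.exp (α * Complex.I) * (n * Q.eval 1 + (z0 ^ n - 1) * Q.derivative.eval 1) := by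
      rw [Complex.ofReal_sum]
      calc _ = Complex.exp (α * Complex.I) / n * ∑ j ∈ Finset.range n, W j * Q.eval (z0 * ω ^ j) := by
            rw [Finset.mul_sum]
            refine Finset.sum_congr rfl fun j _ => ?_
            rw [Complex.ofReal_mul, hT]; push_cast; ring
        _ = _ := by rw [h]; field_simp
    rw [← Complex.ofReal_inj, hsum]
    rcases m with _ | _ | m
    · simp only [hQ, if_true, derivative_mul, derivative_pow, derivative_C, derivative_add,
        derivative_sub, derivative_one, derivative_X, eval_mul, eval_pow, eval_C, eval_add, eval_sub,
        eval_one, eval_X, pow_zero, Nat.sub_zero, eval_natCast, eval_zero, Nat.cast_zero]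
      norm_num
      linear_combination (n / 2 : ℂ) * hE1 + (n / 2 : ℂ) * hE2
    · simp only [hQ, derivative_mul, derivative_pow, derivative_C, derivative_add,
        derivative_sub, derivative_one, derivative_X, eval_mul, eval_pow, eval_C, eval_add, eval_sub,
        eval_one, eval_X, eval_natCast, eval_zero, Nat.cast_zero]
      norm_num
      linear_combination (Complex.I / 2 : ℂ) * hE2 - (Complex.I / 2 : ℂ) * hE1
        - Complex.sin α * Complex.I_sq
    · simp only [hQ, derivative_mul, derivative_pow, derivative_C, derivative_add,
        derivative_sub, derivative_one, derivative_X, eval_mul, eval_pow, eval_C, eval_add, eval_sub,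
        eval_one, eval_X, eval_natCast, eval_zero, Nat.cast_zero]
      norm_num

lemma expand {H : Type*} [NormedAddCommGroup H] [InnerProductSpace ℝ H] (n : ℕ)
    (M : ContinuousMultilinearMap ℝ (fun _ : Fin n => H) ℝ) (x u : H) :
    ∃ c : ℕ → ℝ, ∀ a b : ℝ, M (fun _ => a • x + b • u)
      = ∑ m ∈ Finset.range (n + 1), c m * (a ^ (n - m) * b ^ m) := by
  classical
  refine ⟨fun m => ∑ s : Finset (Fin n) with n - s.card = m,
    M (s.piecewise (fun _ => x) (fun _ => u)), fun a b => ?_⟩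
  have h := M.map_add_univ (fun _ => a • x) (fun _ => b • u)
  have h' : (fun _ : Fin n => a • x) + (fun _ : Fin n => b • u) = fun _ => a • x + b • u := rfl
  rw [h'] at h
  rw [h]
  have h2 : ∀ s : Finset (Fin n), M (s.piecewise (fun _ => a • x) (fun _ => b • u))
      = M (s.piecewise (fun _ => x) (fun _ => u)) * (a ^ s.card * b ^ (n - s.card)) := by
    intro s
    have h3 := M.map_smul_univ (s.piecewise (fun _ => a) (fun _ => b))
      (s.piecewise (fun _ => x) (fun _ => u))
    have h4 : (fun i => s.piecewise (fun _ => a) (fun _ => b) i •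
        s.piecewise (fun _ => x) (fun _ => u) i) = s.piecewise (fun _ => a • x) (fun _ => b • u) := by
      ext i
      by_cases hi : i ∈ s <;> simp [hi]
    rw [h4] at h3
    rw [h3, Finset.prod_piecewise, smul_eq_mul, mul_comm]
    simp [← Finset.compl_eq_univ_sdiff, Finset.card_compl]
  simp only [h2, Finset.sum_mul]
  rw [← Finset.sum_fiberwise_of_maps_to (s := Finset.univ) (t := Finset.range (n + 1))
    (g := fun s : Finset (Fin n) => n - s.card) (fun s _ => Finset.mem_range.2 (by omega))]
  refine Finset.sum_congr rfl fun m _ => Finset.sum_congr rfl fun s hs => ?_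
  have hs := (Finset.mem_filter.1 hs).2
  have : s.card ≤ n := by simpa using s.card_le_univ
  rw [← hs, show n - (n - s.card) = s.card by omega]

lemma deriv_bound {H : Type*} [NormedAddCommGroup H] [InnerProductSpace ℝ H] (n : ℕ) (hn : 1 ≤ n)
    (M : ContinuousMultilinearMap ℝ (fun _ : Fin n => H) ℝ) (C : ℝ)
    (hC : ∀ x : H, ‖x‖ ≤ 1 → |M (fun _ => x)| ≤ C) (e y : H) (he : ‖e‖ = 1) (hy : ‖y‖ = 1)
    (r : ℝ) (hr0 : 0 ≤ r) (hr1 : r ≤ 1) :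
    ∃ d : ℝ, |d| ≤ n * C ∧ HasDerivAt (fun t : ℝ => M (fun _ => r • e + t • y)) d 0 := by
  set k : ℝ := inner ℝ e y with hk
  have hk1 : |k| ≤ 1 := by
    have := abs_real_inner_le_norm e y
    rwa [he, hy, one_mul] at this
  obtain ⟨hk2, hk3⟩ := abs_le.1 hk1
  set α := arccos k with hα
  have hcos : cos α = k := Real.cos_arccos hk2 hk3
  set u : H := (sin α)⁻¹ • (y - k • e) with hu
  have horth : inner ℝ e u = 0 := by
    rw [hu, inner_smul_right, inner_sub_right, inner_smul_right, real_inner_self_eq_norm_sq, he, ← hk]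
    simp
  have hnv : ‖y - k • e‖ ^ 2 = sin α ^ 2 := by
    rw [@norm_sub_sq_real, inner_smul_right, norm_smul, real_inner_comm, ← hk, he, hy,
      Real.sin_sq, hcos, mul_one, Real.norm_eq_abs, sq_abs]; ring
  have hyu : y = cos α • e + sin α • u := by
    by_cases hs : sin α = 0
    · rw [hs] at hnv
      have : y - k • e = 0 := by
        rw [← norm_eq_zero]; exact pow_eq_zero_iff (two_ne_zero) |>.1 (by simpa using hnv)
      rw [hs, hcos, zero_smul, add_zero]; exact sub_eq_zero.1 this
    · rw [hu, smul_smul, mul_inv_cancel₀ hs, one_smul, hcos]; abel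
  have hun : ‖u‖ ^ 2 ≤ 1 := by
    rw [hu, norm_smul, mul_pow, hnv, Real.norm_eq_abs, sq_abs, ← mul_pow]
    by_cases hs : sin α = 0
    · simp [hs]
    · rw [inv_mul_cancel₀ hs]; simp
  obtain ⟨c, hc⟩ := expand n M e u
  obtain ⟨w, θ, ε, hw, hε, hsw, hint⟩ := interp n hn α
  have hval : ∑ j ∈ Finset.range n, w j * (ε j * M (fun _ => cos (θ j) • e + sin (θ j) • u))
      = n * cos α * c 0 + sin α * c 1 := by
    simp only [hc, Finset.mul_sum]
    rw [Finset.sum_comm]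
    have : ∀ m ∈ Finset.range (n + 1), ∑ j ∈ Finset.range n,
        w j * (ε j * (c m * (cos (θ j) ^ (n - m) * sin (θ j) ^ m)))
        = c m * if m = 0 then n * cos α else if m = 1 then sin α else 0 := by
      intro m hm
      rw [← hint m (by have := Finset.mem_range.1 hm; omega), Finset.mul_sum]
      exact Finset.sum_congr rfl fun j _ => by ring
    rw [Finset.sum_congr rfl this]
    obtain ⟨n, rfl⟩ : ∃ k, n = k + 1 := ⟨n - 1, by omega⟩
    rw [Finset.sum_range_succ', Finset.sum_range_succ']
    simp; ring
  have hbound : |n * cos α * c 0 + sin α * c 1| ≤ n * C := by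
    rw [← hval, ← hsw, Finset.sum_mul]
    refine (Finset.abs_sum_le_sum_abs _ _).trans (Finset.sum_le_sum fun j _ => ?_)
    rw [abs_mul, abs_mul, hε, one_mul, abs_of_nonneg (hw j)]
    refine mul_le_mul_of_nonneg_left (hC _ ?_) (hw j)
    have : ‖cos (θ j) • e + sin (θ j) • u‖ ^ 2 ≤ 1 := by
      rw [@norm_add_sq_real, inner_smul_left, inner_smul_right, horth, norm_smul, norm_smul, he,
        mul_pow, mul_pow, Real.norm_eq_abs, Real.norm_eq_abs, sq_abs, sq_abs]
      have := Real.sin_sq_add_cos_sq (θ j)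
      have := mul_le_mul_of_nonneg_left hun (sq_nonneg (sin (θ j)))
      simp only [mul_zero, add_zero]
      nlinarith
    exact (sq_le_one_iff₀ (norm_nonneg _)).1 this
  refine ⟨r ^ (n - 1) * (n * cos α * c 0 + sin α * c 1), ?_, ?_⟩
  · rw [abs_mul, abs_of_nonneg (by positivity)]
    exact (mul_le_of_le_one_left (abs_nonneg _) (pow_le_one₀ hr0 hr1)).trans hbound
  · have hf : (fun t : ℝ => M (fun _ => r • e + t • y)) = fun t : ℝ =>
        ∑ m ∈ Finset.range (n + 1), c m * ((r + t * cos α) ^ (n - m) * (t * sin α) ^ m) := by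
      ext t
      rw [← hc]
      congr 1; ext i
      conv_lhs => rw [hyu]
      module
    rw [hf]
    have hd : ∀ m ∈ Finset.range (n + 1), HasDerivAt
        (fun t : ℝ => c m * ((r + t * cos α) ^ (n - m) * (t * sin α) ^ m))
        (c m * ((((n - m : ℕ) : ℝ) * (r + 0 * cos α) ^ (n - m - 1) * (1 * cos α)) * (0 * sin α) ^ m
          + (r + 0 * cos α) ^ (n - m) * (m * (0 * sin α) ^ (m - 1) * (1 * sin α)))) 0 := by
      intro m _
      exact (((((hasDerivAt_id (0:ℝ)).mul_const (cos α)).const_add r).pow (n - m)).mul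
        (((hasDerivAt_id (0:ℝ)).mul_const (sin α)).pow m)).const_mul (c m)
    have := HasDerivAt.fun_sum hd
    refine this.congr_deriv ?_
    clear this hd hf hbound hval hint hsw
    obtain ⟨n, rfl⟩ : ∃ k, n = k + 1 := ⟨n - 1, by omega⟩
    rw [Finset.sum_range_succ', Finset.sum_range_succ']
    simp; ring

/-- **Hilbert-space isometry of the polynomial embedding.** For an `n`-homogeneous
polynomial `P` on a real Hilbert space `H` (given by a bounded `n`-linear form `M` via
`P x = M(x,…,x)`), the best Lipschitz constant of `P` restricted to the closed unit
ball equals `n` times the polynomial norm `‖P‖_P = sup_{x ∈ B_H} |P x|`. Consequently,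
`P ↦ P↾_{B_H}` is a multiple of an isometric embedding of `P(ⁿH)` into `Lip₀(B_H)`. -/
theorem statement10 (H : Type*) [NormedAddCommGroup H] [InnerProductSpace ℝ H]
    [CompleteSpace H] (n : ℕ) (hn : 1 ≤ n)
    (M : ContinuousMultilinearMap ℝ (fun _ : Fin n => H) ℝ) :
    lipConstOn (fun x : H => M (fun _ => x)) (Metric.closedBall (0 : H) 1)
      = (n : ℝ) * sSup ((fun x : H => |M (fun _ => x)|) '' Metric.closedBall (0 : H) 1) := by
  set S := (fun x : H => |M (fun _ => x)|) '' Metric.closedBall (0 : H) 1 with hS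
  have hne : S.Nonempty := ⟨_, 0, by simp, rfl⟩
  have hbdd : BddAbove S := by
    refine ⟨‖M‖, ?_⟩
    rintro _ ⟨x, hx, rfl⟩
    have hx' : ‖x‖ ≤ 1 := by simpa using hx
    have h := M.le_opNorm (fun _ => x)
    simp only [Finset.prod_const, Finset.card_univ, Fintype.card_fin, Real.norm_eq_abs] at h
    exact h.trans (mul_le_of_le_one_right (norm_nonneg _) (pow_le_one₀ (norm_nonneg _) hx'))
  set C := sSup S with hCdef
  have hC : ∀ x : H, ‖x‖ ≤ 1 → |M (fun _ => x)| ≤ C := fun x hx =>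
    le_csSup hbdd ⟨x, by simpa using hx, rfl⟩
  have hC0 : 0 ≤ C := (abs_nonneg _).trans (hC 0 (by simp))
  have hnC : 0 ≤ n * C := by positivity
  have hn0 : (0 : ℝ) < n := by exact_mod_cast hn
  apply IsLeast.csInf_eq
  constructor
  · refine ⟨hnC, ?_⟩
    have hdiff : Differentiable ℝ (fun x : H => M (fun _ => x)) := by
      have : ContDiff ℝ 1 (fun x : H => M (fun _ => x)) :=
        M.contDiff.comp (contDiff_pi.2 fun _ => contDiff_id)
      exact this.differentiable one_ne_zero
    refine Convex.lipschitzOnWith_of_nnnorm_fderiv_le (𝕜 := ℝ) (fun x _ => hdiff x) ?_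
      (convex_closedBall 0 1)
    intro x hx
    have hx' : ‖x‖ ≤ 1 := by simpa using hx
    rw [← NNReal.coe_le_coe, coe_nnnorm, Real.coe_toNNReal _ hnC]
    refine ContinuousLinearMap.opNorm_le_of_unit_norm hnC fun y hy => ?_
    obtain ⟨e, he, hxe⟩ : ∃ e : H, ‖e‖ = 1 ∧ x = ‖x‖ • e := by
      by_cases h0 : x = 0
      · exact ⟨y, hy, by simp [h0]⟩
      · have h1 : ‖x‖ ≠ 0 := norm_ne_zero_iff.2 h0
        exact ⟨‖x‖⁻¹ • x, by simp [norm_smul, h1], by rw [smul_smul, mul_inv_cancel₀ h1, one_smul]⟩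
    obtain ⟨d, hd, hder⟩ := deriv_bound n hn M C hC e y he hy ‖x‖ (norm_nonneg _) hx'
    rw [← hxe] at hder
    have h2 : HasDerivAt (fun t : ℝ => M (fun _ => x + t • y))
        (fderiv ℝ (fun x : H => M (fun _ => x)) x y) 0 :=
      (hdiff x).hasFDerivAt.hasLineDerivAt y
    rw [h2.unique hder]
    exact hd
  · rintro K ⟨hK0, hK⟩
    rw [← le_div_iff₀' hn0]
    refine csSup_le hne ?_
    rintro _ ⟨x, hx, rfl⟩
    have hx' : ‖x‖ ≤ 1 := by simpa using hx
    rw [le_div_iff₀' hn0]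
    have hh : ∀ t : ℝ, M (fun _ => t • x) = t ^ n * M (fun _ => x) := by
      intro t
      have := M.map_smul_univ (fun _ => t) (fun _ => x)
      simpa using this
    have h1 : ∀ t ∈ Set.Ioo (0 : ℝ) 1, (∑ i ∈ Finset.range n, t ^ i) * |M (fun _ => x)| ≤ K := by
      intro t ht
      have hpos : 0 < 1 - t := by linarith [ht.2]
      have htx : t • x ∈ Metric.closedBall (0 : H) 1 := by
        simp only [mem_closedBall, dist_zero_right, norm_smul, Real.norm_eq_abs, abs_of_pos ht.1]
        nlinarith [ht.1, ht.2, norm_nonneg x]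
      have h := hK.dist_le_mul x hx (t • x) htx
      rw [Real.coe_toNNReal _ hK0, Real.dist_eq, dist_eq_norm] at h
      simp only [hh] at h
      rw [show x - t • x = (1 - t) • x by module, norm_smul, Real.norm_eq_abs, abs_of_pos hpos,
        show M (fun _ => x) - t ^ n * M (fun _ => x)
          = (1 - t) * ((∑ i ∈ Finset.range n, t ^ i) * M (fun _ => x)) by
            rw [← mul_assoc, mul_neg_geom_sum]; ring, abs_mul, abs_of_pos hpos, abs_mul,
        abs_of_nonneg (Finset.sum_nonneg fun i _ => pow_nonneg ht.1.le i)] at h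
      have h' : (1 - t) * ((∑ i ∈ Finset.range n, t ^ i) * |M (fun _ => x)|) ≤ (1 - t) * K := by
        refine h.trans ?_
        rw [mul_left_comm]
        exact mul_le_mul_of_nonneg_left (mul_le_of_le_one_right hK0 hx') hpos.le
      exact le_of_mul_le_mul_left h' hpos
    have hcont : Continuous (fun t : ℝ => (∑ i ∈ Finset.range n, t ^ i) * |M (fun _ => x)|) := by
      fun_prop
    have hclosed : IsClosed {t : ℝ | (∑ i ∈ Finset.range n, t ^ i) * |M (fun _ => x)| ≤ K} :=
      isClosed_le hcont continuous_const
    have hmem : (1 : ℝ) ∈ closure (Set.Ioo (0 : ℝ) 1) := by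
      rw [closure_Ioo (by norm_num)]; simp
    have := hclosed.closure_subset_iff.2 h1 hmem
    simpa using this
end
end

section
/- Let E = (ℝⁿ,‖·‖₂) and let O_n be the orthogonal group of E, equipped with the operator-norm topology. For every f ∈ C₀¹(B_E), the map O_n → C₀¹(B_E), ω ↦ f∘ω, is continuous (where C₀¹(B_E) carries the Lipschitz norm). Consequently, for every bounded linear operator Q from C₀¹(B_E) to a Banach space of functions on B_E, the map ω ↦ Q(f∘ω)∘ω⁻¹ is continuous. -/
open Metric Set Real

noncomputable section

/-- A linear isometry of a normed space maps the closed unit ball into itself. -/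
def ballMap {E : Type*} [NormedAddCommGroup E] [NormedSpace ℝ E] (ω : E ≃ₗᵢ[ℝ] E)
    (x : ↥(UBall E)) : ↥(UBall E) :=
  ⟨ω x, by
    have hx : ‖(x : E)‖ ≤ 1 := mem_closedBall_zero_iff.mp x.2
    simpa [UBall, mem_closedBall_zero_iff, ω.norm_map] using hx⟩

/-- Composition `f ∘ ω` of a function on the unit ball with a linear isometry. -/
def compIso {E : Type*} [NormedAddCommGroup E] [NormedSpace ℝ E] (ω : E ≃ₗᵢ[ℝ] E)
    (f : ↥(UBall E) → ℝ) : ↥(UBall E) → ℝ :=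
  fun x => f (ballMap ω x)

section Helpers

variable {E : Type*} [NormedAddCommGroup E] [NormedSpace ℝ E]

lemma aux_bdd [ProperSpace E] {g' : E → (E →L[ℝ] ℝ)}
    (h : UniformContinuousOn g' (Metric.ball (0 : E) 1)) :
    ∃ C : ℝ, 0 < C ∧ ∀ x ∈ Metric.ball (0 : E) 1, ‖g' x‖ ≤ C := by
  have h1 : TotallyBounded (Metric.ball (0 : E) 1) :=
    ((isCompact_closedBall (0 : E) 1).totallyBounded).subset Metric.ball_subset_closedBall
  have h2 : TotallyBounded (Set.univ : Set (Metric.ball (0 : E) 1)) := by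
    have := (isUniformEmbedding_subtype_val (p := fun x => x ∈ Metric.ball (0 : E) 1)).isUniformInducing
    have h3 := totallyBounded_preimage this h1
    refine h3.subset ?_
    intro x _
    exact x.2
  have h3 := (h2.image h.restrict).isBounded
  obtain ⟨C, hC, hb⟩ := h3.exists_pos_norm_le
  exact ⟨C, hC, fun x hx => hb _ ⟨⟨x, hx⟩, trivial, rfl⟩⟩

lemma mem_ball_iso (ω : E ≃ₗᵢ[ℝ] E) {x : E} (hx : x ∈ Metric.ball (0 : E) 1) :
    ω x ∈ Metric.ball (0 : E) 1 := by
  simpa using hx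

lemma compIso_mem [ProperSpace E] (ω : E ≃ₗᵢ[ℝ] E) {f : ↥(UBall E) → ℝ} (hf : f ∈ C01B E) :
    compIso ω f ∈ C01B E := by
  obtain ⟨g, hfg, hc, h0, g', hd, hu⟩ := hf
  refine ⟨fun x => g (ω x), fun x => hfg _, ?_, by simpa using h0,
    fun x => (g' (ω x)).comp (ω.toContinuousLinearEquiv : E →L[ℝ] E), ?_, ?_⟩
  · refine hc.comp ω.continuous.continuousOn ?_
    intro x hx
    simpa [UBall] using hx
  · intro x hx
    exact (hd _ (mem_ball_iso ω hx)).comp x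
      (ω.toContinuousLinearEquiv : E →L[ℝ] E).hasFDerivAt
  · have h1 : UniformContinuousOn (fun x => g' (ω x)) (Metric.ball (0 : E) 1) :=
      hu.comp ω.isometry.uniformContinuous.uniformContinuousOn (fun x hx => mem_ball_iso ω hx)
    exact (((ContinuousLinearMap.compL ℝ E E ℝ).flip
      (ω.toContinuousLinearEquiv : E →L[ℝ] E)).uniformContinuous).comp_uniformContinuousOn h1

lemma sub_mem_C01B {f h : ↥(UBall E) → ℝ} (hf : f ∈ C01B E) (hh : h ∈ C01B E) :
    f - h ∈ C01B E := by
  obtain ⟨g, hfg, hc, h0, g', hd, hu⟩ := hf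
  obtain ⟨k, hfk, hck, hk0, k', hdk, huk⟩ := hh
  refine ⟨fun x => g x - k x, fun x => by simp [hfg, hfk], hc.sub hck, by simp [h0, hk0],
    fun x => g' x - k' x, fun x hx => (hd x hx).sub (hdk x hx), ?_⟩
  rw [uniformContinuousOn_iff_restrict] at hu huk ⊢
  exact hu.sub huk

lemma lip_main_s11 [ProperSpace E] {f : ↥(UBall E) → ℝ} (hf : f ∈ C01B E)
    (ω₀ : E ≃ₗᵢ[ℝ] E) (ε : ℝ) (hε : 0 < ε) :
    ∃ δ > (0 : ℝ), ∀ ω : E ≃ₗᵢ[ℝ] E, (∀ x : E, ‖ω x - ω₀ x‖ ≤ δ * ‖x‖) →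
      LipschitzWith (Real.toNNReal ε) (fun x => compIso ω f x - compIso ω₀ f x) := by
  obtain ⟨g, hfg, hc, h0, g', hd, hu⟩ := hf
  obtain ⟨C, hC, hb⟩ := aux_bdd hu
  obtain ⟨d, hd0, hdd⟩ := Metric.uniformContinuousOn_iff_le.1 hu (ε / 2) (by positivity)
  refine ⟨min d (ε / (2 * C)), lt_min hd0 (by positivity), fun ω hω => ?_⟩
  set A : E →L[ℝ] E := (ω.toContinuousLinearEquiv : E →L[ℝ] E) with hA
  set B : E →L[ℝ] E := (ω₀.toContinuousLinearEquiv : E →L[ℝ] E) with hB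
  have hAn : ‖A‖ ≤ 1 := A.opNorm_le_bound zero_le_one (fun x => by simp [A])
  have hAB : ‖A - B‖ ≤ ε / (2 * C) := by
    refine (A - B).opNorm_le_bound (by positivity) (fun x => ?_)
    refine (hω x).trans ?_
    gcongr
    exact min_le_right _ _
  have hder : ∀ x ∈ Metric.ball (0 : E) 1,
      HasFDerivWithinAt (fun x => g (ω x) - g (ω₀ x))
        ((g' (ω x)).comp A - (g' (ω₀ x)).comp B) (Metric.ball (0 : E) 1) x := by
    intro x hx
    have h1 : HasFDerivAt (fun x => g (ω x)) ((g' (ω x)).comp A) x :=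
      (hd _ (mem_ball_iso ω hx)).comp x A.hasFDerivAt
    have h2 : HasFDerivAt (fun x => g (ω₀ x)) ((g' (ω₀ x)).comp B) x :=
      (hd _ (mem_ball_iso ω₀ hx)).comp x B.hasFDerivAt
    exact (h1.sub h2).hasFDerivWithinAt
  have hbound : ∀ x ∈ Metric.ball (0 : E) 1,
      ‖(g' (ω x)).comp A - (g' (ω₀ x)).comp B‖₊ ≤ Real.toNNReal ε := by
    intro x hx
    have hx1 : ‖x‖ ≤ 1 := by simpa using (mem_ball_zero_iff.1 hx).le
    rw [Real.le_toNNReal_iff_coe_le hε.le, coe_nnnorm]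
    have e : (g' (ω x)).comp A - (g' (ω₀ x)).comp B
        = (g' (ω x) - g' (ω₀ x)).comp A + (g' (ω₀ x)).comp (A - B) := by
      ext y; simp
    rw [e]
    have h1 : ‖g' (ω x) - g' (ω₀ x)‖ ≤ ε / 2 := by
      rw [← dist_eq_norm]
      refine hdd _ (mem_ball_iso ω hx) _ (mem_ball_iso ω₀ hx) ?_
      rw [dist_eq_norm]
      refine (hω x).trans ?_
      calc min d (ε / (2 * C)) * ‖x‖ ≤ d * 1 := by
            gcongr
            exact min_le_left _ _
        _ = d := mul_one d
    calc _ ≤ ‖(g' (ω x) - g' (ω₀ x)).comp A‖ + ‖(g' (ω₀ x)).comp (A - B)‖ := norm_add_le _ _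
      _ ≤ ‖g' (ω x) - g' (ω₀ x)‖ * ‖A‖ + ‖g' (ω₀ x)‖ * ‖A - B‖ :=
          add_le_add (ContinuousLinearMap.opNorm_comp_le _ _)
            (ContinuousLinearMap.opNorm_comp_le _ _)
      _ ≤ ε / 2 * 1 + C * (ε / (2 * C)) := by
          gcongr
          exact hb _ (mem_ball_iso ω₀ hx)
      _ = ε := by field_simp; ring
  have hlip := (convex_ball (0 : E) 1).lipschitzOnWith_of_nnnorm_hasFDerivWithin_le hder hbound
  have hcl : closure (Metric.ball (0 : E) 1) = UBall E := closure_ball _ one_ne_zero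
  have hcont : ∀ τ : E ≃ₗᵢ[ℝ] E, ContinuousOn (fun x => g (τ x)) (UBall E) := by
    intro τ
    refine hc.comp τ.continuous.continuousOn ?_
    intro x hx
    simpa [UBall] using hx
  have hlip2 : LipschitzOnWith (Real.toNNReal ε) (fun x => g (ω x) - g (ω₀ x)) (UBall E) := by
    rw [← hcl, lipschitzOnWith_closure_iff]
    · exact hlip
    · rw [hcl]
      exact (hcont ω).sub (hcont ω₀)
  intro x y
  have := hlip2 x.2 y.2
  simp only [compIso, hfg]
  exact this

lemma compIso_lip (ω : E ≃ₗᵢ[ℝ] E) {f : ↥(UBall E) → ℝ} {L : NNReal} (hf : LipschitzWith L f) :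
    LipschitzWith L (compIso ω f) := by
  intro x y
  refine (hf (ballMap ω x) (ballMap ω y)).trans (le_of_eq ?_)
  congr 1
  exact ω.isometry _ _

lemma symm_close {ω ω₀ : E ≃ₗᵢ[ℝ] E} {δ : ℝ} (h : ∀ x : E, ‖ω x - ω₀ x‖ ≤ δ * ‖x‖) (x : E) :
    ‖ω.symm x - ω₀.symm x‖ ≤ δ * ‖x‖ := by
  have h1 := h (ω₀.symm x)
  rw [ω₀.symm.norm_map, ω₀.apply_symm_apply] at h1
  rw [← ω.norm_map, map_sub, ω.apply_symm_apply, norm_sub_rev]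
  exact h1

lemma second_main [ProperSpace E] {f : ↥(UBall E) → ℝ} (hf : f ∈ C01B E)
    (Q : (↥(UBall E) → ℝ) →ₗ[ℝ] (↥(UBall E) → ℝ)) (K : NNReal)
    (hQ : ∀ g ∈ C01B E, Q g ∈ C01B E)
    (hK : ∀ g ∈ C01B E, ∀ L : NNReal, LipschitzWith L g → LipschitzWith (K * L) (Q g))
    (ω₀ : E ≃ₗᵢ[ℝ] E) (ε : ℝ) (hε : 0 < ε) :
    ∃ δ > (0 : ℝ), ∀ ω : E ≃ₗᵢ[ℝ] E, (∀ x : E, ‖ω x - ω₀ x‖ ≤ δ * ‖x‖) →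
      LipschitzWith (Real.toNNReal ε) (fun x => compIso ω.symm (Q (compIso ω f)) x
                      - compIso ω₀.symm (Q (compIso ω₀ f)) x) := by
  have hK0 : (0 : ℝ) ≤ K := K.2
  obtain ⟨δ₁, h1, H1⟩ := lip_main_s11 hf ω₀ (ε / (2 * (K + 1))) (by positivity)
  obtain ⟨δ₂, h2, H2⟩ := lip_main_s11 (hQ _ (compIso_mem ω₀ hf)) ω₀.symm (ε / 2) (by positivity)
  refine ⟨min δ₁ δ₂, lt_min h1 h2, fun ω hω => ?_⟩
  have A := H1 ω (fun x => (hω x).trans (by gcongr; exact min_le_left _ _))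
  have B := H2 ω.symm (fun x => (symm_close hω x).trans (by gcongr; exact min_le_right _ _))
  have A2 := compIso_lip ω.symm
    (hK (compIso ω f - compIso ω₀ f) (sub_mem_C01B (compIso_mem ω hf) (compIso_mem ω₀ hf)) _ A)
  have S := A2.add B
  have e : (fun x => compIso ω.symm (Q (compIso ω f)) x - compIso ω₀.symm (Q (compIso ω₀ f)) x)
      = fun x => compIso ω.symm (Q (compIso ω f - compIso ω₀ f)) x +
        (compIso ω.symm (Q (compIso ω₀ f)) x - compIso ω₀.symm (Q (compIso ω₀ f)) x) := by
    funext x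
    simp [compIso, map_sub]
  rw [e]
  refine S.weaken ?_
  rw [Real.le_toNNReal_iff_coe_le hε.le]
  push_cast
  rw [Real.coe_toNNReal _ (by positivity), Real.coe_toNNReal _ (by positivity)]
  have : (K : ℝ) * (ε / (2 * (K + 1))) ≤ ε / 2 := by
    rw [← mul_div_assoc, div_le_div_iff₀ (by positivity) (by positivity)]
    nlinarith
  linarith

end Helpers

/-- **Fact 2.2.** For every `f ∈ C₀¹(B_E)`, the map `O_n → C₀¹(B_E)`, `ω ↦ f∘ω`, is
continuous with respect to the operator-norm topology on the orthogonal group and the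
Lipschitz norm on `C₀¹(B_E)`. Consequently, for every linear operator `Q` on the
functions on `B_E` that maps `C₀¹(B_E)` into itself with Lipschitz-norm bound `K`, the
map `ω ↦ Q(f∘ω)∘ω⁻¹` is continuous as well. -/
theorem statement11 (n : ℕ)
    (f : ↥(UBall (EuclideanSpace ℝ (Fin n))) → ℝ)
    (hf : f ∈ C01B (EuclideanSpace ℝ (Fin n))) :
    (∀ (ω₀ : EuclideanSpace ℝ (Fin n) ≃ₗᵢ[ℝ] EuclideanSpace ℝ (Fin n)) (ε : ℝ), 0 < ε →
      ∃ δ > (0 : ℝ), ∀ ω : EuclideanSpace ℝ (Fin n) ≃ₗᵢ[ℝ] EuclideanSpace ℝ (Fin n),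
        (∀ x : EuclideanSpace ℝ (Fin n), ‖ω x - ω₀ x‖ ≤ δ * ‖x‖) →
        LipschitzWith (Real.toNNReal ε) (fun x => compIso ω f x - compIso ω₀ f x)) ∧
    (∀ (Q : (↥(UBall (EuclideanSpace ℝ (Fin n))) → ℝ) →ₗ[ℝ]
            (↥(UBall (EuclideanSpace ℝ (Fin n))) → ℝ)) (K : NNReal),
      (∀ g ∈ C01B (EuclideanSpace ℝ (Fin n)), Q g ∈ C01B (EuclideanSpace ℝ (Fin n))) →
      (∀ g ∈ C01B (EuclideanSpace ℝ (Fin n)), ∀ L : NNReal,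
        LipschitzWith L g → LipschitzWith (K * L) (Q g)) →
      ∀ (ω₀ : EuclideanSpace ℝ (Fin n) ≃ₗᵢ[ℝ] EuclideanSpace ℝ (Fin n)) (ε : ℝ), 0 < ε →
        ∃ δ > (0 : ℝ), ∀ ω : EuclideanSpace ℝ (Fin n) ≃ₗᵢ[ℝ] EuclideanSpace ℝ (Fin n),
          (∀ x : EuclideanSpace ℝ (Fin n), ‖ω x - ω₀ x‖ ≤ δ * ‖x‖) →
          LipschitzWith (Real.toNNReal ε)
            (fun x => compIso ω.symm (Q (compIso ω f)) x
                      - compIso ω₀.symm (Q (compIso ω₀ f)) x)) := by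
  exact ⟨fun ω₀ ε hε => lip_main_s11 hf ω₀ ε hε,
    fun Q K hQ hK ω₀ ε hε => second_main hf Q K hQ hK ω₀ ε hε⟩
end
end

section
/- For every finite-dimensional Banach space F (of dimension ≥ 1), the subspace C₀¹(B_F) is not complemented in Lip₀(B_F): there is no bounded linear projection from Lip₀(B_F) onto C₀¹(B_F). In particular, C₀¹([−1,1]) is not complemented in Lip₀([−1,1]). -/
open Metric Set Real

noncomputable section

def Wf (t : ℝ) : ℝ := t ^ 2 * sin (π / t) ^ 2
def Wd (t : ℝ) : ℝ := 2 * t * sin (π / t) ^ 2 - 2 * π * (sin (π / t) * cos (π / t))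
def Gf (c : ℤ → ℝ) (t : ℝ) : ℝ := c ⌊1 / t⌋ * Wf t
def Gd (c : ℤ → ℝ) (t : ℝ) : ℝ := c ⌊1 / t⌋ * Wd t

lemma Wd_zero : Wd 0 = 0 := by simp [Wd]
lemma Wf_zero : Wf 0 = 0 := by simp [Wf]

lemma Wf_deriv (t : ℝ) : HasDerivAt Wf (Wd t) t := by
  by_cases ht : t = 0
  · subst ht
    rw [Wd_zero, hasDerivAt_iff_isLittleO]
    simp only [Wf_zero, sub_zero, smul_zero]
    have h1 : (fun x : ℝ => Wf x) =O[nhds 0] fun x => x ^ 2 := by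
      refine Asymptotics.IsBigO.of_bound 1 (Filter.Eventually.of_forall fun x => ?_)
      rw [Wf, norm_mul, one_mul]
      refine mul_le_of_le_one_right (norm_nonneg _) ?_
      rw [norm_pow]
      exact pow_le_one₀ (norm_nonneg _) (abs_sin_le_one _)
    refine h1.trans_isLittleO ?_
    have := Asymptotics.isLittleO_pow_id (𝕜 := ℝ) (n := 2) (by norm_num)
    simpa using this
  · have h1 : HasDerivAt (fun t : ℝ => π / t) (π * (-(t ^ 2)⁻¹)) t := by
      simpa [div_eq_mul_inv] using (hasDerivAt_inv ht).const_mul π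
    have h2 := (hasDerivAt_pow 2 t).mul ((h1.sin).pow 2)
    refine HasDerivAt.congr_deriv (f := Wf) h2 ?_
    simp only [Wd]
    field_simp
    simp
    ring

lemma Wd_cont {t : ℝ} (ht : t ≠ 0) : ContinuousAt Wd t := by
  unfold Wd
  fun_prop (disch := assumption)

lemma Wd_bound {t : ℝ} (ht : |t| ≤ 1) : |Wd t| ≤ 10 := by
  have h1 := sin_sq_add_cos_sq (π / t)
  have h2 : |sin (π / t) * cos (π / t)| ≤ 1 / 2 := by
    rw [abs_le]; constructor <;> nlinarith [sq_nonneg (sin (π / t) + cos (π / t)), sq_nonneg (sin (π / t) - cos (π / t))]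
  have h3 : |2 * t * sin (π / t) ^ 2| ≤ 2 := by
    rw [abs_mul, abs_mul, abs_of_pos (two_pos : (0:ℝ) < 2), abs_of_nonneg (sq_nonneg (sin _))]
    have := abs_nonneg t
    nlinarith [sin_sq_le_one (π / t), sq_nonneg (sin (π / t))]
  have h4 : |2 * π * (sin (π / t) * cos (π / t))| ≤ 4 := by
    rw [abs_mul, abs_of_pos (by positivity)]
    nlinarith [pi_pos, pi_le_four]
  unfold Wd
  rw [abs_le] at h3 h4 ⊢
  constructor <;> linarith

lemma floor_case (t : ℝ) : (Wf t = 0 ∧ Wd t = 0 ∧ (t = 0 ∨ t ≠ 0)) ∨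
    (t ≠ 0 ∧ ∀ᶠ s in nhds t, ⌊1 / s⌋ = ⌊1 / t⌋) := by
  by_cases ht : t = 0
  · left; subst ht; simp [Wd_zero, Wf_zero]
  by_cases h : ∃ n : ℤ, 1 / t = n
  · left
    obtain ⟨n, hn⟩ := h
    have : sin (π / t) = 0 := by
      rw [div_eq_mul_one_div, hn, mul_comm]; exact sin_int_mul_pi n
    simp [Wf, Wd, this, em]
  · right
    refine ⟨ht, ?_⟩
    have hc : ContinuousAt (fun s : ℝ => 1 / s) t := by fun_prop (disch := assumption)
    have h1 : (⌊1 / t⌋ : ℝ) < 1 / t := lt_of_le_of_ne (Int.floor_le _) fun h' => h ⟨_, h'.symm⟩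
    have h2 := Int.lt_floor_add_one (1 / t)
    filter_upwards [hc.eventually (lt_mem_nhds h1), hc.eventually (gt_mem_nhds h2)] with s a b
    rw [Int.floor_eq_iff]
    exact ⟨a.le, b⟩

lemma Gf_deriv {c : ℤ → ℝ} {C : ℝ} (hc : ∀ n, |c n| ≤ C) (t : ℝ) :
    HasDerivAt (Gf c) (Gd c t) t := by
  rcases floor_case t with ⟨h0, h1, -⟩ | ⟨-, h⟩
  · have := Wf_deriv t
    rw [h1, hasDerivAt_iff_isLittleO] at this
    simp only [Gd, h1, mul_zero]
    rw [hasDerivAt_iff_isLittleO]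
    simp only [Gf, h0, mul_zero, sub_zero, smul_zero] at this ⊢
    have hb : (fun s => c ⌊1 / s⌋ * Wf s) =O[nhds t] Wf := by
      refine Asymptotics.IsBigO.of_bound C (Filter.Eventually.of_forall fun s => ?_)
      rw [norm_mul]
      exact mul_le_mul_of_nonneg_right (hc _) (norm_nonneg _)
    exact hb.trans_isLittleO this
  · refine ((Wf_deriv t).const_mul (c ⌊1 / t⌋)).congr_of_eventuallyEq ?_
    filter_upwards [h] with s hs
    simp only [Gf, hs]

lemma Gf_lip {c : ℤ → ℝ} (hc : ∀ n, |c n| ≤ 1) {s t : ℝ} (hs : |s| ≤ 1) (ht : |t| ≤ 1) :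
    |Gf c t - Gf c s| ≤ 10 * |t - s| := by
  refine Convex.norm_image_sub_le_of_norm_hasDerivWithin_le (f' := Gd c) (s := Icc (-1) 1)
    (fun x _ => (Gf_deriv hc x).hasDerivWithinAt) (fun x hx => ?_) (convex_Icc _ _) (abs_le.1 hs)
    (abs_le.1 ht)
  rw [Gd, norm_mul]
  have h1 := Wd_bound (abs_le.2 hx)
  have h2 := hc ⌊1 / x⌋
  simp only [Real.norm_eq_abs]
  nlinarith [abs_nonneg (Wd x)]

lemma fs_bdd {c : ℤ → ℝ} (hc : c.support.Finite) : ∃ C, ∀ n, |c n| ≤ C := by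
  refine ⟨∑ n ∈ hc.toFinset, |c n|, fun n => ?_⟩
  by_cases h : c n = 0
  · rw [h, abs_zero]; positivity
  · exact Finset.single_le_sum (f := fun n => |c n|) (fun _ _ => abs_nonneg _) (by simpa using h)

lemma Gd_cont {c : ℤ → ℝ} (hc : c.support.Finite) : Continuous (Gd c) := by
  obtain ⟨C, hC⟩ := fs_bdd hc
  rw [continuous_iff_continuousAt]
  intro t
  by_cases ht : t = 0
  · subst ht
    have hN : ∃ N : ℝ, 0 < N ∧ ∀ n, c n ≠ 0 → |(n : ℝ)| ≤ N := by
      refine ⟨1 + ∑ n ∈ hc.toFinset, |(n : ℝ)|, by positivity, fun n hn => ?_⟩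
      have := Finset.single_le_sum (f := fun n : ℤ => |(n : ℝ)|) (fun _ _ => abs_nonneg _)
        (show n ∈ hc.toFinset by simpa using hn)
      linarith
    obtain ⟨N, hN0, hN⟩ := hN
    have : Gd c =ᶠ[nhds 0] fun _ => 0 := by
      filter_upwards [Metric.ball_mem_nhds (0:ℝ) (show 0 < 1 / (N + 2) by positivity)] with s hs
      by_cases hs0 : s = 0
      · simp [hs0, Gd, Wd_zero]
      by_cases hcs : c ⌊1 / s⌋ = 0
      · simp only [Gd, hcs, zero_mul]
      exfalso
      have h1 := hN _ hcs
      rw [mem_ball, dist_zero_right, Real.norm_eq_abs, lt_div_iff₀ (by positivity)] at hs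
      have h2 : |s| * |1 / s| = 1 := by rw [← abs_mul]; field_simp; simp
      have h3 : |1 / s| ≤ N + 1 := by
        have a := Int.floor_le (1 / s)
        have b := Int.lt_floor_add_one (1 / s)
        rw [abs_le] at h1 ⊢
        constructor <;> linarith
      nlinarith [abs_nonneg s]
    exact (continuousAt_const).congr this.symm
  rcases floor_case t with ⟨h0, h1, -⟩ | ⟨-, h⟩
  · have := Wd_cont ht
    unfold ContinuousAt at this ⊢
    rw [h1] at this
    simp only [Gd, h1, mul_zero]
    refine squeeze_zero_norm (a := fun s => C * |Wd s|) (fun s => ?_) ?_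
    · rw [Gd, norm_mul]
      exact mul_le_mul_of_nonneg_right (hC _) (norm_nonneg _)
    · simpa using this.abs.const_mul C
  · refine ((Wd_cont ht).const_mul (c ⌊1 / t⌋)).congr ?_
    filter_upwards [h] with s hs
    simp only [Gd, hs]

lemma Gd_not_cont {A : Set ℤ} (hA : A.Infinite) (hpos : ∀ n ∈ A, 0 ≤ n) :
    ¬ ContinuousAt (Gd (A.indicator 1)) 0 := by
  intro h
  rw [Metric.continuousAt_iff] at h
  obtain ⟨δ, hδ, h⟩ := h 1 one_pos
  obtain ⟨N, hN⟩ := exists_nat_gt (max 2 (1 / δ))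
  obtain ⟨n, hnA, hn⟩ : ∃ n ∈ A, (N : ℤ) ≤ n := by
    by_contra! hh
    exact hA ((Set.finite_Icc (0:ℤ) N).subset fun n hn => ⟨hpos n hn, (hh n hn).le⟩)
  have hnR : (N : ℝ) ≤ n := by exact_mod_cast hn
  have h2 : (2:ℝ) < n := lt_of_lt_of_le ((le_max_left _ _).trans_lt hN) hnR
  have h3 : 1 / δ < n := lt_of_lt_of_le ((le_max_right _ _).trans_lt hN) hnR
  set t : ℝ := 1 / (n + 1 / 4) with ht
  have ht0 : 0 < t := by positivity
  have hinv : 1 / t = n + 1 / 4 := by rw [ht, one_div_one_div]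
  have htδ : t < δ := by
    rw [ht, div_lt_iff₀ (by positivity)]
    rw [div_lt_iff₀ hδ] at h3
    nlinarith
  have ht2 : t < 1 / 2 := by
    rw [ht]; exact one_div_lt_one_div_of_lt (by norm_num) (by linarith)
  have hfl : ⌊1 / t⌋ = n := by
    rw [hinv, Int.floor_eq_iff]; constructor <;> linarith
  have := h (x := t) (by simpa [abs_of_pos ht0] using htδ)
  have hs : sin (π / t) * cos (π / t) = 1 / 2 := by
    have e : 2 * (π / t) = π / 2 + n * (2 * π) := by
      rw [div_eq_mul_one_div, hinv]; ring
    have := sin_two_mul (π / t)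
    rw [e, sin_add_int_mul_two_pi, sin_pi_div_two] at this
    linarith
  have hz : Gd (A.indicator 1) 0 = 0 := by simp only [Gd, Wd_zero, mul_zero]
  rw [hz] at this
  simp only [Gd, hfl, dist_zero_right, Set.indicator_of_mem hnA, Pi.one_apply, one_mul,
    Real.norm_eq_abs, Wd, hs] at this
  rw [abs_lt] at this
  nlinarith [sin_sq_le_one (π / t), sq_nonneg (sin (π / t)), pi_gt_three]

lemma combi {I : Type*} (A : I → Set ℤ) (hA : ∀ x y, x ≠ y → (A x ∩ A y).Finite)
    (Λ : (ℤ → ℝ) →ₗ[ℝ] ℝ) {M ε : ℝ} (hM : ∀ c : ℤ → ℝ, (∀ n, |c n| ≤ 1) → |Λ c| ≤ M)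
    (h0 : ∀ c : ℤ → ℝ, c.support.Finite → Λ c = 0) (s : Finset I)
    (hs : ∀ x ∈ s, ε ≤ |Λ ((A x).indicator 1)|) : s.card * ε ≤ M := by
  classical
  set σ : I → ℝ := fun x => SignType.sign (Λ ((A x).indicator 1)) with hσ
  have hσ1 : ∀ x, |σ x| ≤ 1 := by
    intro x
    simp only [hσ]
    rcases SignType.sign (Λ ((A x).indicator 1)) with _ | _ | _ <;> simp
  set E : Set ℤ := ⋃ x ∈ s, ⋃ y ∈ s, ⋃ (_ : x ≠ y), A x ∩ A y with hE
  have hEf : E.Finite := by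
    refine s.finite_toSet.biUnion fun x _ => s.finite_toSet.biUnion fun y _ => ?_
    exact Set.finite_iUnion fun h => hA x y h
  set c : ℤ → ℝ := ∑ x ∈ s, σ x • (A x).indicator 1 with hc
  have h1 : Λ c = ∑ x ∈ s, |Λ ((A x).indicator 1)| := by
    rw [hc, map_sum]
    refine Finset.sum_congr rfl fun x _ => ?_
    rw [map_smul, smul_eq_mul, hσ]
    exact sign_mul_self _
  have h2 : s.card * ε ≤ Λ c := by
    rw [h1, ← nsmul_eq_mul]
    exact Finset.card_nsmul_le_sum _ _ _ hs
  have h3 : Λ c = Λ (Eᶜ.indicator c) := by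
    have : c = E.indicator c + Eᶜ.indicator c := (Set.indicator_self_add_compl E c).symm
    conv_lhs => rw [this, map_add]
    rw [h0 (E.indicator c) (hEf.subset (Set.support_indicator_subset)), zero_add]
  have h4 : |Λ (Eᶜ.indicator c)| ≤ M := by
    refine hM _ fun n => ?_
    by_cases hn : n ∈ E
    · simp [hn]
    rw [Set.indicator_of_mem (by simpa using hn), hc, Finset.sum_apply]
    by_cases hx : ∃ x ∈ s, n ∈ A x
    · obtain ⟨x, hxs, hx⟩ := hx
      rw [Finset.sum_eq_single_of_mem x hxs]
      · simpa [hx] using hσ1 x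
      · intro y hy hyx
        have : n ∉ A y := fun hny => hn (by
          simp only [hE, Set.mem_iUnion]
          exact ⟨x, hxs, y, hy, hyx.symm, hx, hny⟩)
        simp [this]
    · push Not at hx
      rw [Finset.sum_eq_zero]
      · simp
      · intro y hy
        simp [hx y hy]
  rw [h3] at h2
  exact h2.trans ((le_abs_self _).trans h4)

def codeB (x : ℕ → Bool) (n : ℕ) : ℤ := (Encodable.encode (List.ofFn fun i : Fin n => x i) : ℕ)
def adB (x : ℕ → Bool) : Set ℤ := Set.range (codeB x)

lemma codeB_eq {x y : ℕ → Bool} {m n : ℕ} (h : codeB x m = codeB y n) :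
    m = n ∧ ∀ i < m, x i = y i := by
  have h1 : (List.ofFn fun i : Fin m => x i) = (List.ofFn fun i : Fin n => y i) :=
    Encodable.encode_injective (Int.ofNat.inj h)
  have h2 : m = n := by simpa using congrArg List.length h1
  subst h2
  have h3 := List.ofFn_injective h1
  exact ⟨rfl, fun i hi => congrFun h3 ⟨i, hi⟩⟩

lemma adB_inf (x : ℕ → Bool) : (adB x).Infinite :=
  Set.infinite_range_of_injective fun _ _ h => (codeB_eq h).1

lemma adB_nonneg (x : ℕ → Bool) : ∀ n ∈ adB x, 0 ≤ n := by
  rintro _ ⟨m, rfl⟩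
  exact Int.natCast_nonneg _

lemma adB_ad (x y : ℕ → Bool) (h : x ≠ y) : (adB x ∩ adB y).Finite := by
  obtain ⟨k, hk⟩ := Function.ne_iff.1 h
  refine ((Set.finite_Iic k).image (codeB x)).subset ?_
  rintro _ ⟨⟨m, rfl⟩, ⟨n, hn⟩⟩
  refine ⟨m, ?_, rfl⟩
  by_contra hmk
  simp only [Set.mem_Iic, not_le] at hmk
  exact hk ((codeB_eq hn.symm).2 k hmk)

section space
variable {F : Type*} [NormedAddCommGroup F] [NormedSpace ℝ F]

def Phi (φ : F →L[ℝ] ℝ) : (ℤ → ℝ) →ₗ[ℝ] (↥(UBall F) → ℝ) where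
  toFun c := fun x => Gf c (φ x)
  map_add' a b := by ext x; simp [Gf, add_mul]
  map_smul' a b := by ext x; simp [Gf, mul_assoc]

lemma phi_le {φ : F →L[ℝ] ℝ} (hφ : ‖φ‖ ≤ 1) (x : F) : |φ x| ≤ ‖x‖ := by
  have := φ.le_of_opNorm_le hφ x
  simpa using this

lemma ub_le (x : ↥(UBall F)) : ‖(x : F)‖ ≤ 1 := by
  simpa [UBall] using x.2

lemma Phi_lip {φ : F →L[ℝ] ℝ} (hφ : ‖φ‖ ≤ 1) {c : ℤ → ℝ} (hc : ∀ n, |c n| ≤ 1) :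
    LipschitzWith 10 (Phi φ c) := by
  refine LipschitzWith.of_dist_le_mul fun x y => ?_
  have h1 := Gf_lip hc ((phi_le hφ y).trans (ub_le y)) ((phi_le hφ x).trans (ub_le x))
  have h2 := phi_le hφ ((x : F) - y)
  rw [map_sub] at h2
  rw [Real.dist_eq, Subtype.dist_eq, dist_eq_norm]
  refine h1.trans ?_
  push_cast
  linarith

lemma Phi_mem {φ : F →L[ℝ] ℝ} (hφ : ‖φ‖ ≤ 1) {c : ℤ → ℝ} (hc : ∀ n, |c n| ≤ 1) :
    Phi φ c ∈ Lip0B F :=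
  ⟨⟨10, Phi_lip hφ hc⟩, by simp [Phi, zeroB, Gf, Wf_zero]⟩

lemma Phi_C01 [FiniteDimensional ℝ F] (φ : F →L[ℝ] ℝ) {c : ℤ → ℝ} (hc : c.support.Finite) :
    Phi φ c ∈ C01B F := by
  obtain ⟨C, hC⟩ := fs_bdd hc
  have hd : ∀ x, HasFDerivAt (fun x => Gf c (φ x)) (Gd c (φ x) • φ) x := fun x =>
    (Gf_deriv hC (φ x)).comp_hasFDerivAt x φ.hasFDerivAt
  refine ⟨fun x => Gf c (φ x), fun x => rfl, fun x _ => (hd x).continuousAt.continuousWithinAt,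
    by simp [Gf, Wf_zero], fun x => Gd c (φ x) • φ, fun x _ => hd x, ?_⟩
  have := FiniteDimensional.proper ℝ F
  have hcont : Continuous fun x => Gd c (φ x) • φ :=
    ((Gd_cont hc).comp φ.continuous).smul continuous_const
  exact ((isCompact_closedBall (0 : F) 1).uniformContinuousOn_of_continuous
    hcont.continuousOn).mono ball_subset_closedBall

lemma Phi_not_C01 {φ : F →L[ℝ] ℝ} {e : F} (he : ‖e‖ = 1) (hφe : φ e = 1) {A : Set ℤ}
    (hA : A.Infinite) (hpos : ∀ n ∈ A, 0 ≤ n) : Phi φ (A.indicator 1) ∉ C01B F := by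
  rintro ⟨g, hg, -, -, g', hg', hu⟩
  have hc : ∀ n, |(A.indicator 1 : ℤ → ℝ) n| ≤ 1 := by
    intro n; by_cases h : n ∈ A <;> simp [h]
  refine Gd_not_cont hA hpos ?_
  have hcont : ContinuousAt g' 0 :=
    hu.continuousOn.continuousAt (ball_mem_nhds _ one_pos)
  have hline : Continuous fun t : ℝ => t • e := by fun_prop
  have h1 : ContinuousAt (fun t : ℝ => g' (t • e) e) 0 := by
    have : ContinuousAt (fun t : ℝ => g' (t • e)) 0 :=
      ContinuousAt.comp (f := fun t : ℝ => t • e) (by simpa using hcont) hline.continuousAt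
    exact this.clm_apply continuousAt_const
  refine h1.congr ?_
  filter_upwards [ball_mem_nhds (0:ℝ) one_pos] with t ht
  have hb : ∀ s ∈ ball (0:ℝ) 1, s • e ∈ ball (0:F) 1 := by
    intro s hs; simpa [norm_smul, he] using hs
  have hl : HasDerivAt (fun t : ℝ => t • e) e t := by
    simpa using (hasDerivAt_id t).smul_const e
  have h2 : HasDerivAt (fun s : ℝ => g (s • e)) (g' (t • e) e) t :=
    (hg' _ (hb t ht)).comp_hasDerivAt t hl
  refine h2.unique ((Gf_deriv hc t).congr_of_eventuallyEq ?_)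
  filter_upwards [isOpen_ball.mem_nhds ht] with s hs
  have := hg ⟨s • e, ball_subset_closedBall (hb s hs)⟩
  simp only [Phi, LinearMap.coe_mk, AddHom.coe_mk, map_smul, hφe, smul_eq_mul, mul_one] at this
  exact this.symm

lemma C01_zero {f : ↥(UBall F) → ℝ} (hf : f ∈ C01B F) : f (zeroB F) = 0 := by
  obtain ⟨g, hg, -, h0, -⟩ := hf
  rw [hg]; exact h0

lemma lip_val {f : ↥(UBall F) → ℝ} {L : NNReal} (h : LipschitzWith L f) (h0 : f (zeroB F) = 0)
    (d : ↥(UBall F)) : |f d| ≤ L := by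
  have h1 := h.dist_le_mul d (zeroB F)
  have h2 : dist d (zeroB F) ≤ 1 := by
    rw [Subtype.dist_eq]; simpa [zeroB] using ub_le d
  rw [h0, dist_zero_right, Real.norm_eq_abs] at h1
  exact h1.trans (mul_le_of_le_one_right L.2 h2)

end space

/-- **Non-complementability of `C₀¹` in `Lip₀`.** For every finite-dimensional Banach
space `F` of dimension at least `1`, the subspace `C₀¹(B_F)` is not complemented in
`Lip₀(B_F)`: there is no Lipschitz-norm-bounded linear projection from `Lip₀(B_F)` onto
`C₀¹(B_F)`. (In particular, `C₀¹([−1,1])` is not complemented in `Lip₀([−1,1])`, the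
case `F = ℝ`.) -/
theorem statement13 (F : Type*) [NormedAddCommGroup F] [NormedSpace ℝ F]
    [FiniteDimensional ℝ F] (hdim : 1 ≤ Module.finrank ℝ F) :
    ¬ ∃ (Q : (↥(UBall F) → ℝ) →ₗ[ℝ] (↥(UBall F) → ℝ)) (K : NNReal),
      (∀ f ∈ Lip0B F, Q f ∈ C01B F) ∧ (∀ f ∈ C01B F, Q f = f) ∧
      (∀ f ∈ Lip0B F, ∀ L : NNReal, LipschitzWith L f → LipschitzWith (K * L) (Q f)) := by
  rintro ⟨Q, K, hQ1, hQ2, hQ3⟩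
  have : Nontrivial F := Module.nontrivial_of_finrank_pos (R := ℝ) hdim
  have := FiniteDimensional.proper ℝ F
  obtain ⟨e, he⟩ := exists_norm_eq F (zero_le_one (α := ℝ))
  obtain ⟨φ, hφ, hφe⟩ := exists_dual_vector ℝ e (by rw [he]; exact one_ne_zero)
  have hφe : φ e = 1 := by rw [hφe, he]; simp
  have hφ : ‖φ‖ ≤ 1 := hφ.le
  have hne : Nonempty ↥(UBall F) := ⟨zeroB F⟩
  have hc : ∀ x n, |((adB x).indicator 1 : ℤ → ℝ) n| ≤ 1 := by
    intro x n; by_cases h : n ∈ adB x <;> simp [h]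
  let d := TopologicalSpace.denseSeq ↥(UBall F)
  let Λ : ℕ → (ℤ → ℝ) →ₗ[ℝ] ℝ := fun n =>
    LinearMap.proj (d n) ∘ₗ (LinearMap.id - Q) ∘ₗ Phi φ
  have hΛ : ∀ n c, Λ n c = Phi φ c (d n) - Q (Phi φ c) (d n) := fun n c => rfl
  have key : ∀ x : ℕ → Bool, ∃ p : ℕ × ℕ, 1 / ((p.2 : ℝ) + 1) ≤ |Λ p.1 ((adB x).indicator 1)| := by
    intro x
    have hm := Phi_mem hφ (hc x)
    have hl := Phi_lip hφ (hc x)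
    have hneq : Phi φ ((adB x).indicator 1) ≠ Q (Phi φ ((adB x).indicator 1)) := by
      intro h
      refine Phi_not_C01 he hφe (adB_inf x) (adB_nonneg x) ?_
      rw [h]
      exact hQ1 _ hm
    obtain ⟨n, hn⟩ : ∃ n, Λ n ((adB x).indicator 1) ≠ 0 := by
      by_contra! hh
      refine hneq (Continuous.ext_on (TopologicalSpace.denseRange_denseSeq ↥(UBall F))
        hl.continuous (hQ3 _ hm _ hl).continuous ?_)
      rintro _ ⟨n, rfl⟩
      exact sub_eq_zero.1 (hh n)
    obtain ⟨m, hm⟩ := exists_nat_one_div_lt (abs_pos.2 hn)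
    exact ⟨(n, m), hm.le⟩
  choose p hp using key
  obtain ⟨q, hq⟩ : ∃ q, (p ⁻¹' {q}).Infinite := by
    by_contra! hh
    have h1 : (Set.univ : Set (ℕ → Bool)).Countable := by
      have : (Set.univ : Set (ℕ → Bool)) = ⋃ q, p ⁻¹' {q} := by ext; simp
      rw [this]
      exact Set.countable_iUnion fun q => (Set.not_infinite.1 (by simpa using hh q)).countable
    rw [Set.countable_univ_iff, ← Cardinal.mk_le_aleph0_iff] at h1
    simp only [Cardinal.mk_pi, Cardinal.mk_bool, Cardinal.prod_const, Cardinal.mk_nat, Cardinal.lift_id, Cardinal.lift_ofNat, Cardinal.lift_aleph0] at h1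
    exact absurd h1 (not_le.2 (Cardinal.cantor Cardinal.aleph0))
  obtain ⟨N, hN⟩ := exists_nat_gt ((10 + K * 10) * ((q.2 : ℝ) + 1))
  obtain ⟨s, hs, hcard⟩ := hq.exists_subset_card_eq N
  have := combi adB adB_ad (Λ q.1) (M := 10 + K * 10) (ε := 1 / ((q.2 : ℝ) + 1)) ?_ ?_ s ?_
  · rw [hcard, mul_one_div, div_le_iff₀ (by positivity)] at this
    linarith
  · intro c hc
    have hm := Phi_mem hφ hc
    have hl := Phi_lip hφ hc
    have h1 := lip_val hl hm.2 (d q.1)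
    have h2 := lip_val (hQ3 _ hm _ hl) (C01_zero (hQ1 _ hm)) (d q.1)
    rw [hΛ]
    push_cast at h1 h2
    rw [abs_le] at h1 h2 ⊢
    constructor <;> linarith
  · intro c hc
    rw [hΛ, hQ2 _ (Phi_C01 φ hc), sub_self]
  · intro x hx
    have h1 : p x = q := hs hx
    have := hp x
    rwa [h1] at this
end
end
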